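/- arXiv:2403.00120 — 7 statements merged into one kernel-verified Lean document; each statement's English description precedes it below -/
import Mathlib

section
/- Let q be a prime power and n ≥ 2, k ≥ 0 integers. The number N_{F^n}(k) of one-dimensional F-subspaces of F^n of height k, where F = F_q(X), equals q^{nk-n+1}(q^n-1)(q^{n-1}-1)/(q-1) if k ≥ 1, and (q^n-1)/(q-1) if k = 0. -/
open Polynomial

namespace HeightCount

variable {F : Type*} [Field F]

/-- Bezout form of coprimality. -/
def Cop {n : ℕ} (A : Fin n → F[X]) : Prop := ∃ u : Fin n → F[X], ∑ i, u i * A i = 1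

/-- maximal degree. -/
noncomputable def ht {n : ℕ} (A : Fin n → F[X]) : WithBot ℕ := Finset.univ.sup fun i => (A i).degree

theorem ht_mul {n : ℕ} (d : F[X]) (A : Fin n → F[X]) :
    ht (fun i => d * A i) = d.degree + ht A := by
  unfold ht
  rw [Finset.apply_sup_eq_sup_comp_of_linearOrder (fun x => d.degree + x)
    (fun a b h => by dsimp only; gcongr) (by simp)]
  congr 1
  ext i : 1
  simp [degree_mul]

theorem exists_factor {n : ℕ} (A : Fin n → F[X]) (hA : A ≠ 0) :
    ∃ g : F[X], g.Monic ∧ ∃ B : Fin n → F[X], Cop B ∧ ∀ i, A i = g * B i := by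
  obtain ⟨g, hg⟩ := (IsPrincipalIdealRing.principal (Ideal.span (Set.range A))).principal
  have hg' : Ideal.span (Set.range A) = Ideal.span {g} := hg
  have hdvd : ∀ i, g ∣ A i := fun i => by
    rw [← Ideal.mem_span_singleton, ← hg']
    exact Ideal.subset_span ⟨i, rfl⟩
  have hg0 : g ≠ 0 := by
    rintro rfl
    apply hA
    ext1 i
    exact zero_dvd_iff.mp (hdvd i)
  have hm : g ∈ Ideal.span (Set.range A) := by
    rw [hg']; exact Ideal.mem_span_singleton_self g
  obtain ⟨u, hu⟩ := (Ideal.mem_span_range_iff_exists_fun).1 hm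
  choose B hB using hdvd
  have hl : g.leadingCoeff ≠ 0 := leadingCoeff_ne_zero.mpr hg0
  have hCC : C (g.leadingCoeff⁻¹) * C g.leadingCoeff = 1 := by
    rw [← C_mul, inv_mul_cancel₀ hl, C_1]
  refine ⟨g * C (g.leadingCoeff⁻¹), monic_mul_leadingCoeff_inv hg0,
    fun i => C g.leadingCoeff * B i, ⟨fun i => C (g.leadingCoeff⁻¹) * u i, ?_⟩, fun i => ?_⟩
  · apply mul_left_cancel₀ hg0
    rw [Finset.mul_sum, mul_one]
    conv_rhs => rw [← hu]
    refine Finset.sum_congr rfl fun i _ => ?_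
    rw [hB i]
    linear_combination (g * u i * B i) * hCC
  · rw [hB i]
    linear_combination (- g * B i) * hCC

theorem cop_iff {n : ℕ} (A : Fin n → F[X]) :
    (∀ d : F[X], (∀ i, d ∣ A i) → IsUnit d) ↔ Cop A := by
  constructor
  · intro h
    have hA : A ≠ 0 := by
      rintro rfl
      have := h 0 (by simp)
      simp at this
    obtain ⟨g, hg, B, ⟨u, hu⟩, hAB⟩ := exists_factor A hA
    have h1 := h g fun i => ⟨B i, hAB i⟩
    have h2 : g = 1 := hg.eq_one_of_isUnit h1
    exact ⟨u, by simpa [hAB, h2] using hu⟩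
  · rintro ⟨u, hu⟩ d hd
    apply isUnit_of_dvd_one
    rw [← hu]
    exact Finset.dvd_sum fun i _ => (hd i).mul_left _

theorem dvd_of_eq {n : ℕ} {d e : F[X]} {A B : Fin n → F[X]} (hB : Cop B)
    (h : ∀ i, d * A i = e * B i) : d ∣ e := by
  obtain ⟨u, hu⟩ := hB
  rw [← mul_one e, ← hu, Finset.mul_sum]
  refine Finset.dvd_sum fun i _ => ?_
  exact ⟨u i * A i, by linear_combination (- u i) * h i⟩

theorem Cop.ne_zero {n : ℕ} {A : Fin n → F[X]} (h : Cop A) : A ≠ 0 := by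
  rintro rfl
  obtain ⟨u, hu⟩ := h
  simp at hu

/-- the vector of rational functions. -/
noncomputable def vec {n : ℕ} (A : Fin n → F[X]) : Fin n → RatFunc F :=
  fun i => algebraMap F[X] (RatFunc F) (A i)

theorem span_eq {n : ℕ} {A B : Fin n → F[X]} (hA : Cop A) (hB : Cop B)
    (h : Submodule.span (RatFunc F) {vec A} = Submodule.span (RatFunc F) {vec B}) :
    ∃ c : Fˣ, ∀ i, B i = C (c : F) * A i := by
  obtain ⟨z, hz⟩ := Submodule.span_singleton_eq_span_singleton.1 h
  obtain ⟨p, r, hr, hpr⟩ := IsFractionRing.div_surjective (A := F[X]) (z : RatFunc F)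
  have hr0 : r ≠ 0 := nonZeroDivisors.ne_zero hr
  have hr0' : algebraMap F[X] (RatFunc F) r ≠ 0 := by simpa using hr0
  have key : ∀ i, p * A i = r * B i := fun i => by
    have := congrFun hz i
    simp only [vec, Pi.smul_apply, Units.smul_def, ← hpr, smul_eq_mul] at this
    apply RatFunc.algebraMap_injective F
    rw [map_mul, map_mul, ← this]
    field_simp
  have h1 := dvd_of_eq hB key
  have h2 := dvd_of_eq hA fun i => (key i).symm
  obtain ⟨v, hv⟩ := associated_of_dvd_dvd h2 h1
  obtain ⟨c, hc, hcv⟩ := Polynomial.isUnit_iff.1 v.isUnit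
  refine ⟨hc.unit, fun i => ?_⟩
  apply mul_left_cancel₀ hr0
  rw [← key i, ← hv, ← hcv]
  simp [mul_assoc]

theorem cop_smul {n : ℕ} {A : Fin n → F[X]} (hA : Cop A) (c : Fˣ) :
    Cop fun i => C (c : F) * A i := by
  obtain ⟨u, hu⟩ := hA
  refine ⟨fun i => C ((c⁻¹ : Fˣ) : F) * u i, ?_⟩
  rw [← hu]
  refine Finset.sum_congr rfl fun i _ => ?_
  have : C ((c⁻¹ : Fˣ) : F) * C (c : F) = 1 := by rw [← C_mul]; simp
  linear_combination (u i * A i) * this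

theorem ht_smul {n : ℕ} (A : Fin n → F[X]) (c : Fˣ) :
    ht (fun i => C (c : F) * A i) = ht A := by
  rw [ht_mul, degree_C c.ne_zero, zero_add]

theorem span_smul {n : ℕ} (A : Fin n → F[X]) (c : Fˣ) :
    Submodule.span (RatFunc F) {vec fun i => C (c : F) * A i}
      = Submodule.span (RatFunc F) {vec A} := by
  symm
  rw [Submodule.span_singleton_eq_span_singleton]
  refine ⟨Units.map (algebraMap F (RatFunc F)).toMonoidHom c, ?_⟩
  ext1 i
  simp [vec, Units.smul_def, ← RatFunc.algebraMap_C]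

/-- coprime tuples of height `k`. -/
abbrev Cp (F : Type*) [Field F] (n k : ℕ) := {A : Fin n → F[X] // Cop A ∧ ht A = k}

/-- lines of height `k`. -/
abbrev Ln (F : Type*) [Field F] (n k : ℕ) := {W : Submodule (RatFunc F) (Fin n → RatFunc F) //
      ∃ A : Fin n → F[X], Cop A ∧ ht A = k ∧ W = Submodule.span (RatFunc F) {vec A}}

theorem card_Ln (n k : ℕ) : Nat.card (Ln F n k) * Nat.card Fˣ = Nat.card (Cp F n k) := by
  rw [← Nat.card_prod]
  have ch : ∀ W : Ln F n k, ∃ A : Fin n → F[X], Cop A ∧ ht A = k ∧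
    W.1 = Submodule.span (RatFunc F) {vec A} := fun W => W.2
  choose f hf1 hf2 hf3 using ch
  refine Nat.card_eq_of_bijective (fun x : Ln F n k × Fˣ =>
    (⟨fun i => C (x.2 : F) * f x.1 i, cop_smul (hf1 _) _, by rw [ht_smul, hf2]⟩ : Cp F n k)) ⟨?_, ?_⟩
  · rintro ⟨W, c⟩ ⟨V, d⟩ h
    simp only [Subtype.mk.injEq] at h
    have hWV : W = V := by
      apply Subtype.ext
      rw [hf3, hf3, ← span_smul (f W) c, ← span_smul (f V) d, h]
    subst hWV
    obtain ⟨i, hi⟩ := Function.ne_iff.1 (hf1 W).ne_zero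
    have := mul_right_cancel₀ hi (congrFun h i)
    rw [Prod.mk.injEq]
    exact ⟨rfl, Units.ext (C_injective this)⟩
  · rintro ⟨B, hB1, hB2⟩
    let W : Ln F n k := ⟨_, B, hB1, hB2, rfl⟩
    obtain ⟨c, hc⟩ := span_eq (hf1 W) hB1 (hf3 W).symm
    exact ⟨(W, c), Subtype.ext (funext fun i => (hc i).symm)⟩

/-- all tuples of height `k`. -/
abbrev Tp (F : Type*) [Field F] (n k : ℕ) := {A : Fin n → F[X] // ht A = k}

theorem Tp_bij (n k : ℕ) : Nat.card (Tp F n k) =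
    Nat.card (Σ j : Fin (k + 1), {p : F[X] // p.Monic ∧ p.natDegree = j} × Cp F n (k - j)) := by
  symm
  refine Nat.card_eq_of_bijective (fun x => (⟨fun i => x.2.1.1 * x.2.2.1 i, ?_⟩ : Tp F n k)) ⟨?_, ?_⟩
  · obtain ⟨j, ⟨p, hp, hpj⟩, ⟨A, hA, hAk⟩⟩ := x
    simp only
    rw [ht_mul, hAk, degree_eq_natDegree hp.ne_zero, hpj, ← Nat.cast_add]
    congr 1
    have := j.2
    omega
  · rintro ⟨j, ⟨p, hp, hpj⟩, ⟨A, hA, hAk⟩⟩ ⟨j', ⟨p', hp', hpj'⟩, ⟨A', hA', hAk'⟩⟩ h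
    simp only [Subtype.mk.injEq] at h
    have hpp : p = p' := eq_of_monic_of_associated hp hp'
      (associated_of_dvd_dvd (dvd_of_eq hA' (congrFun h)) (dvd_of_eq hA (congrFun h.symm)))
    subst hpp
    have hAA : A = A' := funext fun i => mul_left_cancel₀ hp.ne_zero (congrFun h i)
    subst hAA
    have hj : j = j' := Fin.ext (hpj.symm.trans hpj')
    subst hj
    rfl
  · rintro ⟨A, hA⟩
    have hA0 : A ≠ 0 := by
      rintro rfl
      simp [ht] at hA
    obtain ⟨g, hg, B, hB, hAB⟩ := exists_factor A hA0
    have e : A = fun i => g * B i := funext hAB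
    have hk : g.degree + ht B = k := by rw [← ht_mul, ← e, hA]
    rw [degree_eq_natDegree hg.ne_zero] at hk
    obtain ⟨m, hm⟩ : ∃ m : ℕ, ht B = m := by
      cases hb : ht B with
      | bot => simp [hb] at hk
      | coe m => exact ⟨m, rfl⟩
    rw [hm] at hk
    have hk' : g.natDegree + m = k := by exact_mod_cast hk
    refine ⟨⟨⟨g.natDegree, by omega⟩, ⟨g, hg, rfl⟩, ⟨B, hB, ?_⟩⟩, Subtype.ext e.symm⟩
    rw [hm]
    congr 1
    simp only
    omega

variable [Fintype F]

theorem card_lt (n k : ℕ) : Nat.card {A : Fin n → F[X] // ht A < k} = Fintype.card F ^ (n * k) := by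
  have e : {A : Fin n → F[X] // ht A < k} ≃ (Fin n → degreeLT F k) :=
    (Equiv.subtypeEquivRight fun A => by
      simp [ht, mem_degreeLT, Finset.sup_lt_iff (WithBot.bot_lt_coe k)]).trans
      (Equiv.subtypePiEquivPi (p := fun _ a => a ∈ degreeLT F k))
  rw [Nat.card_congr e, Nat.card_congr (Equiv.piCongrRight fun _ => (degreeLTEquiv F k).toEquiv)]
  simp [Nat.card_eq_fintype_card, pow_mul', mul_comm]

theorem card_Tp (n k : ℕ) :
    Nat.card (Tp F n k) + Fintype.card F ^ (n * k) = Fintype.card F ^ (n * (k + 1)) := by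
  have hfin : ∀ k : ℕ, {A : Fin n → F[X] | ht A < k}.Finite := fun k =>
    Nat.finite_of_card_ne_zero (by
      have := card_lt (F := F) n k
      rw [Set.coe_ofPred, this]; exact pow_ne_zero _ Fintype.card_ne_zero)
  have h := Set.ncard_sdiff_add_ncard_of_subset (s := {A : Fin n → F[X] | ht A < k})
    (t := {A : Fin n → F[X] | ht A < (k + 1 : ℕ)})
    (fun A hA => by
      simp only [Set.mem_setOf_eq] at hA ⊢
      exact lt_trans hA (by exact_mod_cast Nat.lt_succ_self k)) (hfin _)
  rw [← Nat.card_coe_set_eq, ← Nat.card_coe_set_eq, ← Nat.card_coe_set_eq, Set.coe_ofPred,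
    Set.coe_ofPred, card_lt, card_lt] at h
  rw [← h]
  congr 1
  refine Nat.card_congr (Equiv.subtypeEquivRight fun A => ?_)
  simp only [Set.mem_diff, Set.mem_setOf_eq, not_lt]
  cases ht A with
  | bot => simp [← WithBot.coe_natCast]
  | coe m =>
    have : ∀ a : ℕ, (a : WithBot ℕ) = ((a : ℕ) : WithBot ℕ) := fun _ => rfl
    simp only [← WithBot.coe_natCast, WithBot.coe_lt_coe, WithBot.coe_le_coe, WithBot.coe_inj]
    simp only [Nat.cast_id]
    omega

theorem card_monic (j : ℕ) :
    Nat.card {p : F[X] // p.Monic ∧ p.natDegree = j} = Fintype.card F ^ j := by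
  rw [Nat.card_congr (monicEquivDegreeLT j), Nat.card_congr (degreeLTEquiv F j).toEquiv]
  simp [Nat.card_eq_fintype_card]

theorem finite_Tp (n k : ℕ) : Finite (Tp F n k) := by
  have : Finite {A : Fin n → F[X] // ht A < (k + 1 : ℕ)} := Nat.finite_of_card_ne_zero (by
      rw [card_lt]; exact pow_ne_zero _ Fintype.card_ne_zero)
  exact Finite.of_injective (fun A : Tp F n k =>
    (⟨A.1, by rw [A.2]; exact_mod_cast Nat.lt_succ_self k⟩ :
      {A : Fin n → F[X] // ht A < (k + 1 : ℕ)}))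
    (fun A B h => Subtype.ext (by simpa using h))

theorem finite_Cp (n k : ℕ) : Finite (Cp F n k) := by
  have := finite_Tp (F := F) n k
  exact Finite.of_injective (fun A : Cp F n k => (⟨A.1, A.2.2⟩ : Tp F n k))
    (fun A B h => Subtype.ext (by simpa using h))

theorem card_Tp_sum (n k : ℕ) : Nat.card (Tp F n k) =
    ∑ j ∈ Finset.range (k + 1), Fintype.card F ^ j * Nat.card (Cp F n (k - j)) := by
  have h1 : ∀ j, Finite {p : F[X] // p.Monic ∧ p.natDegree = j} := fun j =>
    Nat.finite_of_card_ne_zero (by rw [card_monic]; exact pow_ne_zero _ Fintype.card_ne_zero)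
  have h2 := finite_Cp (F := F) n
  rw [Tp_bij, Nat.card_sigma, Finset.sum_range]
  simp [Nat.card_prod, card_monic]

theorem card_Tp_succ (n k : ℕ) : Nat.card (Tp F n (k + 1)) =
    Fintype.card F * Nat.card (Tp F n k) + Nat.card (Cp F n (k + 1)) := by
  rw [card_Tp_sum, Finset.sum_range_succ', card_Tp_sum, Finset.mul_sum]
  simp [pow_succ', mul_assoc]

end HeightCount

open HeightCount in
/-- Counting one-dimensional subspaces of `F^n` of height `k`, where `F = 𝔽_q(X)`:
a one-dimensional subspace has height `k` iff it is spanned by a coprime tuple of polynomials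
of maximal degree `k`.  The count is `q^{nk-n+1}(q^n-1)(q^{n-1}-1)/(q-1)` for `k ≥ 1` and
`(q^n-1)/(q-1)` for `k = 0`. -/
theorem card_one_dim_subspaces_of_height {F : Type*} [Field F] [Fintype F] (q n k : ℕ)
    (hq : Fintype.card F = q) (hn : 2 ≤ n) :
    Nat.card {W : Submodule (RatFunc F) (Fin n → RatFunc F) //
      ∃ A : Fin n → Polynomial F,
        (∀ d : Polynomial F, (∀ i, d ∣ A i) → IsUnit d) ∧
        (Finset.univ.sup fun i => (A i).degree) = (k : WithBot ℕ) ∧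
        W = Submodule.span (RatFunc F)
          {fun i => algebraMap (Polynomial F) (RatFunc F) (A i)}} =
      if k = 0 then (q ^ n - 1) / (q - 1)
      else q ^ (n * k - n + 1) * ((q ^ n - 1) * (q ^ (n - 1) - 1)) / (q - 1) := by
  have hL := card_Ln (F := F) n k
  have hq1 : 1 < q := hq ▸ Fintype.one_lt_card
  have hu : Nat.card Fˣ = q - 1 := by rw [Nat.card_units, Nat.card_eq_fintype_card, hq]
  simp only [cop_iff]
  change Nat.card (Ln F n k) = _
  rw [hu] at hL
  have hpos : 0 < q - 1 := by omega
  rw [Nat.eq_div_of_mul_eq_left hpos.ne' hL]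
  obtain _ | k := k
  · have h0 := card_Tp (F := F) n 0
    rw [card_Tp_sum, hq] at h0
    simp at h0
    simp only [if_true]
    congr 1
    omega
  · rw [if_neg (by omega)]
    congr 1
    have h1 := card_Tp (F := F) n k
    have h2 := card_Tp (F := F) n (k + 1)
    have h3 := card_Tp_succ (F := F) n k
    rw [hq] at h1 h2 h3
    obtain ⟨m, rfl⟩ : ∃ m, n = m + 1 := ⟨n - 1, by omega⟩
    have e : (m + 1) * (k + 1) - (m + 1) + 1 = (m + 1) * k + 1 := by
      rw [mul_add, mul_one, Nat.add_sub_cancel]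
    rw [e, Nat.add_sub_cancel]
    have p1 : 1 ≤ q ^ (m + 1) := Nat.one_le_pow _ _ (by omega)
    have p2 : 1 ≤ q ^ m := Nat.one_le_pow _ _ (by omega)
    zify [p1, p2] at *
    have e1 : (q : ℤ) ^ ((m + 1) * (k + 1)) = q ^ ((m + 1) * k) * (q ^ m * q) := by ring
    have e2 : (q : ℤ) ^ ((m + 1) * (k + 1 + 1)) = q ^ ((m + 1) * k) * (q ^ m * q) ^ 2 := by ring
    rw [e1] at h1 h2
    rw [e2] at h2
    rw [pow_succ (q : ℤ) ((m + 1) * k), pow_succ (q : ℤ) m]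
    linear_combination h2 - h3 - q * h1
end

section
/- Let q be a prime power. For any integer m ≥ 1, the number |S(m)| of ordered triples (A_1, A_2, A_3) of polynomials in F_q[X] with gcd 1 and max degree equal to m is q^{3m-2}(q^3-1)(q^2-1); for m = 0 it is q^3 - 1. -/
open Polynomial

namespace CoprimeTriples

/-- all triples of maximal degree `m` -/
def T (F : Type*) [Field F] (m : ℕ) : Set (Fin 3 → Polynomial F) :=
  {A | (Finset.univ.sup fun i => (A i).degree) = (m : WithBot ℕ)}

/-- coprime triples of maximal degree `m` -/
def S (F : Type*) [Field F] (m : ℕ) : Set (Fin 3 → Polynomial F) :=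
  {A | (∀ d : Polynomial F, (∀ i, d ∣ A i) → IsUnit d) ∧
      (Finset.univ.sup fun i => (A i).degree) = (m : WithBot ℕ)}

/-- triples of degrees less than `n` -/
def U (F : Type*) [Field F] (n : ℕ) : Set (Fin 3 → Polynomial F) :=
  {A | ∀ i, A i ∈ degreeLT F n}

variable {F : Type*} [Field F]

theorem sup_mul (p : F[X]) (A : Fin 3 → F[X]) :
    (Finset.univ.sup fun i => (p * A i).degree) =
      p.degree + Finset.univ.sup fun i => (A i).degree := by
  have h : ∀ a b c : WithBot ℕ, (a + b) ⊔ (a + c) = a + (b ⊔ c) := by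
    intro a b c
    exact (max_add_add_left a b c)
  simp [Fin.univ_succ, h]

theorem T_eq (m : ℕ) : T F m = U F (m+1) \ U F m := by
  ext A
  simp only [T, U, Set.mem_ofPred_eq, Set.mem_sdiff, mem_degreeLT]
  have h1 : (∀ i, (A i).degree < (m : WithBot ℕ)) ↔
      (Finset.univ.sup fun i => (A i).degree) < (m : WithBot ℕ) := by
    have := Finset.sup_lt_iff (s := Finset.univ) (f := fun i => (A i).degree) (WithBot.bot_lt_coe m)
    simpa using this.symm
  have h2 : (∀ i, (A i).degree < ((m + 1 : ℕ) : WithBot ℕ)) ↔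
      (Finset.univ.sup fun i => (A i).degree) ≤ (m : WithBot ℕ) := by
    rw [Finset.sup_le_iff]
    have : ∀ x : WithBot ℕ, x < ((m + 1 : ℕ) : WithBot ℕ) ↔ x ≤ (m : WithBot ℕ) := by
      intro x
      cases x with
      | bot => simp
      | coe x => exact WithBot.coe_lt_coe.trans (Nat.lt_succ_iff.trans WithBot.coe_le_coe.symm)
    simp only [this, Finset.mem_univ, true_implies]
  rw [h1, h2, not_lt]
  exact le_antisymm_iff

/-- coordinates of the bounded degree triples -/
noncomputable def UEquiv (n : ℕ) : U F n ≃ (Fin 3 → Fin n → F) :=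
  (Equiv.subtypePiEquivPi (p := fun _ (x : F[X]) => x ∈ degreeLT F n)).trans
    (Equiv.piCongrRight fun _ => (degreeLTEquiv F n).toEquiv)

variable [Fintype F]

instance (n : ℕ) : Finite (U F n) := Finite.of_equiv _ (UEquiv n).symm

theorem card_U (n : ℕ) : (U F n).ncard = Fintype.card F ^ (3 * n) := by
  rw [← Nat.card_coe_set_eq, Nat.card_congr (UEquiv n)]
  simp [Nat.card_eq_fintype_card, ← pow_mul, mul_comm]

theorem card_T (m : ℕ) :
    (T F m).ncard = Fintype.card F ^ (3 * (m + 1)) - Fintype.card F ^ (3 * m) := by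
  rw [T_eq, Set.ncard_sdiff, card_U, card_U]
  · intro A hA i
    exact degreeLT_mono (Nat.le_succ m) (hA i)

theorem finite_T (m : ℕ) : (T F m).Finite := by
  rw [T_eq]
  exact (Set.toFinite (U F (m+1))).sdiff

instance (m : ℕ) : Finite (S F m) := ((finite_T m).subset fun _ h => h.2)

instance (d : ℕ) : Finite (degreeLT F d) := Finite.of_equiv _ (degreeLTEquiv F d).toEquiv.symm

instance (d : ℕ) : Finite {p : F[X] // p.Monic ∧ p.natDegree = d} :=
  Finite.of_equiv _ (monicEquivDegreeLT d).symm

theorem card_monic (d : ℕ) :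
    Nat.card {p : F[X] // p.Monic ∧ p.natDegree = d} = Fintype.card F ^ d := by
  rw [Nat.card_congr (monicEquivDegreeLT d), Nat.card_congr (degreeLTEquiv F d).toEquiv]
  simp [Nat.card_eq_fintype_card]

/-- multiply a coprime triple by a monic polynomial -/
noncomputable def mulMap (m : ℕ)
    (x : Σ d : Fin (m+1), {p : F[X] // p.Monic ∧ p.natDegree = d} × S F (m - d)) : T F m :=
  ⟨fun i => x.2.1.1 * x.2.2.1 i, by
    obtain ⟨d, ⟨p, hp, hd⟩, A, hA⟩ := x
    change _ = _
    rw [sup_mul, hA.2, degree_eq_natDegree hp.ne_zero, hd]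
    have := d.2
    norm_cast
    omega⟩

theorem dvd_of_coprime {A B : Fin 3 → F[X]} {p r : F[X]}
    (hB : ∀ d : F[X], (∀ i, d ∣ B i) → IsUnit d)
    (h : ∀ i, p * A i = r * B i) : p ∣ r := by
  classical
  letI : NormalizedGCDMonoid F[X] := (UniqueFactorizationMonoid.toNormalizedGCDMonoid F[X])
  have h1 : p ∣ Finset.univ.gcd (fun i => r * B i) :=
    Finset.dvd_gcd fun i _ => ⟨A i, (h i).symm⟩
  have h2 := h1.trans (Finset.gcd_mul_left' Finset.univ B r).dvd
  have hu : IsUnit (Finset.univ.gcd B) := hB _ fun i => Finset.gcd_dvd (Finset.mem_univ i)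
  exact hu.dvd_mul_right.1 h2

theorem mulMap_bij (m : ℕ) : Function.Bijective (mulMap (F := F) m) := by
  constructor
  · rintro ⟨⟨d, hd⟩, ⟨p, hp, hpd⟩, A, hA⟩ ⟨⟨e, he⟩, ⟨r, hr, hrd⟩, B, hB⟩ h
    have h' : ∀ i, p * A i = r * B i := fun i => congrFun (congrArg Subtype.val h) i
    have hpr : p = r := eq_of_monic_of_associated hp hr
      (associated_of_dvd_dvd (dvd_of_coprime hB.1 h') (dvd_of_coprime hA.1 fun i => (h' i).symm))
    subst hpr
    have hde : d = e := hpd.symm.trans hrd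
    subst hde
    have : A = B := funext fun i => mul_left_cancel₀ hp.ne_zero (h' i)
    subst this
    rfl
  · rintro ⟨A, hA⟩
    classical
    letI : NormalizedGCDMonoid F[X] := (UniqueFactorizationMonoid.toNormalizedGCDMonoid F[X])
    have hA' : (Finset.univ.sup fun i => (A i).degree) = (m : WithBot ℕ) := hA
    set g := Finset.univ.gcd A with hg
    have hg0 : g ≠ 0 := by
      intro h0
      have : ∀ i, A i = 0 := fun i => (Finset.gcd_eq_zero_iff.1 h0) i (Finset.mem_univ i)
      simp [this] at hA'
    have hlc : g.leadingCoeff ≠ 0 := leadingCoeff_ne_zero.2 hg0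
    set p := g * C g.leadingCoeff⁻¹ with hpdef
    have hp : p.Monic := monic_mul_leadingCoeff_inv hg0
    have hpg : Associated p g := by
      refine (associated_mul_unit_right g _ ?_).symm
      exact (isUnit_C.2 (isUnit_iff_ne_zero.2 (inv_ne_zero hlc)))
    have hdv : ∀ i, p ∣ A i := fun i => hpg.dvd.trans (Finset.gcd_dvd (Finset.mem_univ i))
    choose B hB using hdv
    have hAB : A = fun i => p * B i := funext hB
    have hcop : ∀ d : F[X], (∀ i, d ∣ B i) → IsUnit d := by
      intro d hd
      have h1 : p * d ∣ g := Finset.dvd_gcd fun i _ => by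
        rw [hB i]; exact mul_dvd_mul_left p (hd i)
      have h2 : p * d ∣ p * 1 := by rw [mul_one]; exact h1.trans hpg.symm.dvd
      exact isUnit_of_dvd_one ((mul_dvd_mul_iff_left hp.ne_zero).1 h2)
    have hs := hA'
    rw [hAB, sup_mul, degree_eq_natDegree hp.ne_zero] at hs
    obtain ⟨k, hk⟩ : ∃ k : ℕ, (Finset.univ.sup fun i => (B i).degree) = (k : WithBot ℕ) := by
      cases h : (Finset.univ.sup fun i => (B i).degree) with
      | bot => rw [h] at hs; simp at hs
      | coe k => exact ⟨k, rfl⟩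
    rw [hk] at hs
    have hs' : p.natDegree + k = m := by exact_mod_cast hs
    refine ⟨⟨⟨p.natDegree, by omega⟩, ⟨p, hp, rfl⟩, B, hcop, ?_⟩, ?_⟩
    · rw [hk]; congr 1; simp only; omega
    · exact Subtype.ext hAB.symm

theorem card_T_sum (m : ℕ) : (T F m).ncard =
    ∑ d : Fin (m+1), Fintype.card F ^ (d : ℕ) * (S F (m - d)).ncard := by
  rw [← Nat.card_coe_set_eq, ← Nat.card_congr (Equiv.ofBijective _ (mulMap_bij m)),
    Nat.card_sigma]
  simp [Nat.card_prod, card_monic, Nat.card_coe_set_eq]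

theorem card_T_succ (m : ℕ) :
    (T F (m+1)).ncard = (S F (m+1)).ncard + Fintype.card F * (T F m).ncard := by
  rw [card_T_sum, Fin.sum_univ_succ, card_T_sum, Finset.mul_sum]
  simp [pow_succ', mul_assoc]

end CoprimeTriples

open CoprimeTriples in
/-- The number of ordered triples `(A₁, A₂, A₃)` of polynomials over `𝔽_q` with gcd 1 and
maximal degree `m` is `q^{3m-2}(q³-1)(q²-1)` for `m ≥ 1`, and `q³ - 1` for `m = 0`. -/
theorem card_coprime_triples_of_max_degree {F : Type*} [Field F] [Fintype F] (q m : ℕ)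
    (hq : Fintype.card F = q) :
    Nat.card {A : Fin 3 → Polynomial F //
      (∀ d : Polynomial F, (∀ i, d ∣ A i) → IsUnit d) ∧
      (Finset.univ.sup fun i => (A i).degree) = (m : WithBot ℕ)} =
      if m = 0 then q ^ 3 - 1
      else q ^ (3 * m - 2) * ((q ^ 3 - 1) * (q ^ 2 - 1)) := by
  change Nat.card (S F m) = _
  rw [Nat.card_coe_set_eq]
  have hq1 : 1 ≤ q := hq ▸ Fintype.card_pos
  cases m with
  | zero =>
    have h := card_T_sum (F := F) 0
    rw [card_T] at h
    simp [hq] at h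
    simp [h]
  | succ m =>
    have h := card_T_succ (F := F) m
    rw [card_T, card_T, hq] at h
    rw [if_neg (Nat.succ_ne_zero m), show 3 * (m + 1) - 2 = 3 * m + 1 by omega]
    have a1 : q ^ (3 * (m + 1)) ≤ q ^ (3 * (m + 1 + 1)) := Nat.pow_le_pow_right hq1 (by omega)
    have a2 : q ^ (3 * m) ≤ q ^ (3 * (m + 1)) := Nat.pow_le_pow_right hq1 (by omega)
    have a3 : 1 ≤ q ^ 3 := Nat.one_le_pow _ _ hq1
    have a4 : 1 ≤ q ^ 2 := Nat.one_le_pow _ _ hq1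
    zify [a1, a2, a3, a4] at h ⊢
    linear_combination -h
end

section
/- Let q be a prime power and F = F_q(X). Let W ⊂ F^3 be a one-dimensional subspace of height l ≥ 0, and let k ≥ 1. Then the number of two-dimensional subspaces V ⊂ F^3 containing W with h(V) = h(W) + k equals q^{2k+l-1}(q^2-1). -/
open Polynomial

namespace TwoDim

/-- The maximal degree of a triple. -/
noncomputable def ht {F : Type*} [Field F] (B : Fin 3 → Polynomial F) : WithBot ℕ :=
  Finset.univ.sup fun i => (B i).degree

/-- A primitive triple, in Bezout form. -/
def Prim {F : Type*} [Field F] (B : Fin 3 → Polynomial F) : Prop :=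
  ∃ u : Fin 3 → Polynomial F, ∑ i, u i * B i = 1

section
variable {F : Type*} [Field F]

lemma exists_factor (B : Fin 3 → Polynomial F) (hB : B ≠ 0) :
    ∃ g : Polynomial F, g.Monic ∧ ∃ C, Prim C ∧ B = g • C := by
  obtain ⟨d, hd⟩ := (IsPrincipalIdealRing.principal (Ideal.span (Set.range B))).principal
  have hdB : ∀ i, d ∣ B i := fun i => by
    have : B i ∈ Ideal.span (Set.range B) := Ideal.subset_span ⟨i, rfl⟩
    rw [hd] at this
    exact Ideal.mem_span_singleton.1 this
  have hd0 : d ≠ 0 := by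
    rintro rfl
    exact hB (funext fun i => zero_dvd_iff.1 (hdB i))
  have hmem : d ∈ Ideal.span (Set.range B) := by
    rw [hd]; exact Ideal.mem_span_singleton_self d
  obtain ⟨u, hu⟩ := (Ideal.mem_span_range_iff_exists_fun).1 hmem
  choose C hC using hdB
  have hc : d.leadingCoeff ≠ 0 := leadingCoeff_ne_zero.2 hd0
  refine ⟨d * Polynomial.C d.leadingCoeff⁻¹, monic_mul_leadingCoeff_inv hd0,
    fun i => Polynomial.C d.leadingCoeff * C i, ?_, ?_⟩
  · refine ⟨fun i => Polynomial.C d.leadingCoeff⁻¹ * u i, ?_⟩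
    have h1 : d * ∑ i, u i * C i = d * 1 := by
      rw [mul_one, Finset.mul_sum]
      conv_rhs => rw [← hu]
      exact Finset.sum_congr rfl fun i _ => by rw [hC i]; ring
    have h2 := mul_left_cancel₀ hd0 h1
    rw [← h2]
    refine Finset.sum_congr rfl fun i _ => ?_
    have : Polynomial.C d.leadingCoeff⁻¹ * Polynomial.C d.leadingCoeff = 1 := by
      rw [← Polynomial.C_mul, inv_mul_cancel₀ hc, Polynomial.C_1]
    linear_combination (u i * C i) * this
  · funext i
    have : Polynomial.C d.leadingCoeff⁻¹ * Polynomial.C d.leadingCoeff = 1 := by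
      rw [← Polynomial.C_mul, inv_mul_cancel₀ hc, Polynomial.C_1]
    simp only [Pi.smul_apply, smul_eq_mul]
    rw [hC i]
    linear_combination (-d * C i) * this

lemma Prim.ne_zero {B : Fin 3 → Polynomial F} (h : Prim B) : B ≠ 0 := by
  rintro rfl
  obtain ⟨u, hu⟩ := h
  simp at hu

lemma Prim.isUnit {B : Fin 3 → Polynomial F} (h : Prim B) (d : Polynomial F)
    (hd : ∀ i, d ∣ B i) : IsUnit d := by
  obtain ⟨u, hu⟩ := h
  apply isUnit_of_dvd_one
  rw [← hu]
  exact Finset.dvd_sum fun i _ => (hd i).mul_left _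

lemma prim_iff {B : Fin 3 → Polynomial F} :
    Prim B ↔ ∀ d : Polynomial F, (∀ i, d ∣ B i) → IsUnit d := by
  refine ⟨fun h => h.isUnit, fun h => ?_⟩
  have hB : B ≠ 0 := by
    rintro rfl
    exact not_isUnit_zero (h 0 (by simp))
  obtain ⟨g, hg, C, hC, rfl⟩ := exists_factor B hB
  have : g = 1 := hg.eq_one_of_isUnit (h g fun i => by simp)
  simpa [this] using hC

lemma Prim.dvd {C D : Fin 3 → Polynomial F} {g h : Polynomial F} (hC : Prim C)
    (e : h • D = g • C) : h ∣ g := by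
  obtain ⟨u, hu⟩ := hC
  have : g = ∑ i, u i * (g • C) i := by
    conv_lhs => rw [← mul_one g, ← hu, Finset.mul_sum]
    refine Finset.sum_congr rfl fun i _ => ?_
    simp only [Pi.smul_apply, smul_eq_mul]; ring
  rw [this, ← e]
  exact Finset.dvd_sum fun i _ => by simp [mul_left_comm]

lemma factor_unique {C D : Fin 3 → Polynomial F} {g h : Polynomial F} (hC : Prim C)
    (hD : Prim D) (hg : g.Monic) (hh : h.Monic) (e : g • C = h • D) : g = h ∧ C = D := by
  have h1 : g = h := eq_of_monic_of_associated hg hh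
    (associated_of_dvd_dvd (hD.dvd e) (hC.dvd e.symm))
  subst h1
  exact ⟨rfl, funext fun i => mul_left_cancel₀ hg.ne_zero (congrFun e i)⟩

lemma ht_smul (g : Polynomial F) (B : Fin 3 → Polynomial F) :
    ht (g • B) = g.degree + ht B := by
  have : ∀ a b : WithBot ℕ, g.degree + a ⊔ b = (g.degree + a) ⊔ (g.degree + b) := by
    intro a b
    rcases le_total a b with h | h
    · rw [sup_eq_right.2 h, sup_eq_right.2 (by gcongr)]
    · rw [sup_eq_left.2 h, sup_eq_left.2 (by gcongr)]
  simp [ht, Fin.univ_succ, degree_mul, this]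

lemma ht_lt {B : Fin 3 → Polynomial F} {m : ℕ} :
    ht B < (m : WithBot ℕ) ↔ ∀ i, (B i).degree < m := by
  rw [ht, Finset.sup_lt_iff (show (⊥ : WithBot ℕ) < (m : WithBot ℕ) from WithBot.bot_lt_coe m)]; simp

lemma ht_eq_bot {B : Fin 3 → Polynomial F} : ht B = ⊥ ↔ B = 0 := by
  simp [ht, Finset.sup_eq_bot_iff, funext_iff]

/-- Surjectivity of the syzygy map. -/
lemma surj (A : Fin 3 → Polynomial F) (hA : Prim A) {l m : ℕ} (hl : ht A = l) (hm : l ≤ m)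
    (p : Polynomial F) (hp : p.degree < ((m + l : ℕ) : WithBot ℕ)) :
    ∃ B : Fin 3 → Polynomial F, (∀ i, (B i).degree < m) ∧ ∑ i, A i * B i = p := by
  have hle : ∀ i, (A i).degree ≤ l := fun i => by
    rw [← hl]; exact Finset.le_sup (f := fun i => (A i).degree) (Finset.mem_univ i)
  obtain ⟨j, -, hj⟩ := Finset.exists_mem_eq_sup Finset.univ Finset.univ_nonempty
    (fun i => (A i).degree)
  have hj : (A j).degree = l := by rw [← hl]; exact hj.symm
  have hj0 : A j ≠ 0 := by
    intro h; rw [h] at hj; simp at hj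
  obtain ⟨u, hu⟩ := hA
  let c : Fin 3 → Polynomial F := fun i => (p * u i) % A j
  have hc : ∀ i, (c i).degree < l := fun i => by
    rw [← hj]; exact EuclideanDomain.mod_lt _ hj0
  have hdvd : A j ∣ p - ∑ i ∈ Finset.univ.erase j, A i * c i := by
    have h1 : p - ∑ i ∈ Finset.univ.erase j, A i * c i
        = A j * (p * u j) + ∑ i ∈ Finset.univ.erase j, A i * (p * u i - c i) := by
      have h2 : p = A j * (p * u j) + ∑ i ∈ Finset.univ.erase j, A i * (p * u i) := by
        rw [Finset.add_sum_erase _ (fun i => A i * (p * u i)) (Finset.mem_univ j)]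
        conv_lhs => rw [← mul_one p, ← hu, Finset.mul_sum]
        exact Finset.sum_congr rfl fun i _ => by ring
      simp only [mul_sub, Finset.sum_sub_distrib]
      conv_lhs => rw [h2]
      simp only [← mul_assoc]
      abel_nf
    rw [h1]
    refine dvd_add (dvd_mul_right _ _) (Finset.dvd_sum fun i _ => Dvd.dvd.mul_left ?_ _)
    exact ⟨(p * u i) / A j, by
      rw [sub_eq_iff_eq_add]; exact (EuclideanDomain.div_add_mod _ _).symm⟩
  obtain ⟨e, he⟩ := hdvd
  have hml : (l : WithBot ℕ) ≤ m := by exact_mod_cast hm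
  refine ⟨Function.update c j e, fun i => ?_, ?_⟩
  · by_cases hij : i = j
    · subst hij
      rw [Function.update_self]
      have h3 : (A i * e).degree < ((m + l : ℕ) : WithBot ℕ) := by
        rw [← he]
        refine (degree_sub_le _ _).trans_lt (max_lt hp ?_)
        refine (degree_sum_le _ _).trans_lt ?_
        rw [Finset.sup_lt_iff (WithBot.bot_lt_coe _)]
        intro b _
        by_cases hcb : c b = 0
        · simp [hcb]
        by_cases hAb : A b = 0
        · simp [hAb]
        have h4 := hc b
        have h5 := hle b
        rw [degree_mul]
        rw [degree_eq_natDegree hcb] at h4 ⊢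
        rw [degree_eq_natDegree hAb] at h5 ⊢
        norm_cast at *
        omega
      by_cases he0 : e = 0
      · simp [he0]
      rw [degree_mul, hj, degree_eq_natDegree he0] at h3
      rw [degree_eq_natDegree he0]
      norm_cast at *
      omega
    · rw [Function.update_of_ne hij]
      exact (hc i).trans_le hml
  · rw [← Finset.add_sum_erase _ _ (Finset.mem_univ j), Function.update_self, ← he]
    have h6 : ∑ i ∈ Finset.univ.erase j, A i * Function.update c j e i =
        ∑ i ∈ Finset.univ.erase j, A i * c i :=
      Finset.sum_congr rfl fun i hi => by
        rw [Function.update_of_ne (Finset.ne_of_mem_erase hi)]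
    rw [h6]
    ring

/-- Syzygies with degrees below `m`. -/
abbrev NN (A : Fin 3 → Polynomial F) (m : ℕ) :=
  {B : Fin 3 → Polynomial F // (∀ i, (B i).degree < m) ∧ ∑ i, A i * B i = 0}

/-- Syzygies of height exactly `n`. -/
abbrev EE (A : Fin 3 → Polynomial F) (n : ℕ) :=
  {B : Fin 3 → Polynomial F // ht B = n ∧ ∑ i, A i * B i = 0}

/-- Primitive syzygies of height exactly `n`. -/
abbrev PP (A : Fin 3 → Polynomial F) (n : ℕ) :=
  {B : Fin 3 → Polynomial F // Prim B ∧ ht B = n ∧ ∑ i, A i * B i = 0}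

/-- Factored syzygies. -/
abbrev QQ (A : Fin 3 → Polynomial F) (n : ℕ) :=
  {x : Polynomial F × (Fin 3 → Polynomial F) // x.1.Monic ∧ Prim x.2 ∧
    x.1.degree + ht x.2 = n ∧ ∑ i, A i * x.2 i = 0}

lemma finrank_degreeLT (m : ℕ) : Module.finrank F (degreeLT F m) = m := by
  rw [(degreeLTEquiv F m).finrank_eq]; simp

instance (m : ℕ) : Module.Finite F (degreeLT F m) :=
  Module.Finite.equiv (degreeLTEquiv F m).symm

lemma card_NN [Fintype F] (A : Fin 3 → Polynomial F) (hA : Prim A) {l m : ℕ} (hl : ht A = l)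
    (hm : l ≤ m) : Finite (NN A m) ∧ Nat.card (NN A m) = Fintype.card F ^ (2 * m - l) := by
  have hle : ∀ i, (A i).degree ≤ l := fun i => by
    rw [← hl]; exact Finset.le_sup (f := fun i => (A i).degree) (Finset.mem_univ i)
  let φ₀ : (Fin 3 → degreeLT F m) →ₗ[F] Polynomial F :=
    ∑ i, (LinearMap.mulLeft F (A i)) ∘ₗ (degreeLT F m).subtype ∘ₗ LinearMap.proj i
  have hφ₀ : ∀ B, φ₀ B = ∑ i, A i * (B i : Polynomial F) := fun B => by
    simp [φ₀, LinearMap.sum_apply]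
  have hmem : ∀ B, φ₀ B ∈ degreeLT F (m + l) := fun B => by
    rw [hφ₀]
    refine Submodule.sum_mem _ fun i _ => ?_
    have h4 := mem_degreeLT.1 (B i).2
    have h5 := hle i
    rw [mem_degreeLT]
    by_cases hcb : (B i : Polynomial F) = 0
    · simp [hcb]
    by_cases hAb : A i = 0
    · simp [hAb]
    rw [degree_mul]
    rw [degree_eq_natDegree hcb] at h4 ⊢
    rw [degree_eq_natDegree hAb] at h5 ⊢
    norm_cast at *
    omega
  let φ : (Fin 3 → degreeLT F m) →ₗ[F] degreeLT F (m + l) := φ₀.codRestrict _ hmem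
  have hsurj : Function.Surjective φ := by
    rintro ⟨p, hp⟩
    obtain ⟨B, hB, hBp⟩ := surj A hA hl hm p (mem_degreeLT.1 hp)
    refine ⟨fun i => ⟨B i, mem_degreeLT.2 (hB i)⟩, Subtype.ext ?_⟩
    change φ₀ _ = p
    rw [hφ₀, ← hBp]
  have hrank := LinearMap.finrank_range_add_finrank_ker φ
  rw [LinearMap.range_eq_top.2 hsurj, finrank_top, finrank_degreeLT, Module.finrank_pi_fintype]
    at hrank
  simp only [finrank_degreeLT, Finset.sum_const, Finset.card_univ, Fintype.card_fin,
    smul_eq_mul] at hrank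
  let e : LinearMap.ker φ ≃ NN A m :=
    { toFun := fun B => ⟨fun i => (B.1 i : Polynomial F), fun i => mem_degreeLT.1 (B.1 i).2, by
        have := B.2
        rw [LinearMap.mem_ker] at this
        rw [← hφ₀ B.1]
        exact congrArg Subtype.val this⟩
      invFun := fun B => ⟨fun i => ⟨B.1 i, mem_degreeLT.2 (B.2.1 i)⟩, by
        rw [LinearMap.mem_ker]
        apply Subtype.ext
        change φ₀ _ = 0
        rw [hφ₀]; exact B.2.2⟩
      left_inv := fun B => rfl
      right_inv := fun B => rfl }
  have : Finite (LinearMap.ker φ) := Module.finite_of_finite F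
  refine ⟨Finite.of_equiv _ e, ?_⟩
  rw [← Nat.card_congr e, Module.natCard_eq_pow_finrank (K := F), Nat.card_eq_fintype_card]
  congr 1
  omega

lemma card_EE (A : Fin 3 → Polynomial F) (n : ℕ) [Finite (NN A (n + 1))] :
    Finite (EE A n) ∧ Nat.card (NN A (n + 1)) = Nat.card (NN A n) + Nat.card (EE A n) := by
  classical
  have key : ∀ B : Fin 3 → Polynomial F, (∀ i, (B i).degree < ((n + 1 : ℕ) : WithBot ℕ)) ↔
      (∀ i, (B i).degree < (n : WithBot ℕ)) ∨ ht B = n := fun B => by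
    rw [← ht_lt, ← ht_lt, ← le_iff_lt_or_eq]
    push_cast
    cases h : ht B with
    | bot => simp
    | coe t =>
      change ((t : ℕ) : WithBot ℕ) < _ ↔ ((t : ℕ) : WithBot ℕ) ≤ _
      norm_cast
      omega
  let f : NN A n ⊕ EE A n → NN A (n + 1) := fun x => match x with
    | .inl B => ⟨B.1, (key _).2 (Or.inl B.2.1), B.2.2⟩
    | .inr B => ⟨B.1, (key _).2 (Or.inr B.2.1), B.2.2⟩
  have hf : Function.Bijective f := by
    constructor
    · rintro (⟨B, hB⟩ | ⟨B, hB⟩) (⟨B', hB'⟩ | ⟨B', hB'⟩) h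
      · have h := congrArg Subtype.val h
        simp only [f] at h
        subst h; rfl
      · have h := congrArg Subtype.val h
        simp only [f] at h
        subst h
        exact absurd hB'.1 (ht_lt.2 hB.1).ne
      · have h := congrArg Subtype.val h
        simp only [f] at h
        subst h
        exact absurd hB.1 (ht_lt.2 hB'.1).ne
      · have h := congrArg Subtype.val h
        simp only [f] at h
        subst h; rfl
    · rintro ⟨B, hB, hAB⟩
      rcases (key B).1 hB with h | h
      · exact ⟨.inl ⟨B, h, hAB⟩, rfl⟩
      · exact ⟨.inr ⟨B, h, hAB⟩, rfl⟩
  let e : NN A (n + 1) ≃ NN A n ⊕ EE A n := (Equiv.ofBijective f hf).symm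
  have : Finite (NN A n ⊕ EE A n) := Finite.of_equiv _ e
  have : Finite (NN A n) := Finite.of_injective (Sum.inl : _ → NN A n ⊕ EE A n) Sum.inl_injective
  have h2 : Finite (EE A n) :=
    Finite.of_injective (Sum.inr : _ → NN A n ⊕ EE A n) Sum.inr_injective
  exact ⟨h2, by rw [Nat.card_congr e, Nat.card_sum]⟩

lemma sum_smul (A B : Fin 3 → Polynomial F) (g : Polynomial F) :
    ∑ i, A i * (g • B) i = g * ∑ i, A i * B i := by
  rw [Finset.mul_sum]
  exact Finset.sum_congr rfl fun i _ => by simp only [Pi.smul_apply, smul_eq_mul]; ring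

/-- Factorization bijection. -/
lemma card_QQ (A : Fin 3 → Polynomial F) (n : ℕ) : Nonempty (QQ A n ≃ EE A n) := by
  refine ⟨Equiv.ofBijective (fun x => ⟨x.1.1 • x.1.2, ?_, ?_⟩) ⟨?_, ?_⟩⟩
  · rw [ht_smul]; exact x.2.2.2.1
  · rw [sum_smul, x.2.2.2.2, mul_zero]
  · rintro ⟨⟨g, C⟩, hg, hC, h1, h2⟩ ⟨⟨g', C'⟩, hg', hC', h1', h2'⟩ h
    obtain ⟨rfl, rfl⟩ := factor_unique hC hC' hg hg' (congrArg Subtype.val h)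
    rfl
  · rintro ⟨B, hB, hAB⟩
    have hB0 : B ≠ 0 := by
      rintro rfl
      rw [ht_eq_bot.2 rfl] at hB
      exact absurd hB (by simp)
    obtain ⟨g, hg, C, hC, rfl⟩ := exists_factor B hB0
    refine ⟨⟨(g, C), hg, hC, ?_, ?_⟩, rfl⟩
    · rw [← ht_smul]; exact hB
    · rw [sum_smul] at hAB
      exact (mul_eq_zero.1 hAB).resolve_left hg.ne_zero

lemma monic_step {g : Polynomial F} (hg : g.Monic) (c : F) :
    (g * X + C c).Monic ∧ (g * X + C c).degree = g.degree + 1 := by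
  have h1 : (C c : Polynomial F).degree < (g * X).degree := by
    rw [degree_mul, degree_X, degree_eq_natDegree hg.ne_zero]
    exact degree_C_le.trans_lt (by norm_cast; omega)
  refine ⟨(hg.mul monic_X).add_of_left h1, ?_⟩
  rw [degree_add_eq_left_of_degree_lt h1, degree_mul, degree_X]

/-- Recursion bijection. -/
lemma card_QQ_succ (A : Fin 3 → Polynomial F) (n : ℕ) :
    Nonempty (PP A (n + 1) ⊕ F × QQ A n ≃ QQ A (n + 1)) := by
  let f : PP A (n + 1) ⊕ F × QQ A n → QQ A (n + 1) := fun x => match x with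
    | .inl B => ⟨(1, B.1), monic_one, B.2.1, by
        rw [degree_one, zero_add]; exact B.2.2.1, B.2.2.2⟩
    | .inr (c, x) => ⟨(x.1.1 * X + C c, x.1.2), (monic_step x.2.1 c).1, x.2.2.1, by
        rw [(monic_step x.2.1 c).2, add_right_comm, x.2.2.2.1]; norm_cast, x.2.2.2.2⟩
  have hne : ∀ (g : Polynomial F) (c : F), g.Monic → (1 : Polynomial F) ≠ g * X + C c := by
    intro g c hg h
    have := (monic_step hg c).2
    rw [← h, degree_one, degree_eq_natDegree hg.ne_zero] at this
    norm_cast at this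
  refine ⟨Equiv.ofBijective f ⟨?_, ?_⟩⟩
  · rintro (⟨B, hB⟩ | ⟨c, ⟨g, D⟩, hg, hD⟩) (⟨B', hB'⟩ | ⟨c', ⟨g', D'⟩, hg', hD'⟩) h
    · have h := congrArg Subtype.val h
      simp only [f, Prod.mk.injEq, true_and] at h
      subst h; rfl
    · have h := congrArg Subtype.val h
      simp only [f, Prod.mk.injEq] at h
      exact absurd h.1 (hne _ _ hg')
    · have h := congrArg Subtype.val h
      simp only [f, Prod.mk.injEq] at h
      exact absurd h.1.symm (hne _ _ hg)
    · have h := congrArg Subtype.val h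
      simp only [f, Prod.mk.injEq] at h
      obtain ⟨h1, rfl⟩ := h
      have h2 : c = c' := by simpa using congrArg (fun p => coeff p 0) h1
      subst h2
      have h3 : g = g' := mul_right_cancel₀ X_ne_zero (add_right_cancel h1)
      subst h3
      rfl
  · rintro ⟨⟨g, D⟩, hg, hD, h1, h2⟩
    simp only at hg hD h1 h2
    by_cases hg1 : g = 1
    · subst hg1
      refine ⟨.inl ⟨D, hD, ?_, h2⟩, rfl⟩
      rw [← h1, degree_one, zero_add]
    · have hgx := divX_mul_X_add g
      have hpos : g.natDegree ≠ 0 := fun h => hg1 (hg.natDegree_eq_zero.1 h)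
      have hm : g.divX.Monic := by
        rw [Monic, leadingCoeff, natDegree_divX_eq_natDegree_tsub_one, coeff_divX,
          Nat.sub_add_cancel (by omega)]
        exact hg
      refine ⟨.inr (g.coeff 0, ⟨(g.divX, D), hm, hD, ?_, h2⟩), ?_⟩
      · have h3 := (monic_step hm (g.coeff 0)).2
        rw [hgx] at h3
        rw [h3, add_right_comm] at h1
        have hD0 : ht D ≠ ⊥ := fun h => hD.ne_zero (ht_eq_bot.1 h)
        obtain ⟨t, ht'⟩ := WithBot.ne_bot_iff_exists.1 hD0
        simp only
        rw [← ht', degree_eq_natDegree hm.ne_zero] at h1 ⊢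
        change ((_ : ℕ) : WithBot ℕ) + ((t : ℕ) : WithBot ℕ) + 1 = _ at h1
        change ((_ : ℕ) : WithBot ℕ) + ((t : ℕ) : WithBot ℕ) = _
        norm_cast at h1 ⊢
        omega
      · apply Subtype.ext
        simp only [f, hgx]

lemma card_PP [Fintype F] (A : Fin 3 → Polynomial F) (hA : Prim A) {l k : ℕ} (hl : ht A = l)
    (hk : 1 ≤ k) : Nat.card (PP A (l + k)) + Fintype.card F ^ (2 * k + l) +
      Fintype.card F * Fintype.card F ^ (2 * k + l) =
      Fintype.card F ^ (2 * k + l + 2) + Fintype.card F * Fintype.card F ^ (2 * k + l - 2) := by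
  obtain ⟨k, rfl⟩ : ∃ k', k = k' + 1 := ⟨k - 1, by omega⟩
  obtain ⟨f1, c1⟩ := card_NN A hA hl (m := l + k) (by omega)
  obtain ⟨f2, c2⟩ := card_NN A hA hl (m := l + k + 1) (by omega)
  obtain ⟨f3, c3⟩ := card_NN A hA hl (m := l + k + 1 + 1) (by omega)
  obtain ⟨f4, c4⟩ := card_EE A (l + k)
  obtain ⟨f5, c5⟩ := card_EE A (l + k + 1)
  obtain ⟨e1⟩ := card_QQ A (l + k)
  obtain ⟨e2⟩ := card_QQ A (l + k + 1)
  obtain ⟨e3⟩ := card_QQ_succ A (l + k)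
  have f6 : Finite (QQ A (l + k)) := Finite.of_equiv _ e1.symm
  have f7 : Finite (QQ A (l + k + 1)) := Finite.of_equiv _ e2.symm
  have f8 : Finite (PP A (l + k + 1) ⊕ F × QQ A (l + k)) := Finite.of_equiv _ e3.symm
  have f9 : Finite (PP A (l + k + 1)) :=
    Finite.of_injective (Sum.inl : _ → PP A (l + k + 1) ⊕ F × QQ A (l + k)) Sum.inl_injective
  have h := Nat.card_congr e3
  rw [Nat.card_sum, Nat.card_prod, Nat.card_congr e1, Nat.card_congr e2,
    Nat.card_eq_fintype_card (α := F)] at h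
  rw [← add_assoc l k 1]
  have x1 : 2 * (l + k) - l = 2 * (k + 1) + l - 2 := by omega
  have x2 : 2 * (l + k + 1) - l = 2 * (k + 1) + l := by omega
  have x3 : 2 * (l + k + 1 + 1) - l = 2 * (k + 1) + l + 2 := by omega
  rw [x1] at c1
  rw [x2] at c2
  rw [x3] at c3
  rw [← c1, ← c3, ← c2, c5]
  nth_rewrite 2 [c4]
  rw [← h]
  ring

/-- The functional attached to a triple. -/
noncomputable def fn (B : Fin 3 → Polynomial F) : (Fin 3 → RatFunc F) →ₗ[RatFunc F] RatFunc F :=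
  ∑ i, algebraMap (Polynomial F) (RatFunc F) (B i) • LinearMap.proj i

lemma fn_apply (B : Fin 3 → Polynomial F) (v : Fin 3 → RatFunc F) :
    fn B v = ∑ i, algebraMap (Polynomial F) (RatFunc F) (B i) * v i := by
  simp [fn, LinearMap.sum_apply, Algebra.smul_def]

lemma finrank_ker_fn {B : Fin 3 → Polynomial F} (hB : B ≠ 0) :
    Module.finrank (RatFunc F) (LinearMap.ker (fn B)) = 2 := by
  have hf : fn B ≠ 0 := by
    intro h
    apply hB
    funext i
    have h1 := LinearMap.congr_fun h (Pi.single i 1)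
    rw [fn_apply] at h1
    simpa [Pi.single_apply] using h1
  have := Module.Dual.finrank_ker_add_one_of_ne_zero (f := fn B) hf
  simp at this
  omega

lemma scalar_of_ker {B D : Fin 3 → Polynomial F} (hB : Prim B) (hD : Prim D)
    (h : LinearMap.ker (fn B) ≤ LinearMap.ker (fn D)) : ∃ c : Fˣ, B = C (c : F) • D := by
  have hx : ∀ i j, B i * D j = B j * D i := by
    intro i j
    have hv : (Pi.single j (algebraMap (Polynomial F) (RatFunc F) (B i)) -
        Pi.single i (algebraMap (Polynomial F) (RatFunc F) (B j)) : Fin 3 → RatFunc F) ∈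
        LinearMap.ker (fn B) := by
      rw [LinearMap.mem_ker, fn_apply]
      simp [Pi.single_apply, mul_sub, mul_comm]
    have := h hv
    rw [LinearMap.mem_ker, fn_apply] at this
    simp only [Pi.sub_apply, Pi.single_apply, mul_sub, mul_ite, mul_zero, Finset.sum_sub_distrib,
      Finset.sum_ite_eq', Finset.mem_univ, if_true, ← map_mul] at this
    have h3 := RatFunc.algebraMap_injective F (sub_eq_zero.1 this)
    linear_combination h3
  obtain ⟨u, hu⟩ := hD
  set s := ∑ i, u i * B i with hs
  have hBD : ∀ j, B j = s * D j := fun j => by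
    rw [hs, Finset.sum_mul]
    conv_lhs => rw [← mul_one (B j), ← hu, Finset.mul_sum]
    exact Finset.sum_congr rfl fun i _ => by linear_combination u i * hx j i
  have hsu : IsUnit s := hB.isUnit s fun i => ⟨_, hBD i⟩
  obtain ⟨r, hr, hrs⟩ := Polynomial.isUnit_iff.1 hsu
  refine ⟨hr.unit, funext fun i => ?_⟩
  rw [Pi.smul_apply, smul_eq_mul, IsUnit.unit_spec, hrs]
  exact hBD i

lemma Prim.smul {B : Fin 3 → Polynomial F} (hB : Prim B) (c : Fˣ) : Prim (C (c : F) • B) := by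
  obtain ⟨u, hu⟩ := hB
  refine ⟨fun i => C ((c⁻¹ : Fˣ) : F) * u i, ?_⟩
  rw [← hu]
  refine Finset.sum_congr rfl fun i _ => ?_
  have : C ((c⁻¹ : Fˣ) : F) * C (c : F) = 1 := by
    rw [← C_mul, Units.inv_mul, C_1]
  simp only [Pi.smul_apply, smul_eq_mul]
  linear_combination (u i * B i) * this

lemma ker_smul (B : Fin 3 → Polynomial F) (c : Fˣ) :
    LinearMap.ker (fn (C (c : F) • B)) = LinearMap.ker (fn B) := by
  have h : fn (C (c : F) • B) = algebraMap (Polynomial F) (RatFunc F) (C (c : F)) • fn B := by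
    apply LinearMap.ext
    intro v
    rw [LinearMap.smul_apply, fn_apply, fn_apply, smul_eq_mul, Finset.mul_sum]
    exact Finset.sum_congr rfl fun i _ => by
      rw [Pi.smul_apply, smul_eq_mul, map_mul, mul_assoc]
  rw [h, LinearMap.ker_smul]
  simp

end

end TwoDim

open TwoDim in
/-- Let `W ⊂ F³` (`F = 𝔽_q(X)`) be the one-dimensional subspace spanned by a coprime triple of
polynomials of maximal degree `l`, and let `k ≥ 1`.  The number of two-dimensional subspaces
`V ⊇ W` with `h(V) = h(W) + k` (the height of `V` being the height of its one-dimensional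
orthogonal complement) equals `q^{2k+l-1}(q²-1)`. -/
theorem card_two_dim_subspaces_containing {F : Type*} [Field F] [Fintype F] (q l k : ℕ)
    (hq : Fintype.card F = q) (hk : 1 ≤ k)
    (A : Fin 3 → Polynomial F)
    (hA : ∀ d : Polynomial F, (∀ i, d ∣ A i) → IsUnit d)
    (hdeg : (Finset.univ.sup fun i => (A i).degree) = (l : WithBot ℕ))
    (W : Submodule (RatFunc F) (Fin 3 → RatFunc F))
    (hW : W = Submodule.span (RatFunc F)
      {fun i => algebraMap (Polynomial F) (RatFunc F) (A i)}) :
    Nat.card {V : Submodule (RatFunc F) (Fin 3 → RatFunc F) //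
      W ≤ V ∧ Module.finrank (RatFunc F) V = 2 ∧
      ∃ B : Fin 3 → Polynomial F,
        (∀ d : Polynomial F, (∀ i, d ∣ B i) → IsUnit d) ∧
        (Finset.univ.sup fun i => (B i).degree) = ((l + k : ℕ) : WithBot ℕ) ∧
        ∀ v ∈ V, ∑ i, algebraMap (Polynomial F) (RatFunc F) (B i) * v i = 0} =
      q ^ (2 * k + l - 1) * (q ^ 2 - 1) := by
  classical
  have hA' : Prim A := prim_iff.2 hA
  set n := l + k with hn
  let S := {V : Submodule (RatFunc F) (Fin 3 → RatFunc F) //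
      W ≤ V ∧ Module.finrank (RatFunc F) V = 2 ∧
      ∃ B : Fin 3 → Polynomial F,
        (∀ d : Polynomial F, (∀ i, d ∣ B i) → IsUnit d) ∧
        (Finset.univ.sup fun i => (B i).degree) = ((n : ℕ) : WithBot ℕ) ∧
        ∀ v ∈ V, ∑ i, algebraMap (Polynomial F) (RatFunc F) (B i) * v i = 0}
  change Nat.card S = _
  have hex : ∀ V : S, ∃ B : Fin 3 → Polynomial F, Prim B ∧ ht B = n ∧
      V.1 = LinearMap.ker (fn B) := by
    rintro ⟨V, hWV, hV2, B, hB, hBn, hBV⟩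
    have hB' := prim_iff.2 hB
    refine ⟨B, hB', hBn, ?_⟩
    apply Submodule.eq_of_le_of_finrank_eq
    · intro v hv
      rw [LinearMap.mem_ker, fn_apply]
      exact hBV v hv
    · rw [finrank_ker_fn hB'.ne_zero]; exact hV2
  choose b hb1 hb2 hb3 using hex
  have hWB : ∀ B : Fin 3 → Polynomial F, W ≤ LinearMap.ker (fn B) ↔ ∑ i, A i * B i = 0 := by
    intro B
    rw [hW, Submodule.span_singleton_le_iff_mem, LinearMap.mem_ker, fn_apply]
    simp only [← map_mul, ← map_sum]
    rw [map_eq_zero_iff _ (RatFunc.algebraMap_injective F)]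
    simp only [mul_comm]
  let f : Fˣ × S → PP A n := fun x => ⟨C (x.1 : F) • b x.2, (hb1 x.2).smul x.1, by
      rw [ht_smul, degree_C x.1.ne_zero, zero_add]; exact hb2 x.2, by
      rw [← hWB, ker_smul, ← hb3]; exact x.2.2.1⟩
  have hf : Function.Bijective f := by
    constructor
    · rintro ⟨c, V⟩ ⟨c', V'⟩ h
      have h := congrArg Subtype.val h
      simp only [f] at h
      have hV : V = V' := by
        apply Subtype.ext
        rw [hb3 V, hb3 V', ← ker_smul (b V) c, h, ker_smul]
      subst hV
      obtain ⟨i, hi⟩ := Function.ne_iff.1 (hb1 V).ne_zero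
      have h1 := mul_right_cancel₀ hi (congrFun h i)
      rw [Units.ext (C_injective h1)]
    · rintro ⟨B, hB, hBn, hAB⟩
      let V : S := ⟨LinearMap.ker (fn B), (hWB B).2 hAB, finrank_ker_fn hB.ne_zero, B,
        prim_iff.1 hB, hBn, fun v hv => by rw [← fn_apply]; exact hv⟩
      obtain ⟨c, hc⟩ := scalar_of_ker hB (hb1 V) (hb3 V).le
      exact ⟨(c, V), Subtype.ext hc.symm⟩
  have hcard := Nat.card_congr (Equiv.ofBijective f hf)
  have hP := card_PP A hA' hdeg hk
  rw [Nat.card_prod, Nat.card_units, Nat.card_eq_fintype_card (α := F), hq] at hcard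
  rw [← hn, ← hcard, hq] at hP
  have hq2 : 2 ≤ q := by rw [← hq]; exact Fintype.one_lt_card
  obtain ⟨t, ht'⟩ : ∃ t, 2 * k + l = t + 2 := ⟨2 * k + l - 2, by omega⟩
  rw [ht'] at hP ⊢
  rw [show t + 2 - 2 = t by omega] at hP
  rw [show t + 2 - 1 = t + 1 by omega]
  obtain ⟨r, rfl⟩ : ∃ r, q = r + 2 := ⟨q - 2, by omega⟩
  rw [show r + 2 - 1 = r + 1 by omega] at hP
  have h1 : 1 ≤ (r + 2) ^ 2 := Nat.one_le_pow _ _ (by omega)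
  zify [h1] at hP ⊢
  have h2 : ((r : ℤ) + 1) ≠ 0 := by positivity
  apply mul_left_cancel₀ h2
  linear_combination hP
end

section
/- Let q be a prime power and let m > 2l ≥ 0 be integers. The number of ordered triples (A_1, A_2, A_3) of coprime polynomials in F_q[X] with max degree m such that the equation x_1 A_1 + x_2 A_2 + x_3 A_3 = 0 has a solution in F_q(X)^3 of height l is |S(m,l)| = q^{2(m+l)-3}(q^3-1)(q^2-1)^2 if l ≥ 1, and q^{2m-1}(q^3-1)(q^2-1) if l = 0. -/
open Polynomial

/-- coprime triple -/
def SmlCop {F : Type*} [Field F] (A : Fin 3 → Polynomial F) : Prop :=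
  ∀ d : Polynomial F, (∀ i, d ∣ A i) → IsUnit d

/-- triple of height `k` -/
def SmlHt {F : Type*} [Field F] (k : ℕ) (A : Fin 3 → Polynomial F) : Prop :=
  (Finset.univ.sup fun i => (A i).degree) = (k : WithBot ℕ)

/-- triple with all degrees below `n` -/
def SmlBd {F : Type*} [Field F] (n : ℕ) (A : Fin 3 → Polynomial F) : Prop :=
  ∀ i, (A i).degree < (n : WithBot ℕ)

section
variable {F : Type*} [Field F]

lemma sml_wb (x : WithBot ℕ) : x = ⊥ ∨ ∃ a : ℕ, x = (a : WithBot ℕ) := by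
  induction x with
  | bot => exact Or.inl rfl
  | coe a => exact Or.inr ⟨a, rfl⟩

lemma sml_lt_succ (x : WithBot ℕ) (k : ℕ) : x < ((k + 1 : ℕ) : WithBot ℕ) ↔ x ≤ (k : WithBot ℕ) := by
  rcases sml_wb x with rfl | ⟨a, rfl⟩
  · simp
  · norm_cast; omega

lemma sml_add_lt {x y : WithBot ℕ} {a b c : ℕ} (hx : x < (a : WithBot ℕ)) (hy : y < (b : WithBot ℕ))
    (h : a + b ≤ c + 1) : x + y < (c : WithBot ℕ) := by
  rcases sml_wb x with rfl | ⟨x, rfl⟩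
  · simp
  rcases sml_wb y with rfl | ⟨y, rfl⟩
  · simp
  norm_cast at *
  omega

lemma sml_cancel (x : WithBot ℕ) (d j : ℕ) :
    (d : WithBot ℕ) + x < ((d + j : ℕ) : WithBot ℕ) ↔ x < (j : WithBot ℕ) := by
  rcases sml_wb x with rfl | ⟨x, rfl⟩
  · simp
  · norm_cast; omega

lemma smlHt_iff (k : ℕ) (A : Fin 3 → Polynomial F) :
    SmlHt k A ↔ SmlBd (k + 1) A ∧ ¬ SmlBd k A := by
  have h1 : SmlBd (k + 1) A ↔ (Finset.univ.sup fun i => (A i).degree) ≤ (k : WithBot ℕ) := by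
    simp only [SmlBd, sml_lt_succ, Finset.sup_le_iff, Finset.mem_univ, true_imp_iff]
  have h2 : SmlBd k A ↔ (Finset.univ.sup fun i => (A i).degree) < (k : WithBot ℕ) := by
    have hk : (⊥ : WithBot ℕ) < (k : WithBot ℕ) := WithBot.bot_lt_coe k
    rw [Finset.sup_lt_iff hk]
    simp [SmlBd]
  rw [h1, h2, not_lt, SmlHt]
  exact le_antisymm_iff

/-- gcd of a triple -/
lemma sml_gcd (A : Fin 3 → Polynomial F) :
    ∃ g : Polynomial F, (∀ i, g ∣ A i) ∧ ∃ c : Fin 3 → Polynomial F, ∑ i, c i * A i = g := by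
  let I := Ideal.span (Set.range A)
  refine ⟨Submodule.IsPrincipal.generator I, fun i => ?_, ?_⟩
  · rw [← Submodule.IsPrincipal.mem_iff_generator_dvd]
    exact Ideal.subset_span ⟨i, rfl⟩
  · rw [← Ideal.mem_span_range_iff_exists_fun]
    exact Submodule.IsPrincipal.generator_mem I

lemma smlCop_iff (A : Fin 3 → Polynomial F) :
    SmlCop A ↔ ∃ c : Fin 3 → Polynomial F, ∑ i, c i * A i = 1 := by
  constructor
  · intro h
    obtain ⟨g, hg, c, hc⟩ := sml_gcd A
    obtain ⟨u, hu⟩ := (h g hg).exists_left_inv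
    refine ⟨fun i => u * c i, ?_⟩
    rw [← hu, ← hc, Finset.mul_sum]
    simp only [mul_assoc]
  · rintro ⟨c, hc⟩ d hd
    apply isUnit_of_dvd_one
    rw [← hc]
    exact Finset.dvd_sum fun i _ => (hd i).mul_left _

lemma smlBd_mul {D : Polynomial F} {d : ℕ} (hD : D.degree = d) (j : ℕ) (A : Fin 3 → Polynomial F) :
    SmlBd (d + j) (fun i => D * A i) ↔ SmlBd j A := by
  unfold SmlBd
  refine forall_congr' fun i => ?_
  rw [degree_mul, hD]
  exact sml_cancel _ _ _

lemma smlHt_mul {D : Polynomial F} {d : ℕ} (hD : D.degree = d) (j : ℕ) (A : Fin 3 → Polynomial F) :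
    SmlHt (d + j) (fun i => D * A i) ↔ SmlHt j A := by
  rw [smlHt_iff, smlHt_iff, add_assoc, smlBd_mul hD, smlBd_mul hD]

lemma smlHt_le_of_mul {D : Polynomial F} (k : ℕ) (A : Fin 3 → Polynomial F)
    (h : SmlHt k (fun i => D * A i)) : D ≠ 0 ∧ D.natDegree ≤ k := by
  rw [smlHt_iff] at h
  obtain ⟨h1, h2⟩ := h
  simp only [SmlBd, not_forall, not_lt] at h2
  obtain ⟨i, hi⟩ := h2
  have h3 := h1 i
  have hne : D * A i ≠ 0 := by
    intro h0
    simp only [h0, degree_zero] at hi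
    simp at hi
  refine ⟨left_ne_zero_of_mul hne, ?_⟩
  have := (natDegree_lt_iff_degree_lt hne).2 h3
  rw [natDegree_mul (left_ne_zero_of_mul hne) (right_ne_zero_of_mul hne)] at this
  omega

variable [Fintype F]

lemma sml_finrank_degreeLT (n : ℕ) : Module.finrank F (degreeLT F n) = n := by
  rw [(degreeLTEquiv F n).finrank_eq]; simp

instance sml_fin_degreeLT (n : ℕ) : Module.Finite F (degreeLT F n) :=
  Module.Finite.equiv (degreeLTEquiv F n).symm

lemma sml_card_degreeLT (n : ℕ) : Nat.card (degreeLT F n) = Fintype.card F ^ n := by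
  rw [Module.natCard_eq_pow_finrank (K := F), sml_finrank_degreeLT, Nat.card_eq_fintype_card]

instance sml_finite_degreeLT (n : ℕ) : Finite (degreeLT F n) := 
  Finite.of_equiv _ (degreeLTEquiv F n).symm.toEquiv

/-- bounded triples as functions to degreeLT -/
def smlBdEquiv (n : ℕ) : {A : Fin 3 → Polynomial F // SmlBd n A} ≃ (Fin 3 → degreeLT F n) where
  toFun A := fun i => ⟨A.1 i, mem_degreeLT.2 (A.2 i)⟩
  invFun f := ⟨fun i => f i, fun i => mem_degreeLT.1 (f i).2⟩
  left_inv _ := rfl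
  right_inv _ := rfl

lemma smlBd_finite (n : ℕ) : {A : Fin 3 → Polynomial F | SmlBd n A}.Finite :=
  Finite.of_equiv _ (smlBdEquiv n).symm

lemma smlHt_finite (n : ℕ) : {A : Fin 3 → Polynomial F | SmlHt n A}.Finite :=
  (smlBd_finite (n + 1)).subset fun _ h => ((smlHt_iff _ _).1 h).1

lemma sml_card_top (n : ℕ) :
    Nat.card {A : Fin 3 → Polynomial F // True ∧ SmlBd n A} = Fintype.card F ^ (3 * n) := by
  rw [Nat.card_congr ((Equiv.subtypeEquivRight (by simp)).trans (smlBdEquiv n)), Nat.card_pi]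
  simp [sml_card_degreeLT, mul_comm 3 n, pow_mul]

lemma sml_T_add (W : (Fin 3 → Polynomial F) → Prop) (k : ℕ) :
    Nat.card {A : Fin 3 → Polynomial F // W A ∧ SmlHt k A} + Nat.card {A // W A ∧ SmlBd k A} =
      Nat.card {A // W A ∧ SmlBd (k + 1) A} := by
  have h := Set.ncard_sdiff_add_ncard_of_subset (s := {A : Fin 3 → Polynomial F | W A ∧ SmlBd k A})
    (t := {A | W A ∧ SmlBd (k + 1) A})
    (fun A hA => ⟨hA.1, fun i => (hA.2 i).trans (by norm_cast; omega)⟩)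
    ((smlBd_finite (k + 1)).subset fun _ h => h.2)
  have e : {A : Fin 3 → Polynomial F | W A ∧ SmlBd (k + 1) A} \ {A | W A ∧ SmlBd k A} =
      {A | W A ∧ SmlHt k A} := by
    ext A
    simp only [Set.mem_sdiff, Set.mem_ofPred_eq, smlHt_iff]
    tauto
  rw [e] at h
  exact h

lemma sml_T_sum (W : (Fin 3 → Polynomial F) → Prop)
    (hW : ∀ (D : Polynomial F) (A : Fin 3 → Polynomial F), D ≠ 0 → (W (fun i => D * A i) ↔ W A))
    (k : ℕ) :
    Nat.card {A : Fin 3 → Polynomial F // W A ∧ SmlHt k A} =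
      ∑ d ∈ Finset.range (k + 1), Fintype.card F ^ d *
        Nat.card {A : Fin 3 → Polynomial F // SmlCop A ∧ SmlHt (k - d) A ∧ W A} := by
  have hfin : ∀ d : Fin (k + 1), Finite ({D : Polynomial F // D.Monic ∧ D.natDegree = (d : ℕ)} ×
      {A : Fin 3 → Polynomial F // SmlCop A ∧ SmlHt (k - d) A ∧ W A}) := by
    intro d
    have : Finite {D : Polynomial F // D.Monic ∧ D.natDegree = (d : ℕ)} :=
      Finite.of_equiv _ (monicEquivDegreeLT (d : ℕ)).symm
    have : Finite {A : Fin 3 → Polynomial F // SmlCop A ∧ SmlHt (k - d) A ∧ W A} :=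
      (smlHt_finite (k - d)).subset fun _ h => h.2.1
    infer_instance
  let f : (Σ d : Fin (k + 1), {D : Polynomial F // D.Monic ∧ D.natDegree = (d : ℕ)} ×
      {A : Fin 3 → Polynomial F // SmlCop A ∧ SmlHt (k - d) A ∧ W A}) →
      {A : Fin 3 → Polynomial F // W A ∧ SmlHt k A} := fun x =>
    ⟨fun i => x.2.1.1 * x.2.2.1 i, (hW _ _ x.2.1.2.1.ne_zero).2 x.2.2.2.2.2, by
      have h := (smlHt_mul (D := x.2.1.1) (d := x.1) (by
        rw [degree_eq_natDegree x.2.1.2.1.ne_zero, x.2.1.2.2]) (k - x.1) x.2.2.1).2 x.2.2.2.2.1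
      rwa [Nat.add_sub_cancel' (by have := x.1.2; omega)] at h⟩
  have hf : Function.Bijective f := by
    constructor
    · rintro ⟨⟨d, hd⟩, ⟨D, hD1, hD2⟩, ⟨A, hA1, hA2⟩⟩ ⟨⟨d', hd'⟩, ⟨D', hD1', hD2'⟩, ⟨A', hA1', hA2'⟩⟩ h
      have h' : ∀ i, D * A i = D' * A' i := fun i => congrFun (congrArg Subtype.val h) i
      have key : ∀ (D D' : Polynomial F) (A A' : Fin 3 → Polynomial F), SmlCop A →
          (∀ i, D * A i = D' * A' i) → D' ∣ D := by
        intro D D' A A' hA h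
        obtain ⟨c, hc⟩ := (smlCop_iff A).1 hA
        refine ⟨∑ i, c i * A' i, ?_⟩
        calc D = D * ∑ i, c i * A i := by rw [hc, mul_one]
          _ = _ := by
            rw [Finset.mul_sum, Finset.mul_sum]
            refine Finset.sum_congr rfl fun i _ => ?_
            linear_combination c i * h i
      have hDD : D = D' := eq_of_monic_of_associated hD1 hD1'
        (associated_of_dvd_dvd (key _ _ _ _ hA1' fun i => (h' i).symm) (key _ _ _ _ hA1 h'))
      subst hDD
      have hAA : A = A' := funext fun i => mul_left_cancel₀ hD1.ne_zero (h' i)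
      subst hAA
      have : d = d' := hD2.symm.trans hD2'
      subst this
      rfl
    · rintro ⟨A, hA, hk⟩
      obtain ⟨g, hg, c, hc⟩ := sml_gcd A
      have hg0 : g ≠ 0 := by
        choose B hB using hg
        have : A = fun i => g * B i := funext hB
        rw [this] at hk
        exact (smlHt_le_of_mul _ _ hk).1
      obtain ⟨D, hDm, hD, c, hc⟩ : ∃ D : Polynomial F, D.Monic ∧ (∀ i, D ∣ A i) ∧
          ∃ c : Fin 3 → Polynomial F, ∑ i, c i * A i = D := by
        refine ⟨g * C g.leadingCoeff⁻¹, monic_mul_leadingCoeff_inv hg0, fun i => ?_,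
          fun i => C g.leadingCoeff⁻¹ * c i, ?_⟩
        · have hu : IsUnit (C g.leadingCoeff⁻¹) :=
            isUnit_C.2 (IsUnit.mk0 _ (inv_ne_zero (leadingCoeff_ne_zero.2 hg0)))
          exact (hu.mul_right_dvd).2 (hg i)
        · simp only [mul_assoc]
          rw [← Finset.mul_sum, hc, mul_comm]
      choose B hB using hD
      have hAB : A = fun i => D * B i := funext hB
      subst hAB
      have hd := (smlHt_le_of_mul _ _ hk).2
      refine ⟨⟨⟨D.natDegree, by omega⟩, ⟨D, hDm, rfl⟩, ⟨B, ?_, ?_, ?_⟩⟩, rfl⟩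
      · rw [smlCop_iff]
        refine ⟨c, mul_left_cancel₀ hDm.ne_zero ?_⟩
        rw [mul_one, Finset.mul_sum]
        conv_rhs => rw [← hc]
        refine Finset.sum_congr rfl fun i _ => ?_
        ring
      · rw [← smlHt_mul (degree_eq_natDegree hDm.ne_zero)]
        simpa [Nat.add_sub_cancel' hd] using hk
      · exact (hW _ _ hDm.ne_zero).1 hA
  rw [← Nat.card_congr (Equiv.ofBijective f hf), Nat.card_sigma, ← Fin.sum_univ_eq_sum_range
    (fun d => Fintype.card F ^ d *
        Nat.card {A : Fin 3 → Polynomial F // SmlCop A ∧ SmlHt (k - d) A ∧ W A})]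
  refine Finset.sum_congr rfl fun d _ => ?_
  rw [Nat.card_prod, Nat.card_congr (monicEquivDegreeLT (d : ℕ)), sml_card_degreeLT]

lemma sml_T_succ (W : (Fin 3 → Polynomial F) → Prop)
    (hW : ∀ (D : Polynomial F) (A : Fin 3 → Polynomial F), D ≠ 0 → (W (fun i => D * A i) ↔ W A))
    (k : ℕ) :
    Nat.card {A : Fin 3 → Polynomial F // W A ∧ SmlHt (k + 1) A} =
      Fintype.card F * Nat.card {A : Fin 3 → Polynomial F // W A ∧ SmlHt k A} +
        Nat.card {A : Fin 3 → Polynomial F // SmlCop A ∧ SmlHt (k + 1) A ∧ W A} := by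
  rw [sml_T_sum W hW, sml_T_sum W hW, Finset.sum_range_succ', Finset.mul_sum]
  simp only [Nat.reduceSubDiff, pow_zero, one_mul, Nat.sub_zero, pow_succ', mul_assoc]

/-- the multiplication map -/
noncomputable def smlMap (P : Fin 3 → Polynomial F) (n l : ℕ) (hP : SmlBd (l + 1) P) :
    (Fin 3 → degreeLT F n) →ₗ[F] degreeLT F (n + l) where
  toFun A := ⟨∑ i, P i * (A i : Polynomial F), by
    refine Submodule.sum_mem _ fun i _ => ?_
    have h1 := hP i
    have h2 := mem_degreeLT.1 (A i).2
    rw [mem_degreeLT, degree_mul]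
    exact sml_add_lt h1 h2 (by omega)⟩
  map_add' A B := by
    ext1
    simp [mul_add, Finset.sum_add_distrib]
  map_smul' c A := by
    ext1
    simp [Finset.smul_sum]

lemma smlMap_surj (P : Fin 3 → Polynomial F) (n l : ℕ) (hc : SmlCop P) (hP : SmlHt l P)
    (hP' : SmlBd (l + 1) P) (hn : l ≤ n) : Function.Surjective (smlMap P n l hP') := by
  rintro ⟨f, hf⟩
  rw [mem_degreeLT] at hf
  obtain ⟨c, hc⟩ := (smlCop_iff P).1 hc
  have h2 := ((smlHt_iff l P).1 hP).2
  simp only [SmlBd, not_forall, not_lt] at h2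
  obtain ⟨j, hj⟩ := h2
  have hjd : (P j).degree = l := le_antisymm ((sml_lt_succ _ _).1 (hP' j)) hj
  have hj0 : P j ≠ 0 := by
    intro h
    rw [h] at hjd
    simp at hjd
  -- reduced coefficients
  let r : Fin 3 → Polynomial F := fun i => (f * c i) % P j
  let s : Fin 3 → Polynomial F := fun i => (f * c i) / P j
  have hrs : ∀ i, f * c i = r i + P j * s i := fun i => (EuclideanDomain.mod_add_div _ _).symm
  have hr : ∀ i, (r i).degree < l := fun i => hjd ▸ degree_mod_lt _ hj0
  let a : Polynomial F := r j + ∑ i, P i * s i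
  let A : Fin 3 → Polynomial F := Function.update r j a
  have hsum : P j * a + ∑ i ∈ Finset.univ.erase j, P i * r i = f := by
    have h1 : ∑ i, P i * r i = P j * r j + ∑ i ∈ Finset.univ.erase j, P i * r i :=
      (Finset.add_sum_erase _ _ (Finset.mem_univ j)).symm
    have h3 : f = ∑ i, P i * r i + P j * ∑ i, P i * s i := by
      calc f = f * ∑ i, c i * P i := by rw [hc, mul_one]
        _ = _ := by
          rw [Finset.mul_sum, Finset.mul_sum, ← Finset.sum_add_distrib]
          refine Finset.sum_congr rfl fun i _ => ?_
          linear_combination P i * hrs i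
    rw [h1] at h3
    simp only [a]
    linear_combination -h3
  have ha : a.degree < n := by
    have h4 : (P j * a).degree < ((n + l : ℕ) : WithBot ℕ) := by
      rw [eq_sub_of_add_eq hsum, ← mem_degreeLT]
      refine Submodule.sub_mem _ (mem_degreeLT.2 hf) (Submodule.sum_mem _ fun i _ => ?_)
      have h1 := hP' i
      have h2 := hr i
      rw [mem_degreeLT, degree_mul]
      exact sml_add_lt h1 h2 (by omega)
    rw [degree_mul, hjd, add_comm n l] at h4
    exact (sml_cancel _ _ _).1 h4
  refine ⟨fun i => ⟨A i, mem_degreeLT.2 ?_⟩, Subtype.ext ?_⟩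
  · by_cases h : i = j
    · subst h
      simpa [A] using ha
    · simp only [A, Function.update_of_ne h]
      exact (hr i).trans_le (by exact_mod_cast hn)
  · change ∑ i, P i * A i = f
    rw [← hsum, ← Finset.add_sum_erase _ _ (Finset.mem_univ j)]
    congr 1
    · simp [A]
    · refine Finset.sum_congr rfl fun i hi => ?_
      simp only [A, Function.update_of_ne (Finset.ne_of_mem_erase hi)]

lemma sml_card_perp (P : Fin 3 → Polynomial F) (n l : ℕ) (hc : SmlCop P) (hP : SmlHt l P)
    (hn : l ≤ n) :
    Nat.card {A : Fin 3 → Polynomial F // ∑ i, P i * A i = 0 ∧ SmlBd n A} =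
      Fintype.card F ^ (2 * n - l) := by
  have hP' := ((smlHt_iff l P).1 hP).1
  have hs := smlMap_surj P n l hc hP hP' hn
  have hr := LinearMap.finrank_range_add_finrank_ker (smlMap P n l hP')
  rw [LinearMap.range_eq_top.2 hs, finrank_top, sml_finrank_degreeLT, Module.finrank_pi_fintype]
    at hr
  simp only [sml_finrank_degreeLT, Finset.sum_const, Finset.card_univ, Fintype.card_fin,
    smul_eq_mul] at hr
  have hk : Nat.card (LinearMap.ker (smlMap P n l hP')) = Fintype.card F ^ (2 * n - l) := by
    rw [Module.natCard_eq_pow_finrank (K := F), Nat.card_eq_fintype_card]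
    congr 1
    omega
  rw [← hk]
  refine Nat.card_congr
    { toFun := fun A => ⟨fun i => ⟨A.1 i, mem_degreeLT.2 (A.2.2 i)⟩, ?_⟩
      invFun := fun f => ⟨fun i => (f.1 i : Polynomial F), ?_, fun i => mem_degreeLT.1 (f.1 i).2⟩
      left_inv := fun _ => rfl
      right_inv := fun _ => rfl }
  · rw [LinearMap.mem_ker]
    exact Subtype.ext A.2.1
  · exact congrArg Subtype.val (LinearMap.mem_ker.1 f.2)

/-- proportionality to a coprime vector -/
lemma sml_prop (P Q : Fin 3 → Polynomial F) (hP : SmlCop P)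
    (h : ∀ i j, P i * Q j = P j * Q i) : ∃ t : Polynomial F, ∀ j, Q j = t * P j := by
  obtain ⟨c, hc⟩ := (smlCop_iff P).1 hP
  refine ⟨∑ i, c i * Q i, fun j => ?_⟩
  calc Q j = (∑ i, c i * P i) * Q j := by rw [hc, one_mul]
    _ = _ := by
      rw [Finset.sum_mul, Finset.sum_mul]
      refine Finset.sum_congr rfl fun i _ => ?_
      linear_combination c i * h i j

lemma sml_unique (A P Q : Fin 3 → Polynomial F) (m l : ℕ) (hml : 2 * l < m)
    (hA : SmlCop A) (hAm : SmlHt m A) (hP : SmlCop P) (hPl : SmlHt l P)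
    (hQ : SmlCop Q) (hQl : SmlHt l Q) (hPA : ∑ i, P i * A i = 0) (hQA : ∑ i, Q i * A i = 0) :
    ∃ u : Fˣ, ∀ i, Q i = C (u : F) * P i := by
  have hcross : ∀ i j, P i * Q j - P j * Q i = 0 := by
    let Y : Fin 3 → Polynomial F :=
      ![P 1 * Q 2 - P 2 * Q 1, P 2 * Q 0 - P 0 * Q 2, P 0 * Q 1 - P 1 * Q 0]
    rw [Fin.sum_univ_three] at hPA hQA
    obtain ⟨t, ht⟩ := sml_prop A Y hA (by
      intro i j
      fin_cases i <;> fin_cases j <;> simp [Y] <;> grind)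
    have hdeg : SmlBd m Y := by
      have hd : ∀ i j, (P i * Q j - P j * Q i) ∈ degreeLT F m := by
        have hd' : ∀ i j, P i * Q j ∈ degreeLT F m := by
          intro i j
          have h1 := ((smlHt_iff l P).1 hPl).1 i
          have h2 := ((smlHt_iff l Q).1 hQl).1 j
          rw [mem_degreeLT, degree_mul]
          exact sml_add_lt h1 h2 (by omega)
        exact fun i j => Submodule.sub_mem _ (hd' i j) (hd' j i)
      intro i
      rw [← mem_degreeLT]
      fin_cases i
      · exact hd 1 2
      · exact hd 2 0
      · exact hd 0 1
    have ht0 : t = 0 := by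
      by_contra h0
      have h2 := ((smlHt_iff m A).1 hAm).2
      refine h2 fun i => lt_of_le_of_lt ?_ (hdeg i)
      rw [ht i, mul_comm]
      exact degree_le_mul_left _ h0
    have e0 : P 1 * Q 2 - P 2 * Q 1 = 0 := by simpa [Y, ht0] using ht 0
    have e1 : P 2 * Q 0 - P 0 * Q 2 = 0 := by simpa [Y, ht0] using ht 1
    have e2 : P 0 * Q 1 - P 1 * Q 0 = 0 := by simpa [Y, ht0] using ht 2
    intro i j
    fin_cases i <;> fin_cases j <;> simp <;> grind
  obtain ⟨t, ht⟩ := sml_prop P Q hP fun i j => sub_eq_zero.1 (hcross i j)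
  have hu : IsUnit t := hQ t fun i => ⟨_, ht i⟩
  obtain ⟨r, hr, rfl⟩ := isUnit_iff.1 hu
  exact ⟨hr.unit, ht⟩

lemma sml_ne_zero (P : Fin 3 → Polynomial F) (hP : SmlCop P) : ∃ i, P i ≠ 0 := by
  by_contra! h
  exact not_isUnit_zero (hP 0 fun i => by rw [h i])

lemma sml_smul (u : Fˣ) (P A : Fin 3 → Polynomial F) (l : ℕ) (hP : SmlCop P) (hPl : SmlHt l P)
    (hPA : ∑ i, P i * A i = 0) :
    SmlCop (fun i => C (u : F) * P i) ∧ SmlHt l (fun i => C (u : F) * P i) ∧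
      ∑ i, (C (u : F) * P i) * A i = 0 := by
  refine ⟨fun d hd => hP d fun i => ?_, ?_, ?_⟩
  · exact ((isUnit_C.2 u.isUnit).dvd_mul_left).1 (hd i)
  · have := (smlHt_mul (D := C (u : F)) (d := 0) (degree_C u.ne_zero) l P).2 hPl
    rwa [zero_add] at this
  · simp only [mul_assoc]
    rw [← Finset.mul_sum, hPA, mul_zero]

lemma sml_double (m l : ℕ) (hml : 2 * l < m) :
    Nat.card {A : Fin 3 → Polynomial F // SmlCop A ∧ SmlHt m A ∧
      ∃ P : Fin 3 → Polynomial F, SmlCop P ∧ SmlHt l P ∧ ∑ i, P i * A i = 0} *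
        (Fintype.card F - 1) =
    Nat.card (Σ P : {P : Fin 3 → Polynomial F // SmlCop P ∧ SmlHt l P ∧ True},
      {A : Fin 3 → Polynomial F // SmlCop A ∧ SmlHt m A ∧ ∑ i, P.1 i * A i = 0}) := by
  classical
  have hu : Fintype.card F - 1 = Nat.card Fˣ := by
    rw [Nat.card_eq_fintype_card, Fintype.card_units]
  rw [hu, ← Nat.card_prod]
  choose p hp1 hp2 hp3 using fun A : {A : Fin 3 → Polynomial F // SmlCop A ∧ SmlHt m A ∧
      ∃ P : Fin 3 → Polynomial F, SmlCop P ∧ SmlHt l P ∧ ∑ i, P i * A i = 0} => A.2.2.2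
  refine Nat.card_congr (Equiv.ofBijective (fun x =>
    ⟨⟨fun i => C (x.2 : F) * p x.1 i,
      (sml_smul x.2 _ _ l (hp1 x.1) (hp2 x.1) (hp3 x.1)).1,
      (sml_smul x.2 _ _ l (hp1 x.1) (hp2 x.1) (hp3 x.1)).2.1, trivial⟩,
     ⟨x.1.1, x.1.2.1, x.1.2.2.1, (sml_smul x.2 _ _ l (hp1 x.1) (hp2 x.1) (hp3 x.1)).2.2⟩⟩)
    ⟨?_, ?_⟩)
  · rintro ⟨A, u⟩ ⟨B, v⟩ h
    have h1 := congrArg (fun z => z.2.1) h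
    have hAB : A = B := Subtype.ext h1
    subst hAB
    have h2 := congrArg (fun z => z.1.1) h
    obtain ⟨i, hi⟩ := sml_ne_zero (p A) (hp1 A)
    have h3 := mul_right_cancel₀ hi (congrFun h2 i)
    have h4 : u = v := Units.ext (C_injective h3)
    rw [h4]
  · rintro ⟨⟨P, hP1, hP2, hP3⟩, ⟨A, hA1, hA2, hA3⟩⟩
    have hex : ∃ P : Fin 3 → Polynomial F, SmlCop P ∧ SmlHt l P ∧ ∑ i, P i * A i = 0 :=
      ⟨P, hP1, hP2, hA3⟩
    obtain ⟨u, hu⟩ := sml_unique A (p ⟨A, hA1, hA2, hex⟩) P m l hml hA1 hA2 (hp1 _) (hp2 _) hP1 hP2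
      (hp3 _) hA3
    have hPe : P = fun i => C (u : F) * p ⟨A, hA1, hA2, hex⟩ i := funext hu
    clear hu
    generalize hpB : p ⟨A, hA1, hA2, hex⟩ = pB at hPe
    subst hPe
    subst hpB
    exact ⟨(⟨A, hA1, hA2, hex⟩, u), rfl⟩

lemma sml_C_perp (P : Fin 3 → Polynomial F) (m l : ℕ) (hml : 2 * l < m) (hc : SmlCop P)
    (hP : SmlHt l P) :
    Nat.card {A : Fin 3 → Polynomial F // SmlCop A ∧ SmlHt m A ∧ ∑ i, P i * A i = 0} =
      Fintype.card F ^ (2 * m - l - 1) * ((Fintype.card F ^ 2 - 1) * (Fintype.card F - 1)) := by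
  obtain ⟨k, rfl⟩ : ∃ k, m = k + 1 := ⟨m - 1, by omega⟩
  have h0 := sml_T_succ (F := F) (fun A => ∑ i, P i * A i = 0) (by
    intro D A hD
    have : ∑ i, P i * (D * A i) = D * ∑ i, P i * A i := by
      rw [Finset.mul_sum]
      exact Finset.sum_congr rfl fun i _ => by ring
    simp only [this, mul_eq_zero, hD, false_or]) k
  have h1 := sml_T_add (F := F) (fun A => ∑ i, P i * A i = 0) k
  have h2 := sml_T_add (F := F) (fun A => ∑ i, P i * A i = 0) (k + 1)
  rw [sml_card_perp P _ l hc hP (by omega), sml_card_perp P _ l hc hP (by omega)] at h1 h2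
  obtain ⟨e, he⟩ : ∃ e, 2 * k = l + e := ⟨2 * k - l, by omega⟩
  rw [show 2 * (k + 1) - l = e + 2 by omega, show 2 * k - l = e by omega] at h1
  rw [show 2 * (k + 1 + 1) - l = e + 4 by omega, show 2 * (k + 1) - l = e + 2 by omega] at h2
  rw [show 2 * (k + 1) - l - 1 = e + 1 by omega]
  have hq : 1 ≤ Fintype.card F := Fintype.card_pos
  have hq2 : 1 ≤ Fintype.card F ^ 2 := Nat.one_le_pow _ _ hq
  generalize Fintype.card F = q at *
  zify [hq, hq2] at *
  linear_combination h2 - h0 - q * h1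

lemma sml_C_top (l : ℕ) :
    Nat.card {A : Fin 3 → Polynomial F // SmlCop A ∧ SmlHt l A ∧ True} =
      if l = 0 then Fintype.card F ^ 3 - 1
      else Fintype.card F ^ (3 * l - 2) *
        ((Fintype.card F ^ 3 - 1) * (Fintype.card F ^ 2 - 1)) := by
  have hq : 1 ≤ Fintype.card F := Fintype.card_pos
  have hq2 : 1 ≤ Fintype.card F ^ 2 := Nat.one_le_pow _ _ hq
  have hq3 : 1 ≤ Fintype.card F ^ 3 := Nat.one_le_pow _ _ hq
  rcases l with _ | k
  · have h0 := sml_T_sum (F := F) (fun _ => True) (by simp) 0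
    have h1 := sml_T_add (F := F) (fun _ => True) 0
    rw [sml_card_top, sml_card_top] at h1
    rw [Finset.sum_range_one] at h0
    rw [pow_zero, one_mul] at h0
    rw [if_pos rfl]
    simp only [Nat.sub_zero, mul_zero, pow_zero, zero_add, mul_one] at h0 h1
    omega
  · have h0 := sml_T_succ (F := F) (fun _ => True) (by simp) k
    have h1 := sml_T_add (F := F) (fun _ => True) k
    have h2 := sml_T_add (F := F) (fun _ => True) (k + 1)
    rw [sml_card_top, sml_card_top] at h1 h2
    rw [if_neg (by omega), show 3 * (k + 1) - 2 = 3 * k + 1 by omega]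
    generalize Fintype.card F = q at *
    zify [hq, hq2, hq3] at *
    linear_combination h2 - h0 - q * h1

end

/-- `|S(m,l)|` for `m > 2l ≥ 0`: the number of coprime triples `(A₁, A₂, A₃)` of polynomials
over `𝔽_q` with maximal degree `m` such that `x₁A₁ + x₂A₂ + x₃A₃ = 0` has a solution of height
`l` (i.e. a coprime polynomial solution of maximal degree `l`) is
`q^{2(m+l)-3}(q³-1)(q²-1)²` if `l ≥ 1`, and `q^{2m-1}(q³-1)(q²-1)` if `l = 0`. -/
theorem card_Sml {F : Type*} [Field F] [Fintype F] (q m l : ℕ)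
    (hq : Fintype.card F = q) (hml : 2 * l < m) :
    Nat.card {A : Fin 3 → Polynomial F //
      (∀ d : Polynomial F, (∀ i, d ∣ A i) → IsUnit d) ∧
      (Finset.univ.sup fun i => (A i).degree) = (m : WithBot ℕ) ∧
      ∃ P : Fin 3 → Polynomial F,
        (∀ d : Polynomial F, (∀ i, d ∣ P i) → IsUnit d) ∧
        (Finset.univ.sup fun i => (P i).degree) = (l : WithBot ℕ) ∧
        ∑ i, P i * A i = 0} =
      if l = 0 then q ^ (2 * m - 1) * ((q ^ 3 - 1) * (q ^ 2 - 1))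
      else q ^ (2 * (m + l) - 3) * ((q ^ 3 - 1) * (q ^ 2 - 1) ^ 2) := by
  subst hq
  have hd := sml_double (F := F) m l hml
  have hfin : Finite {P : Fin 3 → Polynomial F // SmlCop P ∧ SmlHt l P ∧ True} :=
    (smlHt_finite l).subset fun _ h => h.2.1
  have hfin2 : ∀ P : {P : Fin 3 → Polynomial F // SmlCop P ∧ SmlHt l P ∧ True},
      Finite {A : Fin 3 → Polynomial F // SmlCop A ∧ SmlHt m A ∧ ∑ i, P.1 i * A i = 0} :=
    fun P => (smlHt_finite m).subset fun _ h => h.2.1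
  have := Fintype.ofFinite {P : Fin 3 → Polynomial F // SmlCop P ∧ SmlHt l P ∧ True}
  rw [Nat.card_sigma, Finset.sum_congr rfl
    (fun P _ => sml_C_perp P.1 m l hml P.2.1 P.2.2.1), Finset.sum_const, Finset.card_univ,
    ← Nat.card_eq_fintype_card (α := {P : Fin 3 → Polynomial F // SmlCop P ∧ SmlHt l P ∧ True}),
    sml_C_top, smul_eq_mul] at hd
  have hq : 1 < Fintype.card F := Fintype.one_lt_card
  refine Nat.eq_of_mul_eq_mul_right (Nat.sub_pos_of_lt hq) (Eq.trans hd ?_)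
  split_ifs with h
  · subst h
    rw [Nat.sub_zero]
    ring
  · rw [show 2 * (m + l) - 3 = (3 * l - 2) + (2 * m - l - 1) by omega, pow_add]
    ring
end

section
/- Let q be a prime power and m = 2l > 0. Then the number of coprime triples (A_1,A_2,A_3) of polynomials with max degree m whose orthogonal equation x_1A_1 + x_2A_2 + x_3A_3 = 0 has a solution of height l satisfies |S(m,l)| = |S(m)|·(q-1)/q. -/
open Polynomial

/-- `S(m)`: coprime triples of polynomials with maximal degree `m`. -/
def Smax (F : Type*) [Field F] (m : ℕ) : Set (Fin 3 → Polynomial F) :=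
  {A | (∀ d : Polynomial F, (∀ i, d ∣ A i) → IsUnit d) ∧
    (Finset.univ.sup fun i => (A i).degree) = (m : WithBot ℕ)}

/-- `S(m,l)`: triples in `S(m)` such that `x₁A₁ + x₂A₂ + x₃A₃ = 0` has a solution of
height exactly `l`. -/
def Sml (F : Type*) [Field F] (m l : ℕ) : Set (Fin 3 → Polynomial F) :=
  {A ∈ Smax F m | ∃ P : Fin 3 → Polynomial F,
    (∀ d : Polynomial F, (∀ i, d ∣ P i) → IsUnit d) ∧
    (Finset.univ.sup fun i => (P i).degree) = (l : WithBot ℕ) ∧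
    ∑ i, P i * A i = 0}

namespace CardSml

variable {F : Type*} [Field F]

/-- primitive vectors -/
def Prim (v : Fin 3 → F[X]) : Prop := ∀ d : F[X], (∀ i, d ∣ v i) → IsUnit d

/-- height -/
noncomputable def H (v : Fin 3 → F[X]) : WithBot ℕ := Finset.univ.sup fun i => (v i).degree

/-- orthogonality -/
def Orth (P v : Fin 3 → F[X]) : Prop := ∑ i, P i * v i = 0

/-- vectors of height less than `n` orthogonal to `P` -/
def Lt (P : Fin 3 → F[X]) (n : ℕ) : Set (Fin 3 → F[X]) :=
  {v | (∀ i, v i ∈ degreeLT F n) ∧ Orth P v}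

/-- vectors of height `n` orthogonal to `P` -/
def V (P : Fin 3 → F[X]) (n : ℕ) : Set (Fin 3 → F[X]) :=
  {v | H v = n ∧ Orth P v}

/-- primitive vectors of height `n` orthogonal to `P` -/
def Pr (P : Fin 3 → F[X]) (n : ℕ) : Set (Fin 3 → F[X]) :=
  {v | Prim v ∧ H v = n ∧ Orth P v}

lemma H_lt_iff (v : Fin 3 → F[X]) (n : ℕ) : H v < n ↔ ∀ i, v i ∈ degreeLT F n := by
  unfold H
  rw [Finset.sup_lt_iff (α := WithBot ℕ) (a := (n : WithBot ℕ)) (WithBot.bot_lt_coe n)]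
  simp [mem_degreeLT]

lemma H_eq_iff (v : Fin 3 → F[X]) (n : ℕ) : H v = n ↔ H v < (n + 1 : ℕ) ∧ ¬ H v < n := by
  generalize H v = x
  cases x with
  | bot => simp [WithBot.bot_lt_coe]
  | coe a =>
    simp only [WithBot.coe_lt_coe, WithBot.coe_inj, Nat.cast_withBot]
    omega

lemma degree_le_H (v : Fin 3 → F[X]) (i) : (v i).degree ≤ H v :=
  Finset.le_sup (f := fun i => (v i).degree) (Finset.mem_univ i)

lemma H_smul (g : F[X]) (v : Fin 3 → F[X]) : H (fun i => g * v i) = g.degree + H v := by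
  unfold H
  have h : (Finset.univ : Finset (Fin 3)) = {0, 1, 2} := rfl
  simp only [h, Finset.sup_insert, Finset.sup_singleton, degree_mul]
  rw [max_add_add_left, max_add_add_left]

lemma exists_degree_eq_H (v : Fin 3 → F[X]) : ∃ i, (v i).degree = H v := by
  obtain ⟨i, _, h⟩ := Finset.exists_mem_eq_sup Finset.univ Finset.univ_nonempty
    (fun i => (v i).degree)
  exact ⟨i, h.symm⟩

lemma H_ne_bot {v : Fin 3 → F[X]} (h : v ≠ 0) : ∃ n : ℕ, H v = n := by
  obtain ⟨i, hi⟩ : ∃ i, v i ≠ 0 := by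
    by_contra hc
    push Not at hc
    exact h (funext hc)
  have h1 := degree_le_H v i
  obtain ⟨j, hj⟩ := exists_degree_eq_H v
  rw [← hj] at h1 ⊢
  have : v j ≠ 0 := by
    intro h0
    rw [h0, degree_zero, le_bot_iff, degree_eq_bot] at h1
    exact hi h1
  exact ⟨_, degree_eq_natDegree this⟩

/-- every vector decomposes -/
lemma decomp (v : Fin 3 → F[X]) (hv : v ≠ 0) :
    ∃ (g : F[X]) (w a : Fin 3 → F[X]), g.Monic ∧ (∀ i, v i = g * w i) ∧ ∑ i, a i * w i = 1 := by
  obtain ⟨g, hg⟩ := (IsPrincipalIdealRing.principal (Ideal.span (Set.range v)))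
  have hdvd : ∀ i, g ∣ v i := fun i => by
    have : v i ∈ Ideal.span (Set.range v) := Ideal.subset_span ⟨i, rfl⟩
    rw [hg] at this
    exact Ideal.mem_span_singleton.1 this
  have hmem : g ∈ Ideal.span (Set.range v) := by
    rw [hg]; exact Ideal.mem_span_singleton_self g
  obtain ⟨a, ha⟩ := (Ideal.mem_span_range_iff_exists_fun).1 hmem
  choose w hw using hdvd
  have hg0 : g ≠ 0 := by
    rintro rfl
    exact hv (funext fun i => by simp [hw i])
  have hlc : g.leadingCoeff ≠ 0 := leadingCoeff_ne_zero.2 hg0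
  have hC : C g.leadingCoeff⁻¹ * C g.leadingCoeff = (1 : F[X]) := by
    rw [← C_mul, inv_mul_cancel₀ hlc, C_1]
  refine ⟨g * C g.leadingCoeff⁻¹, fun i => C g.leadingCoeff * w i,
    fun i => C g.leadingCoeff⁻¹ * a i, monic_mul_leadingCoeff_inv hg0, fun i => ?_, ?_⟩
  · rw [hw i]; linear_combination (-g * w i) * hC
  · apply mul_left_cancel₀ hg0
    have : ∑ i, a i * v i = g := ha
    simp only [Fin.sum_univ_three, hw] at this ⊢
    linear_combination g * (a 0 * w 0 + a 1 * w 1 + a 2 * w 2) * hC + this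

lemma prim_of_bezout {w a : Fin 3 → F[X]} (h : ∑ i, a i * w i = 1) : Prim w := by
  intro d hd
  apply isUnit_of_dvd_one
  rw [← h]
  exact Finset.dvd_sum fun i _ => Dvd.dvd.mul_left (hd i) _

lemma Prim.ne_zero {v : Fin 3 → F[X]} (h : Prim v) : v ≠ 0 := by
  rintro rfl
  exact not_isUnit_zero (h 0 (by simp))

lemma Prim.bezout {v : Fin 3 → F[X]} (h : Prim v) : ∃ a : Fin 3 → F[X], ∑ i, a i * v i = 1 := by
  obtain ⟨g, w, a, hg, hv, ha⟩ := decomp v h.ne_zero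
  have h1 : g = 1 := hg.eq_one_of_isUnit (h g fun i => ⟨w i, hv i⟩)
  refine ⟨a, ?_⟩
  simpa [hv, h1] using ha

lemma decomp_dvd {g g' : F[X]} {w w' : Fin 3 → F[X]}
    (hw : Prim w) (h : ∀ i, g * w i = g' * w' i) : g' ∣ g := by
  obtain ⟨a, ha⟩ := hw.bezout
  refine ⟨∑ i, a i * w' i, ?_⟩
  simp only [Fin.sum_univ_three] at *
  linear_combination -g * ha + a 0 * h 0 + a 1 * h 1 + a 2 * h 2

lemma decomp_unique {g g' : F[X]} {w w' : Fin 3 → F[X]} (hg : g.Monic) (hg' : g'.Monic)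
    (hw : Prim w) (hw' : Prim w') (h : ∀ i, g * w i = g' * w' i) : g = g' ∧ w = w' := by
  have h1 : g = g' := eq_of_monic_of_associated hg hg'
    (associated_of_dvd_dvd (decomp_dvd hw' fun i => (h i).symm) (decomp_dvd hw h))
  subst h1
  exact ⟨rfl, funext fun i => mul_left_cancel₀ hg.ne_zero (h i)⟩

lemma parallel {A N : Fin 3 → F[X]} (hA : Prim A) (h : ∀ i j, A i * N j = A j * N i) :
    ∃ t, ∀ j, N j = t * A j := by
  obtain ⟨a, ha⟩ := hA.bezout
  refine ⟨∑ i, a i * N i, fun j => ?_⟩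
  simp only [Fin.sum_univ_three] at *
  linear_combination -N j * ha + a 0 * h 0 j + a 1 * h 1 j + a 2 * h 2 j

/-- two short primitive vectors are proportional -/
lemma proportional {A P Q : Fin 3 → F[X]} {m p r : ℕ} (hA : Prim A) (hAm : H A = m)
    (hP : Prim P) (hQ : Prim Q) (hPp : H P = p) (hQr : H Q = r) (hpr : p + r < m)
    (oP : Orth P A) (oQ : Orth Q A) : ∃ u : F, u ≠ 0 ∧ ∀ j, Q j = C u * P j := by
  have key : ∀ i j, P i * Q j - P j * Q i = 0 := by
    simp only [Orth, Fin.sum_univ_three] at oP oQ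
    set N : Fin 3 → F[X] := ![P 1 * Q 2 - P 2 * Q 1, P 2 * Q 0 - P 0 * Q 2, P 0 * Q 1 - P 1 * Q 0]
      with hN
    have hdeg : ∀ i j, (P i * Q j - P j * Q i).degree < (m : WithBot ℕ) := by
      have h1 : ∀ i j, (P i * Q j).degree < (m : WithBot ℕ) := by
        intro i j
        rw [degree_mul]
        calc _ ≤ H P + H Q := add_le_add (degree_le_H P i) (degree_le_H Q j)
          _ = ((p + r : ℕ) : WithBot ℕ) := by rw [hPp, hQr]; push_cast; rfl
          _ < m := by exact_mod_cast hpr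
      intro i j
      exact lt_of_le_of_lt (degree_sub_le _ _) (max_lt (h1 i j) (h1 j i))
    obtain ⟨t, ht⟩ := parallel (A := A) (N := N) hA (by
      intro i j
      fin_cases i <;> fin_cases j <;> simp [hN]
      · linear_combination P 2 * oQ - Q 2 * oP
      · linear_combination Q 1 * oP - P 1 * oQ
      · linear_combination Q 2 * oP - P 2 * oQ
      · linear_combination P 0 * oQ - Q 0 * oP
      · linear_combination P 1 * oQ - Q 1 * oP
      · linear_combination Q 0 * oP - P 0 * oQ)
    have hNdeg : ∀ i, (N i).degree < (m : WithBot ℕ) := by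
      intro i
      fin_cases i
      · exact hdeg 1 2
      · exact hdeg 2 0
      · exact hdeg 0 1
    have ht0 : t = 0 := by
      by_contra h0
      obtain ⟨k, hk⟩ := exists_degree_eq_H A
      have h2 := hNdeg k
      rw [ht k, degree_mul, hk, hAm, degree_eq_natDegree h0] at h2
      have : t.natDegree + m < m := by exact_mod_cast h2
      omega
    have hN0 : ∀ i, N i = 0 := fun i => by rw [ht i, ht0, zero_mul]
    have a0 : P 1 * Q 2 - P 2 * Q 1 = 0 := hN0 0
    have a1 : P 2 * Q 0 - P 0 * Q 2 = 0 := hN0 1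
    have a2 : P 0 * Q 1 - P 1 * Q 0 = 0 := hN0 2
    intro i j
    fin_cases i <;> fin_cases j <;> simp
    · linear_combination a2
    · linear_combination -a1
    · linear_combination -a2
    · linear_combination a0
    · linear_combination a1
    · linear_combination -a0
  obtain ⟨t, ht⟩ := parallel (A := P) (N := Q) hP (fun i j => sub_eq_zero.1 (key i j))
  have hu : IsUnit t := hQ t fun i => ⟨P i, ht i⟩
  obtain ⟨u, hu, rfl⟩ := Polynomial.isUnit_iff.1 hu
  exact ⟨u, by rintro rfl; exact hu.ne_zero C_0, ht⟩

/-- linear map attached to `P` -/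
noncomputable def Phi (P : Fin 3 → F[X]) (n : ℕ) : (Fin 3 → degreeLT F n) →ₗ[F] F[X] where
  toFun v := ∑ i, P i * (v i : F[X])
  map_add' v w := by simp [mul_add, Finset.sum_add_distrib]
  map_smul' c v := by simp [Finset.smul_sum]

lemma Phi_apply (P : Fin 3 → F[X]) (n : ℕ) (v) : Phi P n v = ∑ i, P i * (v i : F[X]) := rfl

instance (n : ℕ) : Module.Finite F (degreeLT F n) :=
  Module.Finite.equiv (degreeLTEquiv F n).symm

lemma finrank_degreeLT (n : ℕ) : Module.finrank F (degreeLT F n) = n := by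
  rw [(degreeLTEquiv F n).finrank_eq]; simp

lemma Lt_eq_image (P : Fin 3 → F[X]) (n : ℕ) :
    Lt P n = (fun (v : Fin 3 → degreeLT F n) i => (v i : F[X])) '' (LinearMap.ker (Phi P n)) := by
  ext v
  constructor
  · rintro ⟨h1, h2⟩
    exact ⟨fun i => ⟨v i, h1 i⟩, h2, rfl⟩
  · rintro ⟨w, hw, rfl⟩
    exact ⟨fun i => (w i).2, hw⟩

lemma ker_range (P : Fin 3 → F[X]) (n : ℕ) :
    Module.finrank F (LinearMap.range (Phi P n)) + Module.finrank F (LinearMap.ker (Phi P n))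
      = 3 * n := by
  rw [LinearMap.finrank_range_add_finrank_ker, Module.finrank_pi_fintype]
  simp [finrank_degreeLT]

lemma range_le (P : Fin 3 → F[X]) (n l : ℕ) (hP : H P = l) :
    LinearMap.range (Phi P n) ≤ degreeLT F (n + l) := by
  rintro _ ⟨v, rfl⟩
  rw [Phi_apply]
  refine Submodule.sum_mem _ fun i _ => ?_
  rw [mem_degreeLT, degree_mul]
  by_cases h0 : (v i : F[X]) = 0
  · rw [h0]; simp [WithBot.bot_lt_coe]
  have h1 := mem_degreeLT.1 (v i).2
  have h2 := degree_le_H P i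
  rw [hP] at h2
  by_cases h3 : P i = 0
  · rw [h3]; simp [WithBot.bot_lt_coe]
  rw [degree_eq_natDegree h0] at h1 ⊢
  rw [degree_eq_natDegree h3] at h2 ⊢
  norm_cast at *
  omega

lemma range_eq (P : Fin 3 → F[X]) (n l : ℕ) (hp : Prim P) (hP : H P = l) (hln : l ≤ n) :
    LinearMap.range (Phi P n) = degreeLT F (n + l) := by
  apply le_antisymm (range_le P n l hP)
  intro f hf
  obtain ⟨a, ha⟩ := hp.bezout
  obtain ⟨k, hk⟩ := exists_degree_eq_H P
  rw [hP] at hk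
  have hk0 : P k ≠ 0 := by
    intro h; rw [h, degree_zero] at hk; exact absurd hk (WithBot.bot_ne_coe)
  -- reduce the other two modulo `P k`
  let b : Fin 3 → F[X] := fun i => (f * a i) % P k
  have hb : ∀ i, b i ∈ degreeLT F n := fun i => by
    rw [mem_degreeLT]
    refine (EuclideanDomain.mod_lt _ hk0).trans_le ?_
    rw [hk]; exact_mod_cast hln
  -- the sum over `i ≠ k`
  have hd : P k ∣ f - ∑ i, P i * (if i = k then 0 else b i) := by
    have e : f - ∑ i, P i * (if i = k then 0 else b i)
        = ∑ i, P i * (f * a i - if i = k then 0 else b i) := by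
      simp only [mul_sub, Finset.sum_sub_distrib]
      congr 1
      simp only [Fin.sum_univ_three] at *
      linear_combination -f * ha
    rw [e]
    refine Finset.dvd_sum fun i _ => ?_
    split_ifs with hik
    · subst hik; exact Dvd.intro _ rfl
    · refine Dvd.dvd.mul_left ?_ _
      exact ⟨f * a i / P k, by linear_combination -EuclideanDomain.div_add_mod (f * a i) (P k)⟩
  obtain ⟨c, hc⟩ := hd
  have hc' : c ∈ degreeLT F n := by
    have hmem : P k * c ∈ degreeLT F (n + l) := by
      rw [← hc]
      refine Submodule.sub_mem _ hf ?_
      refine range_le P n l hP ⟨fun i => ⟨if i = k then 0 else b i, ?_⟩, ?_⟩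
      · split_ifs
        · exact Submodule.zero_mem _
        · exact hb i
      · rw [Phi_apply]
    rw [mem_degreeLT] at hmem ⊢
    by_cases h0 : c = 0
    · rw [h0]; simp [WithBot.bot_lt_coe]
    rw [degree_mul, hk, degree_eq_natDegree h0] at hmem
    rw [degree_eq_natDegree h0]
    norm_cast at *
    omega
  refine ⟨fun i => ⟨if i = k then c else b i, ?_⟩, ?_⟩
  · split_ifs
    · exact hc'
    · exact hb i
  · rw [Phi_apply]
    have : ∑ i, P i * (if i = k then c else b i)
        = ∑ i, P i * (if i = k then 0 else b i) + P k * c := by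
      fin_cases k <;> simp [Fin.sum_univ_three] <;> ring
    simp only [this, ← hc]
    ring

variable [Fintype F]

lemma Lt_finite (P : Fin 3 → F[X]) (n : ℕ) : (Lt P n).Finite := by
  rw [Lt_eq_image]
  have : Finite (degreeLT F n) := Module.finite_of_finite F
  exact Set.Finite.image _ (Set.toFinite _)

lemma Lt_ncard (P : Fin 3 → F[X]) (n : ℕ) :
    (Lt P n).ncard = Fintype.card F ^ Module.finrank F (LinearMap.ker (Phi P n)) := by
  rw [Lt_eq_image, Set.ncard_image_of_injective]
  · rw [← Nat.card_coe_set_eq, ← Nat.card_eq_fintype_card]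
    exact Module.natCard_eq_pow_finrank (K := F) (V := LinearMap.ker (Phi P n))
  · intro v w h
    funext i
    exact Subtype.ext (congrFun h i)

lemma Lt_card (P : Fin 3 → F[X]) (n l : ℕ) (hp : Prim P) (hP : H P = l) (hln : l ≤ n) :
    (Lt P n).ncard * Fintype.card F ^ (n + l) = Fintype.card F ^ (3 * n) := by
  have h := ker_range P n
  rw [range_eq P n l hp hP hln, finrank_degreeLT] at h
  rw [Lt_ncard, ← pow_add, ← h, add_comm]

lemma Lt_zero_card (n : ℕ) :
    (Lt (0 : Fin 3 → F[X]) n).ncard = Fintype.card F ^ (3 * n) := by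
  have h := ker_range (0 : Fin 3 → F[X]) n
  have h0 : Phi (0 : Fin 3 → F[X]) n = 0 :=
    LinearMap.ext fun v => by simp [Phi_apply]
  rw [Lt_ncard, ← h, h0, LinearMap.range_zero, finrank_bot, zero_add]

lemma V_eq (P : Fin 3 → F[X]) (n : ℕ) : V P n = Lt P (n + 1) \ Lt P n := by
  ext v
  simp only [V, Lt, Set.mem_ofPred_eq, Set.mem_sdiff, H_eq_iff, ← H_lt_iff]
  tauto

lemma V_finite (P : Fin 3 → F[X]) (n : ℕ) : (V P n).Finite := by
  rw [V_eq]; exact (Lt_finite P _).sdiff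

lemma Pr_subset (P : Fin 3 → F[X]) (n : ℕ) : Pr P n ⊆ V P n := fun _ h => h.2

lemma Pr_finite (P : Fin 3 → F[X]) (n : ℕ) : (Pr P n).Finite :=
  (V_finite P n).subset (Pr_subset P n)

lemma V_card (P : Fin 3 → F[X]) (n : ℕ) :
    (V P n).ncard + (Lt P n).ncard = (Lt P (n + 1)).ncard := by
  rw [V_eq]
  refine Set.ncard_sdiff_add_ncard_of_subset ?_ (Lt_finite P _)
  intro v hv
  exact ⟨fun i => degreeLT_mono (Nat.le_succ n) (hv.1 i), hv.2⟩

/-- decomposed vectors -/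
def D (P : Fin 3 → F[X]) (n : ℕ) : Set (F[X] × (Fin 3 → F[X])) :=
  {x | x.1.Monic ∧ Prim x.2 ∧ x.1.degree + H x.2 = n ∧ Orth P x.2}

lemma orth_smul {P w : Fin 3 → F[X]} {g : F[X]} (hg : g ≠ 0) :
    Orth P (fun i => g * w i) ↔ Orth P w := by
  have : ∑ i, P i * (g * w i) = g * ∑ i, P i * w i := by
    rw [Finset.mul_sum]; exact Finset.sum_congr rfl fun i _ => by ring
  simp only [Orth, this, mul_eq_zero, hg, false_or]

lemma D_card (P : Fin 3 → F[X]) (n : ℕ) : (D P n).ncard = (V P n).ncard := by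
  refine Set.ncard_congr (fun x _ => fun i => x.1 * x.2 i) ?_ ?_ ?_
  · rintro ⟨g, w⟩ ⟨h1, h2, h3, h4⟩
    exact ⟨by rw [H_smul]; exact h3, (orth_smul h1.ne_zero).2 h4⟩
  · rintro ⟨g, w⟩ ⟨g', w'⟩ ⟨h1, h2, h3, h4⟩ ⟨h1', h2', h3', h4'⟩ h
    obtain ⟨e1, e2⟩ := decomp_unique h1 h1' h2 h2' (fun i => congrFun h i)
    exact Prod.ext e1 e2
  · rintro v ⟨h1, h2⟩
    have hv : v ≠ 0 := by
      rintro rfl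
      have h3 : H (0 : Fin 3 → F[X]) = ⊥ := by simp [H]
      rw [h3] at h1
      exact absurd h1 WithBot.bot_ne_coe
    obtain ⟨g, w, a, hg, hw, ha⟩ := decomp v hv
    have e : v = fun i => g * w i := funext hw
    subst e
    exact ⟨(g, w), ⟨hg, prim_of_bezout ha, by rw [← h1, H_smul], (orth_smul hg.ne_zero).1 h2⟩, rfl⟩

lemma deg_step (g : F[X]) (hg : g.Monic) (c : F) :
    (X * g + C c).Monic ∧ (X * g + C c).degree = 1 + g.degree := by
  have hd : (X * g).degree = 1 + g.degree := by rw [degree_mul, degree_X]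
  have hlt : (C c).degree < (X * g).degree := by
    rw [hd, degree_eq_natDegree hg.ne_zero]
    refine lt_of_le_of_lt degree_C_le ?_
    norm_cast
    omega
  refine ⟨(monic_X.mul hg).add_of_left hlt, ?_⟩
  rw [degree_add_eq_left_of_degree_lt hlt, hd]

lemma D_succ_card (P : Fin 3 → F[X]) (n : ℕ) :
    (D P (n + 1)).ncard = (Pr P (n + 1)).ncard + Fintype.card F * (D P n).ncard := by
  have hset : D P (n + 1) = (fun w => ((1 : F[X]), w)) '' Pr P (n + 1) ∪
      (fun y : F × (F[X] × (Fin 3 → F[X])) => (X * y.2.1 + C y.1, y.2.2)) ''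
        (Set.univ ×ˢ D P n) := by
    ext ⟨g, w⟩
    constructor
    · rintro ⟨h1, h2, h3, h4⟩
      simp only at h1 h2 h3 h4
      by_cases hg : g.natDegree = 0
      · have hg1 := h1.natDegree_eq_zero.1 hg
        subst hg1
        left
        refine ⟨w, ⟨h2, ?_, h4⟩, rfl⟩
        simpa using h3
      · right
        have e : X * g.divX + C (g.coeff 0) = g := X_mul_divX_add g
        have hm : g.divX.Monic := by
          unfold Monic
          rw [leadingCoeff, coeff_divX, natDegree_divX_eq_natDegree_tsub_one,
            Nat.sub_add_cancel (Nat.pos_of_ne_zero hg)]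
          exact h1
        refine ⟨(g.coeff 0, (g.divX, w)), ⟨trivial, hm, h2, ?_, h4⟩, by simp only [e]⟩
        obtain ⟨k, hk⟩ := H_ne_bot h2.ne_zero
        have e2 := (deg_step g.divX hm (g.coeff 0)).2
        rw [e] at e2
        simp only
        rw [e2, hk, degree_eq_natDegree hm.ne_zero] at h3
        rw [hk, degree_eq_natDegree hm.ne_zero]
        norm_cast at *
        omega
    · rintro (⟨w', ⟨h1, h2, h3⟩, h⟩ | ⟨⟨c, g', w'⟩, ⟨-, h1, h2, h3, h4⟩, h⟩)
      · simp only [Prod.mk.injEq] at h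
        obtain ⟨rfl, rfl⟩ := h
        exact ⟨monic_one, h1, by simpa using h2, h3⟩
      · simp only [Prod.mk.injEq] at h h1 h2 h3 h4
        obtain ⟨rfl, rfl⟩ := h
        obtain ⟨s1, s2⟩ := deg_step g' h1 c
        refine ⟨s1, h2, ?_, h4⟩
        simp only
        rw [s2, add_assoc, h3]
        push_cast
        rw [add_comm]
  have hinj : Set.InjOn (fun y : F × (F[X] × (Fin 3 → F[X])) => (X * y.2.1 + C y.1, y.2.2))
      (Set.univ ×ˢ D P n) := by
    rintro ⟨c, g, w⟩ - ⟨c', g', w'⟩ - h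
    simp only [Prod.mk.injEq] at h
    obtain ⟨h1, rfl⟩ := h
    have hc : c = c' := by simpa using congrArg (fun p => p.coeff 0) h1
    subst hc
    have : g = g' := mul_left_cancel₀ X_ne_zero (add_right_cancel h1)
    rw [this]
  have hDfin : (D P n).Finite := by
    by_contra hinf
    have hinf : (D P n).Infinite := hinf
    have hi : Set.InjOn (fun (x : F[X] × (Fin 3 → F[X])) => (fun i => x.1 * x.2 i)) (D P n) := by
      rintro ⟨g, w⟩ ⟨h1, h2, h3, h4⟩ ⟨g', w'⟩ ⟨h1', h2', h3', h4'⟩ h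
      obtain ⟨e1, e2⟩ := decomp_unique h1 h1' h2 h2' (fun i => congrFun h i)
      exact Prod.ext e1 e2
    refine (hinf.image hi) ((V_finite P n).subset ?_)
    rintro _ ⟨⟨g, w⟩, ⟨h1, h2, h3, h4⟩, rfl⟩
    exact ⟨by rw [H_smul]; exact h3, (orth_smul h1.ne_zero).2 h4⟩
  rw [hset, Set.ncard_union_eq ?_ ((Pr_finite P _).image _)
    ((Set.finite_univ.prod hDfin).image _)]
  · rw [Set.ncard_image_of_injective _ (fun a b h => (Prod.mk.inj h).2),
      hinj.ncard_image, Set.ncard_prod, Set.ncard_univ, Nat.card_eq_fintype_card]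
  · rw [Set.disjoint_left]
    rintro _ ⟨w, -, rfl⟩ ⟨⟨c, g, w'⟩, ⟨-, h1, -⟩, h⟩
    simp only [Prod.mk.injEq] at h h1
    have e := (deg_step g h1 c).2
    rw [h.1, degree_one, degree_eq_natDegree h1.ne_zero] at e
    norm_cast at e
    omega

lemma V_succ_card (P : Fin 3 → F[X]) (n : ℕ) :
    (V P (n + 1)).ncard = (Pr P (n + 1)).ncard + Fintype.card F * (V P n).ncard := by
  rw [← D_card, ← D_card, D_succ_card]

lemma S_zero (F : Type*) [Field F] [Fintype F] :
    ((Pr (0 : Fin 3 → F[X]) 0).ncard : ℚ) = (Fintype.card F : ℚ) ^ 3 - 1 := by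
  have h : Pr (0 : Fin 3 → F[X]) 0 = V 0 0 := by
    refine Set.Subset.antisymm (Pr_subset _ _) ?_
    rintro v ⟨h1, h2⟩
    refine ⟨fun d hd => ?_, h1, h2⟩
    obtain ⟨i, hi⟩ := exists_degree_eq_H v
    rw [h1] at hi
    exact isUnit_of_dvd_unit (hd i) (isUnit_iff_degree_eq_zero.2 hi)
  have e := V_card (0 : Fin 3 → F[X]) 0
  rw [Lt_zero_card, Lt_zero_card, ← h] at e
  have e' : ((Pr (0 : Fin 3 → F[X]) 0).ncard : ℚ) + 1 = (Fintype.card F : ℚ) ^ 3 := by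
    exact_mod_cast e
  linarith

lemma S_succ (F : Type*) [Field F] [Fintype F] (n : ℕ) :
    ((Pr (0 : Fin 3 → F[X]) (n + 1)).ncard : ℚ) =
      (Fintype.card F : ℚ) ^ (3 * n + 1) * ((Fintype.card F : ℚ) ^ 3 - 1)
        * ((Fintype.card F : ℚ) ^ 2 - 1) := by
  have e := V_succ_card (0 : Fin 3 → F[X]) n
  have e1 := V_card (0 : Fin 3 → F[X]) n
  have e2 := V_card (0 : Fin 3 → F[X]) (n + 1)
  simp only [Lt_zero_card] at e1 e2
  generalize (Pr (0 : Fin 3 → F[X]) (n + 1)).ncard = p at *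
  generalize (V (0 : Fin 3 → F[X]) (n + 1)).ncard = v1 at *
  generalize (V (0 : Fin 3 → F[X]) n).ncard = v0 at *
  generalize Fintype.card F = q at *
  qify at e e1 e2
  rw [e] at e2
  ring_nf at e1 e2 ⊢
  linear_combination e2 - q * e1

lemma P_card (P : Fin 3 → F[X]) (n l : ℕ) (hp : Prim P) (hP : H P = l) (hln : l ≤ n) :
    ((Pr P (n + 1)).ncard : ℚ) * (Fintype.card F : ℚ) ^ l =
      (Fintype.card F : ℚ) ^ (2 * n + 1) * ((Fintype.card F : ℚ) ^ 2 - 1)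
        * ((Fintype.card F : ℚ) - 1) := by
  have e := V_succ_card P n
  have e1 := V_card P n
  have e2 := V_card P (n + 1)
  have key : ∀ k, l ≤ k → ((Lt P k).ncard : ℚ) * (Fintype.card F : ℚ) ^ l
      = (Fintype.card F : ℚ) ^ (2 * k) := by
    intro k hk
    have h := Lt_card P k l hp hP hk
    qify at h
    have hq : (Fintype.card F : ℚ) ^ k ≠ 0 := pow_ne_zero _ (by exact_mod_cast Fintype.card_ne_zero)
    apply mul_left_cancel₀ hq
    rw [pow_add] at h
    rw [← pow_add]
    calc _ = ((Lt P k).ncard : ℚ) * ((Fintype.card F : ℚ) ^ k * (Fintype.card F : ℚ) ^ l) := by ring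
      _ = _ := by rw [h]; congr 1; ring
  have k0 := key n hln
  have k1 := key (n + 1) (by omega)
  have k2 := key (n + 1 + 1) (by omega)
  generalize (Pr P (n + 1)).ncard = p at *
  generalize (V P (n + 1)).ncard = v1 at *
  generalize (V P n).ncard = v0 at *
  generalize (Lt P n).ncard = a0 at *
  generalize (Lt P (n + 1)).ncard = a1 at *
  generalize (Lt P (n + 1 + 1)).ncard = a2 at *
  generalize Fintype.card F = q at *
  qify at e e1 e2
  rw [e] at e2
  have z : (p : ℚ) * (q : ℚ) ^ l = a2 * (q : ℚ) ^ l - a1 * (q : ℚ) ^ l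
      - q * (a1 * (q : ℚ) ^ l) + q * (a0 * (q : ℚ) ^ l) := by
    linear_combination (q : ℚ) ^ l * e2 - q * (q : ℚ) ^ l * e1
  rw [z, k0, k1, k2]
  ring

/-- existence of a short primitive orthogonal vector -/
lemma minkowski (A : Fin 3 → F[X]) (l : ℕ) (hA : H A = (2 * l : ℕ)) :
    ∃ (P : Fin 3 → F[X]) (k : ℕ), k ≤ l ∧ Prim P ∧ H P = k ∧ Orth P A := by
  have h := ker_range A (l + 1)
  have h1 := Submodule.finrank_mono (range_le A (l + 1) (2 * l) hA)
  rw [finrank_degreeLT] at h1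
  have h2 : LinearMap.ker (Phi A (l + 1)) ≠ ⊥ := by
    intro h0
    rw [h0, finrank_bot] at h
    omega
  obtain ⟨v, hv, hv0⟩ := Submodule.exists_mem_ne_zero_of_ne_bot h2
  have hw0 : (fun i => (v i : F[X])) ≠ 0 := by
    intro h0
    exact hv0 (funext fun i => Subtype.ext (congrFun h0 i))
  obtain ⟨g, w, a, hg, hw, ha⟩ := decomp _ hw0
  have hp := prim_of_bezout ha
  obtain ⟨k, hk⟩ := H_ne_bot hp.ne_zero
  have e : (fun i => (v i : F[X])) = fun i => g * w i := funext hw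
  refine ⟨w, k, ?_, hp, hk, ?_⟩
  · have h3 := (H_lt_iff (fun i => (v i : F[X])) (l + 1)).2 fun i => (v i).2
    rw [e, H_smul, hk, degree_eq_natDegree hg.ne_zero] at h3
    norm_cast at h3
    omega
  · have h4 : Orth A (fun i => (v i : F[X])) := hv
    rw [e, orth_smul hg.ne_zero] at h4
    unfold Orth at *
    rw [← h4]
    exact Finset.sum_congr rfl fun i _ => mul_comm _ _

lemma orth_zero (v : Fin 3 → F[X]) : Orth 0 v := by simp [Orth]

lemma Smax_eq (m : ℕ) : Smax F m = Pr 0 m := by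
  ext v
  exact ⟨fun h => ⟨h.1, h.2, orth_zero v⟩, fun h => ⟨h.1, h.2.1⟩⟩

lemma mem_Sml (m l : ℕ) (A : Fin 3 → F[X]) :
    A ∈ Sml F m l ↔ A ∈ Pr 0 m ∧ ∃ P, Prim P ∧ H P = l ∧ Orth P A := by
  rw [← Smax_eq]; rfl

lemma H_C_smul {P : Fin 3 → F[X]} {u : F} (hu : u ≠ 0) : H (fun i => C u * P i) = H P := by
  rw [H_smul, degree_C hu, zero_add]

lemma Prim.C_smul {P : Fin 3 → F[X]} {u : F} (hu : u ≠ 0) (h : Prim P) :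
    Prim (fun i => C u * P i) := fun d hd => h d fun i => by
  have := (hd i).mul_left (C u⁻¹)
  rwa [← mul_assoc, ← C_mul, inv_mul_cancel₀ hu, C_1, one_mul] at this

lemma orth_C_smul {P A : Fin 3 → F[X]} (u : F) (h : Orth P A) : Orth (fun i => C u * P i) A := by
  unfold Orth at *
  simp only [mul_assoc, ← Finset.mul_sum, h, mul_zero]

open Classical in
/-- primitive vectors of height less than `l` -/
noncomputable def T (F : Type*) [Field F] [Fintype F] (l : ℕ) : Finset (Fin 3 → F[X]) :=
  (Finset.range l).biUnion fun n => (Pr_finite (0 : Fin 3 → F[X]) n).toFinset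

lemma mem_T (l : ℕ) (P : Fin 3 → F[X]) :
    P ∈ T F l ↔ ∃ n, n < l ∧ Prim P ∧ H P = n := by
  simp only [T, Finset.mem_biUnion, Finset.mem_range, Set.Finite.mem_toFinset, Pr]
  exact ⟨fun ⟨n, h, h'⟩ => ⟨n, h, h'.1, h'.2.1⟩, fun ⟨n, h, h'⟩ => ⟨n, h, h'.1, h'.2, orth_zero P⟩⟩

open Classical in
lemma fiber_bad (l : ℕ) (A : Fin 3 → F[X]) (hA : A ∈ Pr 0 (2 * l)) (hA' : A ∉ Sml F (2 * l) l) :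
    ((T F l).filter fun P => Orth P A).card = Fintype.card F - 1 := by
  obtain ⟨P, k, hk, hp, hP, ho⟩ := minkowski A l hA.2.1
  have hkl : k < l := by
    refine lt_of_le_of_ne hk ?_
    rintro rfl
    exact hA' ((mem_Sml _ _ _).2 ⟨hA, P, hp, hP, ho⟩)
  have e : ((T F l).filter fun P => Orth P A) =
      ((Finset.univ : Finset F).erase 0).image fun u => fun i => C u * P i := by
    ext Q
    simp only [Finset.mem_filter, mem_T, Finset.mem_image, Finset.mem_erase, Finset.mem_univ,
      and_true]
    constructor
    · rintro ⟨⟨n, hn, hq, hQ⟩, oq⟩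
      obtain ⟨u, hu, h⟩ := proportional hA.1 hA.2.1 hp hq hP hQ (by omega) ho oq
      exact ⟨u, hu, (funext h).symm⟩
    · rintro ⟨u, hu, rfl⟩
      exact ⟨⟨k, hkl, hp.C_smul hu, by rw [H_C_smul hu, hP]⟩, orth_C_smul u ho⟩
  rw [e, Finset.card_image_of_injective, Finset.card_erase_of_mem (Finset.mem_univ _),
    Finset.card_univ]
  intro u u' h
  obtain ⟨i, hi⟩ : ∃ i, P i ≠ 0 := by
    by_contra hc
    push Not at hc
    exact hp.ne_zero (funext hc)
  exact C_injective (mul_right_cancel₀ hi (congrFun h i))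

open Classical in
lemma fiber_good (l : ℕ) (A : Fin 3 → F[X]) (hA : A ∈ Sml F (2 * l) l) :
    ((T F l).filter fun P => Orth P A).card = 0 := by
  obtain ⟨hA, Q, hq, hQ, oq⟩ := (mem_Sml _ _ _).1 hA
  rw [Finset.card_eq_zero, Finset.filter_eq_empty_iff]
  intro P hP oP
  obtain ⟨n, hn, hp, hP⟩ := (mem_T _ _).1 hP
  obtain ⟨u, hu, h⟩ := proportional hA.1 hA.2.1 hp hq hP hQ (by omega) oP oq
  have e : Q = fun i => C u * P i := funext h
  rw [e, H_C_smul hu, hP] at hQ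
  have : n = l := by exact_mod_cast hQ
  omega

lemma telescoping (Q : ℚ) (hQ : Q ≠ 0) (s : ℕ → ℚ) (h0 : s 0 = Q ^ 3 - 1)
    (hs : ∀ n, s (n + 1) = Q ^ (3 * n + 1) * (Q ^ 3 - 1) * (Q ^ 2 - 1)) (l : ℕ) :
    ∑ n ∈ Finset.range (l + 1), s n / Q ^ n = (Q ^ 3 - 1) * Q ^ (2 * l) := by
  induction l with
  | zero => simp [h0]
  | succ l ih =>
    rw [Finset.sum_range_succ, ih, hs]
    field_simp
    ring

open Classical in
lemma total (l : ℕ) :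
    (∑ P ∈ T F (l + 1),
      ((((Pr_finite (0 : Fin 3 → F[X]) (2 * (l + 1))).toFinset).filter
        fun A => Orth P A).card : ℚ)) * Fintype.card F
      = ((Fintype.card F : ℚ) - 1) * (Pr (0 : Fin 3 → F[X]) (2 * (l + 1))).ncard := by
  have hq : (Fintype.card F : ℚ) ≠ 0 := by exact_mod_cast Fintype.card_ne_zero
  have hT : ∀ n ∈ Finset.range (l + 1), ∀ P ∈ (Pr_finite (0 : Fin 3 → F[X]) n).toFinset,
      ((((Pr_finite (0 : Fin 3 → F[X]) (2 * (l + 1))).toFinset).filter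
        fun A => Orth P A).card : ℚ) = (Fintype.card F : ℚ) ^ (2 * (2 * l + 1) + 1) *
        ((Fintype.card F : ℚ) ^ 2 - 1) * ((Fintype.card F : ℚ) - 1) / (Fintype.card F : ℚ) ^ n := by
    intro n hn P hP
    rw [Finset.mem_range] at hn
    rw [Set.Finite.mem_toFinset] at hP
    rw [eq_div_iff (pow_ne_zero _ hq), ← P_card P (2 * l + 1) n hP.1 hP.2.1 (by omega),
      Set.ncard_eq_toFinset_card _ (Pr_finite P _)]
    congr 3
    ext A
    simp only [Finset.mem_filter, Set.Finite.mem_toFinset]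
    exact ⟨fun h => ⟨h.1.1, h.1.2.1, h.2⟩, fun h => ⟨⟨h.1, h.2.1, orth_zero A⟩, h.2.2⟩⟩
  have hdisj : Set.PairwiseDisjoint (Finset.range (l + 1) : Set ℕ)
      (fun n => (Pr_finite (0 : Fin 3 → F[X]) n).toFinset) := by
    intro a _ b _ hab
    rw [Function.onFun, Finset.disjoint_left]
    intro v hv hv'
    rw [Set.Finite.mem_toFinset] at hv hv'
    apply hab
    have := hv.2.1.symm.trans hv'.2.1
    exact_mod_cast this
  rw [T, Finset.sum_biUnion hdisj, Finset.sum_congr rfl fun n hn => Finset.sum_congr rfl (hT n hn)]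
  have tel := telescoping (Fintype.card F : ℚ) hq
    (fun n => ((Pr (0 : Fin 3 → F[X]) n).ncard : ℚ)) (S_zero F) (S_succ F) l
  have e2 := S_succ F (2 * l + 1)
  simp only [Finset.sum_const, nsmul_eq_mul, ← Set.ncard_eq_toFinset_card]
  have e3 : ∀ n, ((Pr (0 : Fin 3 → F[X]) n).ncard : ℚ) *
      ((Fintype.card F : ℚ) ^ (2 * (2 * l + 1) + 1) *
        ((Fintype.card F : ℚ) ^ 2 - 1) * ((Fintype.card F : ℚ) - 1) / (Fintype.card F : ℚ) ^ n)
      = ((Pr (0 : Fin 3 → F[X]) n).ncard : ℚ) / (Fintype.card F : ℚ) ^ n *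
      ((Fintype.card F : ℚ) ^ (2 * (2 * l + 1) + 1) *
        ((Fintype.card F : ℚ) ^ 2 - 1) * ((Fintype.card F : ℚ) - 1)) := fun n => by ring
  simp only [e3, ← Finset.sum_mul]
  rw [tel, show 2 * (l + 1) = 2 * l + 1 + 1 by ring, e2]
  ring

end CardSml

/-- For `m = 2l > 0`, `|S(m,l)| = |S(m)|·(q-1)/q`. -/
theorem card_Sml_boundary {F : Type*} [Field F] [Fintype F] (q m l : ℕ)
    (hq : Fintype.card F = q) (hm : m = 2 * l) (hl : 0 < l) :
    q * Nat.card (Sml F m l) = (q - 1) * Nat.card (Smax F m) := by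
  classical
  subst hq hm
  obtain ⟨k, rfl⟩ : ∃ k, l = k + 1 := ⟨l - 1, by omega⟩
  have hsub : Sml F (2 * (k + 1)) (k + 1) ⊆ CardSml.Pr 0 (2 * (k + 1)) :=
    fun A hA => ((CardSml.mem_Sml _ _ _).1 hA).1
  have hfin := CardSml.Pr_finite (0 : Fin 3 → F[X]) (2 * (k + 1))
  have htot := CardSml.total (F := F) k
  have hdc := Finset.sum_card_bipartiteAbove_eq_sum_card_bipartiteBelow
    (s := hfin.toFinset) (t := CardSml.T F (k + 1)) (fun A P => CardSml.Orth P A)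
  simp only [Finset.bipartiteAbove, Finset.bipartiteBelow] at hdc
  rw [← Nat.cast_sum, ← hdc] at htot
  have hsum : ∑ A ∈ hfin.toFinset, ((CardSml.T F (k + 1)).filter fun P => CardSml.Orth P A).card
      = (Fintype.card F - 1) *
        (CardSml.Pr 0 (2 * (k + 1)) \ Sml F (2 * (k + 1)) (k + 1)).ncard := by
    have h1 : ∀ A ∈ hfin.toFinset, ((CardSml.T F (k + 1)).filter fun P => CardSml.Orth P A).card
        = if A ∉ Sml F (2 * (k + 1)) (k + 1) then Fintype.card F - 1 else 0 := by
      intro A hA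
      split_ifs with h
      · exact CardSml.fiber_good _ A h
      · exact CardSml.fiber_bad _ A (hfin.mem_toFinset.1 hA) h
    rw [Finset.sum_congr rfl h1, ← Finset.sum_filter, Finset.sum_const, smul_eq_mul, mul_comm,
      Set.ncard_eq_toFinset_card _ hfin.sdiff]
    congr 2
    ext A
    simp
  have hcard := Set.ncard_sdiff_add_ncard_of_subset hsub hfin
  rw [hsum] at htot
  rw [CardSml.Smax_eq, Nat.card_coe_set_eq, Nat.card_coe_set_eq]
  have hq1 : 1 < Fintype.card F := Fintype.one_lt_card
  have hq2 : (Fintype.card F : ℚ) - 1 ≠ 0 := by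
    have : (1 : ℚ) < Fintype.card F := by exact_mod_cast hq1
    linarith
  qify [hq1.le] at hcard ⊢
  rw [Nat.cast_mul, Nat.cast_sub hq1.le, Nat.cast_one, mul_assoc] at htot
  have h3 := mul_left_cancel₀ hq2 htot
  linear_combination (Fintype.card F : ℚ) * hcard - h3
end

section
/- Let q be a prime power and g ≥ 1, ε ∈ {1, 2}. The number of monic cubefree polynomials in F_q[X] of degree 2g + ε equals q^{2g+ε}(1 - q^{-2}). -/
open Polynomial

/-- Cubefree polynomials. -/
def CubeFr {F : Type*} [Field F] (f : Polynomial F) : Prop :=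
  ∀ p : Polynomial F, 0 < p.degree → ¬ p ^ 3 ∣ f

/-- Pairs (a, b), both monic, b cubefree, with a^3 b of degree n. -/
abbrev PairSet (F : Type*) [Field F] (n : ℕ) : Type _ :=
  {x : Polynomial F × Polynomial F // x.1.Monic ∧ x.2.Monic ∧ CubeFr x.2 ∧
    3 * x.1.natDegree + x.2.natDegree = n}

theorem card_monic_deg (F : Type*) [Field F] [Fintype F] (n : ℕ) :
    Finite {f : Polynomial F // f.Monic ∧ f.natDegree = n} ∧
    Nat.card {f : Polynomial F // f.Monic ∧ f.natDegree = n} = Fintype.card F ^ n := by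
  have e : {f : Polynomial F // f.Monic ∧ f.natDegree = n} ≃ (Fin n → F) :=
    (Polynomial.monicEquivDegreeLT n).trans (Polynomial.degreeLTEquiv F n).toEquiv
  refine ⟨Finite.of_equiv _ e.symm, ?_⟩
  rw [Nat.card_congr e]
  simp

theorem dvd_aux {F : Type*} [Field F] {a a' b b' : Polynomial F} (ha : a.Monic)
    (h : a ^ 3 * b = a' ^ 3 * b') (hb' : CubeFr b') : a ∣ a' := by
  classical
  have ha0 := ha.ne_zero
  obtain ⟨u, hu⟩ := EuclideanDomain.gcd_dvd_left a a'
  obtain ⟨v, hv⟩ := EuclideanDomain.gcd_dvd_right a a'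
  have hbez := EuclideanDomain.gcd_eq_gcd_ab a a'
  set d := EuclideanDomain.gcd a a' with hd
  set s := EuclideanDomain.gcdA a a'
  set t := EuclideanDomain.gcdB a a'
  have hd0 : d ≠ 0 := by
    intro h0
    rw [h0, zero_mul] at hu
    exact ha0 hu
  have hco : IsCoprime u v := by
    refine ⟨s, t, mul_left_cancel₀ hd0 ?_⟩
    calc d * (s * u + t * v) = (d * u) * s + (d * v) * t := by ring
      _ = a * s + a' * t := by rw [← hu, ← hv]
      _ = d * 1 := by rw [mul_one, ← hbez]
  have h2 : u ^ 3 * b = v ^ 3 * b' := by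
    apply mul_left_cancel₀ (pow_ne_zero 3 hd0)
    calc d ^ 3 * (u ^ 3 * b) = (d * u) ^ 3 * b := by ring
      _ = (d * v) ^ 3 * b' := by rw [← hu, ← hv, h]
      _ = _ := by ring
  have h3 : u ^ 3 ∣ b' := (hco.pow (m := 3) (n := 3)).dvd_of_dvd_mul_left ⟨b, h2.symm⟩
  have hu0 : u ≠ 0 := by
    rintro rfl
    rw [mul_zero] at hu
    exact ha0 hu
  have hun : IsUnit u := by
    by_contra hnu
    exact hb' u (degree_pos_of_ne_zero_of_nonunit hu0 hnu) h3
  rw [hu]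
  exact hun.mul_right_dvd.2 ⟨v, hv⟩

theorem exists_dec {F : Type*} [Field F] (n : ℕ) : ∀ f : Polynomial F, f.Monic →
    f.natDegree = n → ∃ a b : Polynomial F, a.Monic ∧ b.Monic ∧ CubeFr b ∧ a ^ 3 * b = f := by
  induction n using Nat.strong_induction_on with
  | _ n ih =>
    intro f hf hn
    by_cases hc : CubeFr f
    · exact ⟨1, f, monic_one, hf, hc, by simp⟩
    · unfold CubeFr at hc
      push Not at hc
      obtain ⟨p, hp, hpf⟩ := hc
      have hp0 : p ≠ 0 := by rintro rfl; simp at hp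
      set r := p * C p.leadingCoeff⁻¹ with hr
      have hrm : r.Monic := monic_mul_leadingCoeff_inv hp0
      have hrd : r.natDegree = p.natDegree := natDegree_mul_leadingCoeff_inv p hp0
      have hpd : 0 < p.natDegree := natDegree_pos_iff_degree_pos.2 hp
      have hu : IsUnit (C p.leadingCoeff⁻¹) := by
        rw [isUnit_C]; exact (inv_ne_zero (leadingCoeff_ne_zero.2 hp0)).isUnit
      have hrf : r ^ 3 ∣ f := by
        rw [hr, mul_pow]
        exact (hu.pow 3).mul_right_dvd.2 hpf
      obtain ⟨k, hk⟩ := hrf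
      have hkm : k.Monic := (hrm.pow 3).of_mul_monic_left (hk ▸ hf)
      have hdeg : f.natDegree = 3 * r.natDegree + k.natDegree := by
        rw [hk, (hrm.pow 3).natDegree_mul hkm, hrm.natDegree_pow]
      obtain ⟨a, b, ha, hb, hbc, hab⟩ := ih k.natDegree (by omega) k hkm rfl
      exact ⟨r * a, b, hrm.mul ha, hb, hbc, by rw [hk, ← hab]; ring⟩

theorem pair_bij (F : Type*) [Field F] (n : ℕ) :
    Nonempty (PairSet F n ≃ {f : Polynomial F // f.Monic ∧ f.natDegree = n}) := by
  refine ⟨Equiv.ofBijective (fun x => ⟨x.1.1 ^ 3 * x.1.2, (x.2.1.pow 3).mul x.2.2.1, ?_⟩) ⟨?_, ?_⟩⟩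
  · rw [(x.2.1.pow 3).natDegree_mul x.2.2.1, x.2.1.natDegree_pow]
    exact x.2.2.2.2
  · rintro ⟨⟨a, b⟩, ha, hb, hc, hd⟩ ⟨⟨a', b'⟩, ha', hb', hc', hd'⟩ h
    simp only [Subtype.mk.injEq] at h ha ha' hb hb' hc hc'
    have hE : a = a' := eq_of_monic_of_associated ha ha'
      (associated_of_dvd_dvd (dvd_aux ha h hc') (dvd_aux ha' h.symm hc))
    subst hE
    have hb2 : b = b' := mul_left_cancel₀ (pow_ne_zero 3 ha.ne_zero) h
    subst hb2
    rfl
  · rintro ⟨f, hf, hn⟩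
    obtain ⟨a, b, ha, hb, hc, hab⟩ := exists_dec n f hf hn
    refine ⟨⟨(a, b), ha, hb, hc, ?_⟩, Subtype.ext hab⟩
    rw [← hn, ← hab, (ha.pow 3).natDegree_mul hb, ha.natDegree_pow]

theorem nd_aux {F : Type*} [Field F] {a : Polynomial F} (ha : a.Monic) (c : F) :
    (a * X + C c).natDegree = a.natDegree + 1 ∧ (a * X + C c).Monic := by
  have h1 : (a * X).natDegree = a.natDegree + 1 := natDegree_mul_X ha.ne_zero
  refine ⟨by rw [natDegree_add_C, h1], ?_⟩
  apply (ha.mul monic_X).add_of_left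
  apply lt_of_le_of_lt degree_C_le
  rw [← natDegree_pos_iff_degree_pos]
  omega

theorem rec_bij (F : Type*) [Field F] (n : ℕ) :
    Nonempty (({f : Polynomial F // f.Monic ∧ f.natDegree = n + 3 ∧ CubeFr f} ⊕
      (F × PairSet F n)) ≃ PairSet F (n + 3)) := by
  refine ⟨Equiv.ofBijective (Sum.elim
    (fun f => ⟨(1, f.1), monic_one, f.2.1, f.2.2.2, by simp [f.2.2.1]⟩)
    (fun y => ⟨(y.2.1.1 * X + C y.1, y.2.1.2), (nd_aux y.2.2.1 _).2, y.2.2.2.1, y.2.2.2.2.1, ?_⟩))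
    ⟨?_, ?_⟩⟩
  · have h := y.2.2.2.2.2
    have h2 := (nd_aux y.2.2.1 y.1).1
    dsimp only
    rw [h2]; omega
  · have key : ∀ (a : Polynomial F) (c : F), a.Monic → a * X + C c ≠ 1 := by
      intro a c ha h
      have := (nd_aux ha c).1
      rw [h] at this
      simp at this
    rintro (⟨f, hf⟩ | ⟨c, ⟨⟨a, b⟩, ha⟩⟩) (⟨f', hf'⟩ | ⟨c', ⟨⟨a', b'⟩, ha'⟩⟩) h
    · have h' := congrArg (fun z => z.1.2) h
      change f = f' at h'
      subst h'; rfl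
    · have h' := congrArg (fun z => z.1.1) h
      exact absurd h'.symm (key _ _ ha'.1)
    · have h' := congrArg (fun z => z.1.1) h
      exact absurd h' (key _ _ ha.1)
    · have h1 := congrArg (fun z => z.1.1) h
      have h2 := congrArg (fun z => z.1.2) h
      change a * X + C c = a' * X + C c' at h1
      change b = b' at h2
      have hc : c = c' := by simpa using congrArg (fun z => coeff z 0) h1
      have ha2 : a = a' := by
        rw [hc] at h1
        exact mul_right_cancel₀ X_ne_zero (add_right_cancel h1)
      subst hc; subst ha2; subst h2; rfl
  · rintro ⟨⟨a, b⟩, ha, hb, hc, hd⟩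
    simp only at ha hb hc hd
    by_cases h0 : a.natDegree = 0
    · have h1 : a = 1 := ha.natDegree_eq_zero.1 h0
      subst h1
      exact ⟨Sum.inl ⟨b, hb, by simpa using hd, hc⟩, rfl⟩
    · have hdd : a.divX.natDegree = a.natDegree - 1 := natDegree_divX_eq_natDegree_tsub_one
      have hm : a.divX.Monic := by
        rw [Monic, leadingCoeff, hdd, coeff_divX, Nat.sub_add_cancel (by omega)]
        exact ha
      refine ⟨Sum.inr (a.coeff 0, ⟨(a.divX, b), hm, hb, hc, ?_⟩), ?_⟩
      · dsimp only
        omega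
      · apply Subtype.ext
        change (a.divX * X + C (a.coeff 0), b) = (a, b)
        rw [divX_mul_X_add]

theorem card_aux {F : Type*} [Field F] [Fintype F] (n : ℕ) :
    Nat.card {f : Polynomial F // f.Monic ∧ f.natDegree = n + 3 ∧ CubeFr f} =
      Fintype.card F ^ (n + 3) - Fintype.card F ^ (n + 1) := by
  obtain ⟨e⟩ := rec_bij F n
  obtain ⟨e0⟩ := pair_bij F n
  obtain ⟨e3⟩ := pair_bij F (n + 3)
  obtain ⟨f0, c0⟩ := card_monic_deg F n
  obtain ⟨f3, c3⟩ := card_monic_deg F (n + 3)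
  have : Finite (PairSet F n) := Finite.of_equiv _ e0.symm
  have : Finite {f : Polynomial F // f.Monic ∧ f.natDegree = n + 3 ∧ CubeFr f} :=
    Finite.of_injective (fun f => (⟨f.1, f.2.1, f.2.2.1⟩ :
      {f : Polynomial F // f.Monic ∧ f.natDegree = n + 3}))
      (fun x y h => Subtype.ext (by simpa using h))
  have h := Nat.card_congr (e.trans e3)
  rw [Nat.card_sum, Nat.card_prod, Nat.card_congr e0, c0, c3, Nat.card_eq_fintype_card (α := F),
    ← pow_succ'] at h
  omega

/-- The number of monic cubefree polynomials of degree `2g + ε` over `𝔽_q` (`g ≥ 1`,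
`ε ∈ {1,2}`) equals `q^{2g+ε}(1 - q⁻²) = q^{2g+ε} - q^{2g+ε-2}`. -/
theorem card_monic_cubefree {F : Type*} [Field F] [Fintype F] (q g ε : ℕ)
    (hq : Fintype.card F = q) (hg : 1 ≤ g) (hε : ε = 1 ∨ ε = 2) :
    Nat.card {f : Polynomial F // f.Monic ∧ f.natDegree = 2 * g + ε ∧
      ∀ p : Polynomial F, 0 < p.degree → ¬ p ^ 3 ∣ f} =
      q ^ (2 * g + ε) - q ^ (2 * g + ε - 2) := by
  obtain ⟨n, hn⟩ : ∃ n, 2 * g + ε = n + 3 := ⟨2 * g + ε - 3, by omega⟩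
  rw [hn, ← hq]
  exact card_aux n
end

section
/- Let q be a prime power and fix integers m > 2l ≥ 0. Let N_2(m,l) be the number of ordered triples (A_1, A_2, A_3) of coprime polynomials in F_q[X] with A_1 monic of degree m, deg A_2 < m, deg A_3 < m, such that x_1A_1 + x_2A_2 + x_3A_3 = 0 has a solution of height l in F_q(X)^3. Then N_2(m,l) = (q^2-1)^2 q^{2(m+l)-3} if l > 0 and N_2(m,0) = (q^2-1)q^{2m-1}. -/
open Polynomial

namespace N2

variable {F : Type*} [Field F]

def Cop (A : Fin 3 → F[X]) : Prop := ∀ d : F[X], (∀ i, d ∣ A i) → IsUnit d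

theorem bezout {A : Fin 3 → F[X]} (h : Cop A) : ∃ b : Fin 3 → F[X], ∑ i, b i * A i = 1 := by
  set g := Submodule.IsPrincipal.generator (Ideal.span (Set.range A)) with hg
  have hs : Ideal.span {g} = Ideal.span (Set.range A) := Ideal.span_singleton_generator _
  have hu : IsUnit g := by
    apply h
    intro i
    rw [← Ideal.mem_span_singleton, hs]
    exact Ideal.subset_span ⟨i, rfl⟩
  have h1 : (1 : F[X]) ∈ Ideal.span (Set.range A) := by
    rw [← hs, Ideal.mem_span_singleton]
    exact hu.dvd
  exact Ideal.mem_span_range_iff_exists_fun.1 h1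

theorem exists_gen (A : Fin 3 → F[X]) :
    ∃ g : F[X], (∀ i, g ∣ A i) ∧ ∃ b : Fin 3 → F[X], ∑ i, b i * A i = g := by
  obtain ⟨g, hg⟩ := (IsPrincipalIdealRing.principal (Ideal.span (Set.range A))).principal
  refine ⟨g, ?_, ?_⟩
  · intro i
    rw [← Ideal.mem_span_singleton]
    change A i ∈ Submodule.span F[X] {g}
    rw [← hg]
    exact Ideal.subset_span ⟨i, rfl⟩
  · apply Ideal.mem_span_range_iff_exists_fun.1
    rw [hg]
    exact Submodule.mem_span_singleton_self g

theorem exists_gcd {A : Fin 3 → F[X]} (h : A ≠ 0) :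
    ∃ (d : F[X]) (B : Fin 3 → F[X]), d.Monic ∧ Cop B ∧ A = d • B := by
  obtain ⟨g, hd, b, hb⟩ := exists_gen A
  have hg0 : g ≠ 0 := by
    intro h0
    apply h
    funext i
    have := hd i
    rw [h0] at this
    exact zero_dvd_iff.1 this
  have hm := monic_mul_leadingCoeff_inv hg0
  have hu : IsUnit (Polynomial.C g.leadingCoeff⁻¹) :=
    Polynomial.isUnit_C.2 (IsUnit.mk0 _ (inv_ne_zero (leadingCoeff_ne_zero.2 hg0)))
  have hd' : ∀ i, g * Polynomial.C g.leadingCoeff⁻¹ ∣ A i := fun i => hu.mul_right_dvd.2 (hd i)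
  have hdg : g * Polynomial.C g.leadingCoeff⁻¹ ∣ g := hu.mul_right_dvd.2 dvd_rfl
  have hgd : g ∣ g * Polynomial.C g.leadingCoeff⁻¹ := dvd_mul_right _ _
  generalize g * Polynomial.C g.leadingCoeff⁻¹ = d at *
  choose B hB using hd'
  refine ⟨d, B, hm, ?_, ?_⟩
  · intro e he
    have h2 : d * e ∣ d * 1 := by
      rw [mul_one]
      refine dvd_trans ?_ hgd
      rw [← hb]
      apply Finset.dvd_sum
      intro i _
      rw [hB i]
      exact Dvd.dvd.mul_left (mul_dvd_mul_left _ (he i)) _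
    exact isUnit_of_dvd_one ((mul_dvd_mul_iff_left hm.ne_zero).1 h2)
  · funext i
    exact hB i

theorem gcd_unique {d e : F[X]} {A B : Fin 3 → F[X]} (hd : d.Monic) (he : e.Monic)
    (hA : Cop A) (hB : Cop B) (h : d • A = e • B) : d = e ∧ A = B := by
  have key : ∀ {d e : F[X]} {A B : Fin 3 → F[X]}, Cop A → d • A = e • B → e ∣ d := by
    intro d e A B hA h
    obtain ⟨b, hb⟩ := bezout hA
    have : d = e * ∑ i, b i * B i := by
      calc d = d * ∑ i, b i * A i := by rw [hb, mul_one]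
        _ = ∑ i, b i * (d • A) i := by
          rw [Finset.mul_sum]; apply Finset.sum_congr rfl; intro i _; simp; ring
        _ = _ := by
          rw [h, Finset.mul_sum]; apply Finset.sum_congr rfl; intro i _; simp; ring
    exact ⟨_, this⟩
  have hde : d = e := Polynomial.eq_of_monic_of_associated hd he
    (associated_of_dvd_dvd (key hB h.symm) (key hA h))
  subst hde
  refine ⟨rfl, ?_⟩
  funext i
  have := congrFun h i
  simpa [hd.ne_zero] using this

/-- vectors of formal degree `n` with top coefficients in `E`, orthogonal to `L`. -/
def S (L : Fin 3 → F[X]) (E : Set (Fin 3 → F)) (n : ℕ) : Set (Fin 3 → F[X]) :=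
  {A | (∀ i, (A i).natDegree ≤ n) ∧ (fun i => (A i).coeff n) ∈ E ∧ ∑ i, L i * A i = 0}

def C (L : Fin 3 → F[X]) (E : Set (Fin 3 → F)) (n : ℕ) : Set (Fin 3 → F[X]) :=
  {A | A ∈ S L E n ∧ Cop A}

theorem S_ne_zero {L : Fin 3 → F[X]} {E : Set (Fin 3 → F)} {n : ℕ} (hE : (0 : Fin 3 → F) ∉ E)
    {A : Fin 3 → F[X]} (h : A ∈ S L E n) : A ≠ 0 := by
  rintro rfl
  apply hE
  exact h.2.1

theorem smul_mem_S {L : Fin 3 → F[X]} {E : Set (Fin 3 → F)} {n k : ℕ} {d : F[X]}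
    {A : Fin 3 → F[X]} (hd : d.Monic) (hk : d.natDegree = k) :
    d • A ∈ S L E (k + n) ↔ A ∈ S L E n := by
  have h1 : (∀ i, ((d • A) i).natDegree ≤ k + n) ↔ (∀ i, (A i).natDegree ≤ n) := by
    apply forall_congr'
    intro i
    simp only [Pi.smul_apply, smul_eq_mul]
    by_cases h0 : A i = 0
    · simp [h0]
    · rw [hd.natDegree_mul' h0, hk]; omega
  have h3 : ∑ i, L i * (d • A) i = d * ∑ i, L i * A i := by
    rw [Finset.mul_sum]; apply Finset.sum_congr rfl; intro i _; simp; ring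
  unfold S
  simp only [Set.mem_ofPred_eq]
  rw [h1, h3, mul_eq_zero, or_iff_right hd.ne_zero]
  apply and_congr_right
  intro h
  have : (fun i => ((d • A) i).coeff (k + n)) = (fun i => (A i).coeff n) := by
    funext i
    simp only [Pi.smul_apply, smul_eq_mul]
    rw [Polynomial.coeff_mul_add_eq_of_natDegree_le hk.le (h i), ← hk, hd.coeff_natDegree, one_mul]
  rw [this]

theorem smul_le {L : Fin 3 → F[X]} {E : Set (Fin 3 → F)} {n : ℕ} {d : F[X]}
    {A : Fin 3 → F[X]} (hd : d.Monic) (hE : (0 : Fin 3 → F) ∉ E) (h : d • A ∈ S L E n) :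
    d.natDegree ≤ n := by
  have h0 : A ≠ 0 := by
    rintro rfl
    exact S_ne_zero hE h (by simp)
  obtain ⟨i, hi⟩ := Function.ne_iff.1 h0
  have := h.1 i
  simp only [Pi.smul_apply, smul_eq_mul] at this
  rw [hd.natDegree_mul' hi] at this
  omega

theorem top_mem {L : Fin 3 → F[X]} {E : Set (Fin 3 → F)} {n : ℕ} {v : Fin 3 → F} (hv : v ∈ E)
    {a : Fin 3 → degreeLT F n}
    (ha : ∑ i, L i * (a i : F[X]) = - (X ^ n * ∑ i, L i * Polynomial.C (v i))) :
    (fun i => Polynomial.C (v i) * X ^ n + (a i : F[X])) ∈ S L E n := by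
  have hlt : ∀ i, (a i : F[X]).degree < n := fun i => mem_degreeLT.1 (a i).2
  refine ⟨fun i => ?_, ?_, ?_⟩
  · exact natDegree_add_le_of_degree_le (natDegree_C_mul_X_pow_le _ _)
      (natDegree_le_of_degree_le (hlt i).le)
  · have : (fun i => (Polynomial.C (v i) * X ^ n + (a i : F[X])).coeff n) = v := by
      funext i
      simp [coeff_eq_zero_of_degree_lt (hlt i)]
    rw [this]; exact hv
  · simp only [mul_add, Finset.sum_add_distrib]
    rw [ha, Finset.mul_sum, add_neg_eq_zero]
    apply Finset.sum_congr rfl; intro i _; ring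

/-- top-coefficient decomposition -/
noncomputable def topDecomp (L : Fin 3 → F[X]) (E : Set (Fin 3 → F)) (n : ℕ) :
    S L E n ≃ Σ v : E, {a : Fin 3 → degreeLT F n //
      ∑ i, L i * (a i : F[X]) = - (X ^ n * ∑ i, L i * Polynomial.C (v.1 i))} := by
  refine (Equiv.ofBijective (fun x => ⟨fun i => Polynomial.C (x.1.1 i) * X ^ n + (x.2.1 i : F[X]),
    top_mem x.1.2 x.2.2⟩) ⟨?_, ?_⟩).symm
  · rintro ⟨⟨v, hv⟩, ⟨a, ha⟩⟩ ⟨⟨w, hw⟩, ⟨b, hb⟩⟩ h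
    have h' : ∀ i, Polynomial.C (v i) * X ^ n + (a i : F[X]) = Polynomial.C (w i) * X ^ n + (b i : F[X]) :=
      fun i => congrFun (congrArg Subtype.val h) i
    have hvw : v = w := by
      funext i
      have := congrArg (fun p => coeff p n) (h' i)
      simpa [coeff_eq_zero_of_degree_lt (mem_degreeLT.1 (a i).2),
        coeff_eq_zero_of_degree_lt (mem_degreeLT.1 (b i).2)] using this
    subst hvw
    have hab : a = b := by
      funext i
      exact Subtype.ext (add_left_cancel (h' i))
    subst hab
    rfl
  · rintro ⟨A, h1, h2, h3⟩
    have hl : ∀ i, (A i - Polynomial.C ((A i).coeff n) * X ^ n) ∈ degreeLT F n := by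
      intro i
      rw [mem_degreeLT, degree_lt_iff_coeff_zero]
      intro k hk
      rcases hk.eq_or_lt with rfl | hk
      · simp
      · rw [coeff_sub, coeff_C_mul_X_pow, if_neg hk.ne',
          coeff_eq_zero_of_natDegree_lt ((h1 i).trans_lt hk), sub_zero]
    refine ⟨⟨⟨_, h2⟩, ⟨fun i => ⟨_, hl i⟩, ?_⟩⟩, ?_⟩
    · simp only [mul_sub, Finset.sum_sub_distrib, h3]
      rw [zero_sub, Finset.mul_sum]
      congr 1
      apply Finset.sum_congr rfl; intro i _; ring
    · apply Subtype.ext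
      funext i
      simp

section fin
variable [Fintype F]

instance (n : ℕ) : Finite (degreeLT F n) := Finite.of_equiv _ (degreeLTEquiv F n).symm.toEquiv

theorem card_degreeLT (n : ℕ) : Nat.card (degreeLT F n) = Fintype.card F ^ n := by
  rw [Nat.card_congr (degreeLTEquiv F n).toEquiv]
  simp

instance (L : Fin 3 → F[X]) (E : Set (Fin 3 → F)) (n : ℕ) : Finite (S L E n) :=
  Finite.of_equiv _ (topDecomp L E n).symm

instance (L : Fin 3 → F[X]) (E : Set (Fin 3 → F)) (n : ℕ) : Finite (C L E n) :=
  Finite.of_injective (fun x : C L E n => (⟨x.1, x.2.1⟩ : S L E n)) (by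
    intro x y h; exact Subtype.ext (congrArg (fun z : S L E n => z.1) h))

theorem card_S_zero (E : Set (Fin 3 → F)) (n : ℕ) :
    Nat.card (S 0 E n) = Nat.card E * Fintype.card F ^ (3 * n) := by
  classical
  rw [Nat.card_congr (topDecomp 0 E n), Nat.card_sigma]
  simp [card_degreeLT, Nat.card_pi, ← pow_mul, mul_comm]

noncomputable def monicEquiv (n : ℕ) : {d : F[X] // d.Monic ∧ d.natDegree = n} ≃ degreeLT F n where
  toFun d := ⟨d.1 - X ^ n, by
    rw [mem_degreeLT]
    have := degree_sub_lt_left (p := d.1) (q := X ^ n)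
      (by rw [degree_X_pow, degree_eq_natDegree d.2.1.ne_zero, d.2.2]) d.2.1.ne_zero
      (by rw [d.2.1.leadingCoeff, leadingCoeff_X_pow])
    rwa [degree_eq_natDegree d.2.1.ne_zero, d.2.2] at this⟩
  invFun a := ⟨X ^ n + a.1, monic_X_pow_add (mem_degreeLT.1 a.2), by
    have := mem_degreeLT.1 a.2
    rw [natDegree_eq_of_degree_eq_some]
    rw [degree_add_eq_left_of_degree_lt] <;> simp [this]⟩
  left_inv d := by simp
  right_inv a := by simp

theorem strip_mem {L : Fin 3 → F[X]} {E : Set (Fin 3 → F)} {n : ℕ} {k : Fin (n + 1)} {d : F[X]}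
    (hd : d.Monic ∧ d.natDegree = k) {A : Fin 3 → F[X]} (hA : A ∈ C L E (n - k)) :
    d • A ∈ S L E n := by
  have := (smul_mem_S (n := n - k) hd.1 hd.2).2 hA.1
  rwa [Nat.add_sub_cancel' (by omega)] at this

noncomputable def strip (L : Fin 3 → F[X]) (E : Set (Fin 3 → F)) (hE : (0 : Fin 3 → F) ∉ E) (n : ℕ) :
    (Σ k : Fin (n + 1), {d : F[X] // d.Monic ∧ d.natDegree = k} × C L E (n - k)) ≃ S L E n := by
  refine Equiv.ofBijective (fun x => ⟨x.2.1.1 • x.2.2.1, strip_mem x.2.1.2 x.2.2.2⟩) ⟨?_, ?_⟩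
  · rintro ⟨k, ⟨d, hd, hdk⟩, ⟨A, hA⟩⟩ ⟨k', ⟨e, he, hek⟩, ⟨B, hB⟩⟩ h
    obtain ⟨rfl, rfl⟩ := gcd_unique hd he hA.2 hB.2 (congrArg Subtype.val h)
    have : k = k' := Fin.ext (hdk.symm.trans hek)
    subst this
    rfl
  · rintro ⟨A, hA⟩
    obtain ⟨d, B, hd, hB, rfl⟩ := exists_gcd (S_ne_zero hE hA)
    have hle := smul_le hd hE hA
    refine ⟨⟨⟨d.natDegree, by omega⟩, ⟨d, hd, rfl⟩, ⟨B, ?_, hB⟩⟩, rfl⟩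
    rw [← smul_mem_S hd rfl, Nat.add_sub_cancel' hle]
    exact hA

theorem card_strip (L : Fin 3 → F[X]) (E : Set (Fin 3 → F)) (hE : (0 : Fin 3 → F) ∉ E) (n : ℕ) :
    Nat.card (S L E n) = ∑ k ∈ Finset.range (n + 1), Fintype.card F ^ k * Nat.card (C L E (n - k)) := by
  have : ∀ k, Finite {d : F[X] // d.Monic ∧ d.natDegree = k} :=
    fun k => Finite.of_equiv _ (monicEquiv k).symm
  rw [← Nat.card_congr (strip L E hE n), Nat.card_sigma, Finset.sum_range]
  apply Finset.sum_congr rfl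
  intro k _
  rw [Nat.card_prod, Nat.card_congr (monicEquiv _), card_degreeLT]

theorem card_S_zero_deg (L : Fin 3 → F[X]) (E : Set (Fin 3 → F)) (hE : (0 : Fin 3 → F) ∉ E) :
    Nat.card (S L E 0) = Nat.card (C L E 0) := by
  rw [card_strip L E hE]; simp

theorem card_S_succ (L : Fin 3 → F[X]) (E : Set (Fin 3 → F)) (hE : (0 : Fin 3 → F) ∉ E) (n : ℕ) :
    Nat.card (S L E (n + 1)) = Nat.card (C L E (n + 1)) + Fintype.card F * Nat.card (S L E n) := by
  rw [card_strip L E hE, card_strip L E hE n, Finset.sum_range_succ', Finset.mul_sum, add_comm]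
  simp [pow_succ]
  apply Finset.sum_congr rfl
  intro i _
  ring


end fin

theorem mul_mem_degreeLT {p r : F[X]} {k n : ℕ} (hp : p.natDegree ≤ k) (hr : r ∈ degreeLT F n) :
    p * r ∈ degreeLT F (n + k) := by
  rw [mem_degreeLT] at *
  by_cases h0 : p * r = 0
  · rw [h0, degree_zero]; exact WithBot.bot_lt_coe _
  · have hp0 := left_ne_zero_of_mul h0
    have hr0 := right_ne_zero_of_mul h0
    rw [degree_eq_natDegree hr0] at hr
    rw [degree_eq_natDegree h0, natDegree_mul hp0 hr0]
    norm_cast at *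
    omega

theorem surj {P : Fin 3 → F[X]} {l n : ℕ} (hP : Cop P) (hl : ∀ i, (P i).natDegree ≤ l)
    (j : Fin 3) (hj : (P j).natDegree = l) (hj0 : P j ≠ 0) (hn : l ≤ n) (R : F[X])
    (hR : R ∈ degreeLT F (n + l)) :
    ∃ a : Fin 3 → F[X], (∀ i, a i ∈ degreeLT F n) ∧ ∑ i, P i * a i = R := by
  obtain ⟨b, hb⟩ := bezout hP
  have hdeg : (P j).degree = l := by rw [degree_eq_natDegree hj0, hj]
  have hmod : ∀ B : F[X], B % P j ∈ degreeLT F l := by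
    intro B
    rw [mem_degreeLT, ← hdeg]
    exact degree_mod_lt B hj0
  let B : Fin 3 → F[X] := fun i => R * b i
  let t : F[X] := B j + ∑ i ∈ Finset.univ.erase j, P i * (B i / P j)
  have hsum : P j * t + ∑ i ∈ Finset.univ.erase j, P i * (B i % P j) = R := by
    have h1 : ∑ i, P i * B i = R := by
      calc ∑ i, P i * B i = R * ∑ i, b i * P i := by
            rw [Finset.mul_sum]; apply Finset.sum_congr rfl; intro i _; simp only [B]; ring
        _ = R := by rw [hb, mul_one]
    rw [← Finset.add_sum_erase _ _ (Finset.mem_univ j)] at h1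
    have h2 : ∑ i ∈ Finset.univ.erase j, P i * B i =
        P j * ∑ i ∈ Finset.univ.erase j, P i * (B i / P j) +
          ∑ i ∈ Finset.univ.erase j, P i * (B i % P j) := by
      rw [Finset.mul_sum, ← Finset.sum_add_distrib]
      apply Finset.sum_congr rfl
      intro i _
      have := EuclideanDomain.div_add_mod (B i) (P j)
      linear_combination (- P i) * this
    simp only [t]
    linear_combination h1 - h2
  have ht : t ∈ degreeLT F n := by
    have h1 : P j * t ∈ degreeLT F (n + l) := by
      rw [eq_sub_of_add_eq hsum]
      refine Submodule.sub_mem _ hR (Submodule.sum_mem _ fun i _ => ?_)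
      exact degreeLT_mono (by omega) (mul_mem_degreeLT (hl i) (hmod (B i)))
    rw [mem_degreeLT] at *
    by_cases h0 : t = 0
    · rw [h0, degree_zero]; exact WithBot.bot_lt_coe _
    · rw [degree_mul, hdeg, degree_eq_natDegree h0] at h1
      rw [degree_eq_natDegree h0]
      norm_cast at *
      omega
  refine ⟨fun i => if i = j then t else B i % P j, ?_, ?_⟩
  · intro i
    by_cases hi : i = j
    · simpa [hi] using ht
    · simpa [hi] using degreeLT_mono hn (hmod (B i))
  · rw [← Finset.add_sum_erase _ _ (Finset.mem_univ j), ← hsum]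
    congr 1
    · simp
    · apply Finset.sum_congr rfl
      intro i hi
      simp only [if_neg (Finset.ne_of_mem_erase hi)]

/-- The dot product with `P`. -/
noncomputable def dotMap (P : Fin 3 → F[X]) (l n : ℕ) (hl : ∀ i, (P i).natDegree ≤ l) :
    (Fin 3 → degreeLT F n) →+ degreeLT F (n + l) where
  toFun a := ⟨∑ i, P i * (a i : F[X]),
    Submodule.sum_mem _ fun i _ => mul_mem_degreeLT (hl i) (a i).2⟩
  map_zero' := by apply Subtype.ext; simp
  map_add' a b := by apply Subtype.ext; simp [mul_add, Finset.sum_add_distrib]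

def EP : Set (Fin 3 → F) := {v | v 0 = 0 ∧ v ≠ 0}
def EA : Set (Fin 3 → F) := {Pi.single 0 1}

theorem EP0 : (0 : Fin 3 → F) ∉ (EP : Set (Fin 3 → F)) := fun h => h.2 rfl
theorem EA0 : (0 : Fin 3 → F) ∉ (EA : Set (Fin 3 → F)) := by
  intro h
  have := congrFun (Set.mem_singleton_iff.1 h) 0
  simp at this

section fin
variable [Fintype F]

theorem card_fiber {V W : Type*} [AddCommGroup V] [AddCommGroup W] [Finite V] [Finite W]
    (f : V →+ W) (hf : Function.Surjective f) (w : W) :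
    Nat.card W * Nat.card {a // f a = w} = Nat.card V := by
  have := Fintype.ofFinite W
  rw [← Nat.card_congr (Equiv.sigmaFiberEquiv f), Nat.card_sigma]
  rw [Finset.sum_congr rfl (g := fun _ => Nat.card {a // f a = w})]
  · simp
  · intro y _
    exact Nat.card_congr (AddMonoidHom.fiberEquivOfSurjective hf y w)

theorem card_S_P {P : Fin 3 → F[X]} {l n : ℕ} (hP : P ∈ C 0 EP l) (hn : l ≤ n) :
    Nat.card (S P EA n) = Fintype.card F ^ (2 * n - l) := by
  obtain ⟨⟨hl, ⟨h0, hne⟩, -⟩, hcop⟩ := hP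
  obtain ⟨j, hj⟩ := Function.ne_iff.1 hne
  have hj' : (P j).coeff l ≠ 0 := hj
  have hjl : (P j).natDegree = l := le_antisymm (hl j) (le_natDegree_of_ne_zero hj')
  have hj0 : P j ≠ 0 := by rintro h; simp [h] at hj'
  have hsurj : Function.Surjective (dotMap P l n hl) := by
    rintro ⟨R, hR⟩
    obtain ⟨a, ha, hs⟩ := surj hcop hl j hjl hj0 hn R hR
    exact ⟨fun i => ⟨a i, ha i⟩, Subtype.ext hs⟩
  have hP0 : P 0 ∈ degreeLT F l := by
    rw [mem_degreeLT, degree_lt_iff_coeff_zero]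
    intro k hk
    rcases hk.eq_or_lt with rfl | hk
    · exact h0
    · exact coeff_eq_zero_of_natDegree_lt ((hl 0).trans_lt hk)
  have hw : - (X ^ n * P 0) ∈ degreeLT F (n + l) := by
    rw [add_comm]
    exact Submodule.neg_mem _ (mul_mem_degreeLT (natDegree_X_pow_le n) hP0)
  have key := card_fiber (dotMap P l n hl) hsurj ⟨_, hw⟩
  rw [card_degreeLT, Nat.card_pi] at key
  simp only [card_degreeLT, Finset.prod_const, Finset.card_univ, Fintype.card_fin] at key
  have huniq : Unique (EA : Set (Fin 3 → F)) := by unfold EA; infer_instance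
  have hcard : Nat.card (S P EA n) = Nat.card {a // dotMap P l n hl a = ⟨_, hw⟩} := by
    rw [Nat.card_congr (topDecomp P EA n), Nat.card_congr (Equiv.uniqueSigma _)]
    apply Nat.card_congr
    apply Equiv.subtypeEquivRight
    intro a
    have hd : (default : (EA : Set (Fin 3 → F))).1 = Pi.single 0 1 := (default : (EA : Set (Fin 3 → F))).2
    rw [hd, Subtype.ext_iff]
    have : ∑ i, P i * Polynomial.C ((Pi.single 0 1 : Fin 3 → F) i) = P 0 := by
      simp [Fin.sum_univ_three]
    rw [this]
    rfl
  rw [hcard]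
  have hq : 0 < Fintype.card F ^ (n + l) := pow_pos Fintype.card_pos _
  apply Nat.eq_of_mul_eq_mul_left hq
  rw [key, ← pow_mul, ← pow_add]
  congr 1
  omega

theorem card_C_P {P : Fin 3 → F[X]} {l n : ℕ} (hP : P ∈ C 0 EP l) (hn : l < n) :
    Nat.card (C P EA n) = (Fintype.card F - 1) * Fintype.card F ^ (2 * n - l - 1) := by
  obtain ⟨k, rfl⟩ : ∃ k, n = k + 1 := ⟨n - 1, by omega⟩
  have h := card_S_succ P EA EA0 k
  rw [card_S_P hP (by omega), card_S_P hP (by omega), ← pow_succ'] at h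
  rw [Nat.sub_mul, one_mul, ← pow_succ']
  have e1 : 2 * (k + 1) - l - 1 + 1 = 2 * (k + 1) - l := by omega
  have e2 : 2 * (k + 1) - l - 1 = 2 * k - l + 1 := by omega
  rw [e1, e2]
  omega

theorem card_EP : Nat.card (EP : Set (Fin 3 → F)) = Fintype.card F ^ 2 - 1 := by
  classical
  have e : (EP : Set (Fin 3 → F)) ≃ {w : Fin 2 → F // w ≠ 0} := by
    refine ⟨fun v => ⟨Fin.tail v.1, ?_⟩, fun w => ⟨Fin.cons 0 w.1, ?_, ?_⟩, ?_, ?_⟩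
    · intro h
      apply v.2.2
      rw [← Fin.cons_self_tail v.1, h, v.2.1]
      funext i
      refine Fin.cases ?_ ?_ i <;> simp
    · simp
    · intro h
      apply w.2
      rw [← Fin.tail_cons (α := fun _ => F) 0 w.1, h]
      rfl
    · rintro ⟨v, hv⟩
      apply Subtype.ext
      simp only
      rw [← hv.1, Fin.cons_self_tail]
    · rintro ⟨w, hw⟩
      simp
  rw [Nat.card_congr e, Nat.card_eq_fintype_card, Fintype.card_subtype_compl]
  simp

theorem card_C_zero : Nat.card (C 0 EP 0 : Set (Fin 3 → F[X])) = Fintype.card F ^ 2 - 1 := by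
  rw [← card_S_zero_deg _ _ EP0, card_S_zero, card_EP]; simp

theorem card_C_succ (k : ℕ) : Nat.card (C 0 EP (k + 1) : Set (Fin 3 → F[X])) =
    (Fintype.card F ^ 2 - 1) ^ 2 * Fintype.card F ^ (3 * k + 1) := by
  have h := card_S_succ (0 : Fin 3 → F[X]) EP EP0 k
  rw [card_S_zero, card_S_zero, card_EP] at h
  have : 1 ≤ Fintype.card F := Fintype.card_pos
  obtain ⟨r, hr⟩ : ∃ r, Fintype.card F ^ 2 = r + 1 :=
    ⟨_, (Nat.sub_add_cancel (Nat.one_le_pow _ _ this)).symm⟩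
  rw [hr] at h ⊢
  simp only [Nat.add_sub_cancel] at h ⊢
  have e1 : Fintype.card F ^ (3 * (k + 1)) = (r + 1) * Fintype.card F ^ (3 * k + 1) := by
    rw [← hr, ← pow_add]; congr 1; ring
  have e2 : Fintype.card F * (r * Fintype.card F ^ (3 * k)) = r * Fintype.card F ^ (3 * k + 1) := by
    ring
  rw [e1, e2] at h
  have e3 : r * ((r + 1) * Fintype.card F ^ (3 * k + 1)) =
    r ^ 2 * Fintype.card F ^ (3 * k + 1) + r * Fintype.card F ^ (3 * k + 1) := by ring
  omega

end fin

theorem sum_smul_eq (c : F) (P A : Fin 3 → F[X]) :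
    ∑ i, (Polynomial.C c • P) i * A i = Polynomial.C c * ∑ i, P i * A i := by
  rw [Finset.mul_sum]; apply Finset.sum_congr rfl; intro i _; simp; ring

theorem parallel {P Q : Fin 3 → F[X]} (hP : Cop P) (hQ : Cop Q)
    (h : ∀ i j, P i * Q j = P j * Q i) : ∃ c : Fˣ, Q = Polynomial.C (c : F) • P := by
  obtain ⟨b, hb⟩ := bezout hP
  have h1 : ∀ i, Q i = (∑ j, b j * Q j) * P i := by
    intro i
    calc Q i = (∑ j, b j * P j) * Q i := by rw [hb, one_mul]
      _ = _ := by
        rw [Finset.sum_mul, Finset.sum_mul]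
        apply Finset.sum_congr rfl
        intro j _
        linear_combination b j * h j i
  have hu : IsUnit (∑ j, b j * Q j) := hQ _ fun i => ⟨_, h1 i⟩
  obtain ⟨c, hc, hc'⟩ := Polynomial.isUnit_iff.1 hu
  refine ⟨hc.unit, ?_⟩
  funext i
  rw [h1 i, ← hc']
  simp

theorem unique_P {A P Q : Fin 3 → F[X]} {m l : ℕ} (hml : 2 * l < m) (hP : P ∈ C 0 EP l)
    (hQ : Q ∈ C 0 EP l) (hAP : A ∈ C P EA m) (hAQ : A ∈ C Q EA m) :
    ∃ c : Fˣ, Q = Polynomial.C (c : F) • P := by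
  apply parallel hP.2 hQ.2
  have hA1 : (A 0).coeff m = 1 := by
    have := congrFun (Set.mem_singleton_iff.1 hAP.1.2.1) 0
    simpa using this
  have hA0 : A 0 ≠ 0 := by rintro h; simp [h] at hA1
  have hAm : m ≤ (A 0).natDegree := le_natDegree_of_ne_zero (by simp [hA1])
  have sP := hAP.1.2.2
  have sQ := hAQ.1.2.2
  rw [Fin.sum_univ_three] at sP sQ
  obtain ⟨b, hb⟩ := bezout hAP.2
  rw [Fin.sum_univ_three] at hb
  -- A 0 * C_j = A j * C_0
  have h1 : A 0 * (P 2 * Q 0 - P 0 * Q 2) = A 1 * (P 1 * Q 2 - P 2 * Q 1) := by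
    linear_combination Q 2 * sP * (-1) + P 2 * sQ
  have h2 : A 0 * (P 0 * Q 1 - P 1 * Q 0) = A 2 * (P 1 * Q 2 - P 2 * Q 1) := by
    linear_combination Q 1 * sP - P 1 * sQ
  have hdvd : A 0 ∣ P 1 * Q 2 - P 2 * Q 1 := by
    refine ⟨b 0 * (P 1 * Q 2 - P 2 * Q 1) + b 1 * (P 2 * Q 0 - P 0 * Q 2)
      + b 2 * (P 0 * Q 1 - P 1 * Q 0), ?_⟩
    linear_combination (-(P 1 * Q 2 - P 2 * Q 1)) * hb - b 1 * h1 - b 2 * h2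
  have hz : P 1 * Q 2 - P 2 * Q 1 = 0 := by
    apply eq_zero_of_dvd_of_natDegree_lt hdvd
    have hlp := hP.1.1
    have hlq := hQ.1.1
    refine lt_of_le_of_lt ?_ (hml.trans_le hAm)
    refine (natDegree_sub_le_of_le (m := 2 * l) (n := 2 * l) ?_ ?_).trans (max_self _).le
    · exact natDegree_mul_le.trans (by have := hlp 1; have := hlq 2; omega)
    · exact natDegree_mul_le.trans (by have := hlp 2; have := hlq 1; omega)
  rw [hz, mul_zero, mul_eq_zero, or_iff_right hA0] at h1 h2
  intro i j
  fin_cases i <;> fin_cases j <;> simp only [Fin.zero_eta, Fin.mk_one, Fin.reduceFinMk]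
  · linear_combination h2
  · linear_combination -h1
  · linear_combination -h2
  · linear_combination hz
  · linear_combination h1
  · linear_combination -hz

theorem smul_memC {A P : Fin 3 → F[X]} {m l : ℕ} (c : Fˣ) (hP : P ∈ C 0 EP l)
    (hA : A ∈ C P EA m) :
    Polynomial.C (c : F) • P ∈ C 0 EP l ∧ A ∈ C (Polynomial.C (c : F) • P) EA m := by
  refine ⟨⟨⟨fun i => ?_, ⟨?_, ?_⟩, ?_⟩, ?_⟩, ⟨hA.1.1, hA.1.2.1, ?_⟩, hA.2⟩
  · exact (natDegree_C_mul_le _ _).trans (hP.1.1 i)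
  · have := hP.1.2.1.1
    simpa using this
  · intro h
    apply hP.1.2.1.2
    funext i
    have := congrFun h i
    simpa using this
  · simp
  · intro d hd
    apply hP.2 d
    intro i
    have := hd i
    have hu : IsUnit (Polynomial.C (c : F)) := Polynomial.isUnit_C.2 c.isUnit
    simpa [hu.dvd_mul_left] using this
  · rw [sum_smul_eq, hA.1.2.2, mul_zero]

theorem coords (A P : Fin 3 → F[X]) (m l : ℕ) :
    (Cop A ∧ (A 0).Monic ∧ (A 0).natDegree = m ∧
      (A 1).degree < (m : WithBot ℕ) ∧ (A 2).degree < (m : WithBot ℕ) ∧ Cop P ∧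
        (Finset.univ.sup fun i => (P i).degree) = (l : WithBot ℕ) ∧
        ∑ i, P i * A i = 0) ↔ P ∈ C 0 EP l ∧ A ∈ C P EA m := by
  constructor
  · rintro ⟨hA, hmon, hdeg, h1, h2, hP, hsup, hs⟩
    have hc0 : (A 0).coeff m = 1 := by rw [← hdeg]; exact hmon
    have hc1 := coeff_eq_zero_of_degree_lt h1
    have hc2 := coeff_eq_zero_of_degree_lt h2
    have hPl : ∀ i, (P i).natDegree ≤ l := by
      intro i
      apply natDegree_le_of_degree_le
      rw [← hsup]
      exact Finset.le_sup (f := fun i => (P i).degree) (Finset.mem_univ i)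
    have hAl : ∀ i, (A i).natDegree ≤ m := by
      intro i
      fin_cases i
      · exact hdeg.le
      · exact natDegree_le_of_degree_le h1.le
      · exact natDegree_le_of_degree_le h2.le
    refine ⟨⟨⟨hPl, ⟨?_, ?_⟩, by simp⟩, hP⟩, ⟨hAl, ?_, hs⟩, hA⟩
    · have := congrArg (fun p => coeff p (l + m)) hs
      simp only [Fin.sum_univ_three, coeff_add, coeff_zero,
        coeff_mul_add_eq_of_natDegree_le (hPl _) (hAl _)] at this
      simpa [hc0, hc1, hc2] using this
    · intro h
      obtain ⟨i, -, hi⟩ := Finset.exists_mem_eq_sup Finset.univ ⟨0, Finset.mem_univ _⟩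
        (fun i => (P i).degree)
      rw [hsup] at hi
      have h3 : (P i).coeff l = 0 := congrFun h i
      exact coeff_ne_zero_of_eq_degree hi.symm h3
    · apply Set.mem_singleton_iff.2
      funext i
      fin_cases i
      · simpa using hc0
      · simpa using hc1
      · simpa using hc2
  · rintro ⟨⟨⟨hPl, ⟨h0, hne⟩, -⟩, hP⟩, ⟨hAl, hc, hs⟩, hA⟩
    have hc := Set.mem_singleton_iff.1 hc
    have hc0 : (A 0).coeff m = 1 := by simpa using congrFun hc 0
    have hlt : ∀ i, i ≠ 0 → (A i).degree < (m : WithBot ℕ) := by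
      intro i hi
      rw [degree_lt_iff_coeff_zero]
      intro k hk
      rcases hk.eq_or_lt with rfl | hk
      · have := congrFun hc i
        simpa [hi] using this
      · exact coeff_eq_zero_of_natDegree_lt ((hAl i).trans_lt hk)
    have hd : (A 0).natDegree = m :=
      le_antisymm (hAl 0) (le_natDegree_of_ne_zero (by simp [hc0]))
    refine ⟨hA, ?_, hd, hlt 1 (by simp), hlt 2 (by simp), hP, ?_, hs⟩
    · unfold Monic leadingCoeff
      rw [hd, hc0]
    · apply le_antisymm
      · apply Finset.sup_le
        intro i _
        exact degree_le_of_natDegree_le (hPl i)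
      · obtain ⟨j, hj⟩ := Function.ne_iff.1 hne
        exact (le_degree_of_ne_zero hj).trans
          (Finset.le_sup (f := fun i => (P i).degree) (Finset.mem_univ j))

theorem main_count [Fintype F] (m l : ℕ) (hml : 2 * l < m) :
    Nat.card {A : Fin 3 → F[X] // ∃ P, P ∈ C 0 EP l ∧ A ∈ C P EA m} =
      Nat.card (C 0 EP l : Set (Fin 3 → F[X])) * Fintype.card F ^ (2 * m - l - 1) := by
  classical
  let T := {A : Fin 3 → F[X] // ∃ P, P ∈ C 0 EP l ∧ A ∈ C P EA m}
  let g : T → (Fin 3 → F[X]) := fun A => A.2.choose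
  have hg : ∀ A : T, g A ∈ C 0 EP l ∧ A.1 ∈ C (g A) EA m := fun A => A.2.choose_spec
  have hbij : Function.Bijective (fun x : T × Fˣ =>
      (⟨⟨Polynomial.C (x.2 : F) • g x.1, (smul_memC x.2 (hg x.1).1 (hg x.1).2).1⟩,
        ⟨x.1.1, (smul_memC x.2 (hg x.1).1 (hg x.1).2).2⟩⟩ :
        Σ P : (C 0 EP l : Set (Fin 3 → F[X])), (C P.1 EA m : Set (Fin 3 → F[X])))) := by
    constructor
    · rintro ⟨A, c⟩ ⟨B, d⟩ h
      have hA : ∀ {x y : Σ P : (C 0 EP l : Set (Fin 3 → F[X])), (C P.1 EA m : Set (Fin 3 → F[X]))},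
          x = y → x.1.1 = y.1.1 ∧ x.2.1 = y.2.1 := by rintro x y rfl; exact ⟨rfl, rfl⟩
      obtain ⟨h1, h2⟩ := hA h
      have hAB : A = B := Subtype.ext h2
      subst hAB
      congr 1
      obtain ⟨i, hi⟩ := Function.ne_iff.1 (S_ne_zero EP0 (hg A).1.1)
      have := congrFun h1 i
      simp only [Pi.smul_apply, smul_eq_mul] at this
      exact Units.ext (C_injective (mul_right_cancel₀ hi this))
    · rintro ⟨⟨P, hP⟩, ⟨A, hA⟩⟩
      obtain ⟨A', rfl⟩ : ∃ A' : T, A'.1 = A := ⟨⟨A, P, hP, hA⟩, rfl⟩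
      obtain ⟨c, rfl⟩ := unique_P hml (hg A').1 hP (hg A').2 hA
      exact ⟨(A', c), rfl⟩
  have h := Nat.card_congr (Equiv.ofBijective _ hbij)
  have := Fintype.ofFinite (C 0 EP l : Set (Fin 3 → F[X]))
  rw [Nat.card_prod, Nat.card_sigma,
    Finset.sum_congr rfl (fun P _ => card_C_P P.2 (show l < m by omega))] at h
  rw [Nat.card_units, Finset.sum_const, Finset.card_univ, ← Nat.card_eq_fintype_card,
    Nat.card_eq_fintype_card (α := F), smul_eq_mul] at h
  have hq : 0 < Fintype.card F - 1 := by
    have := Fintype.one_lt_card (α := F)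
    omega
  apply Nat.eq_of_mul_eq_mul_right hq
  rw [h]
  ring

end N2



open Polynomial

/-- `N₂(m,l)` for `m > 2l ≥ 0`: the number of coprime triples `(A₁, A₂, A₃)` with `A₁` monic
of degree `m`, `deg A₂ < m`, `deg A₃ < m`, such that `x₁A₁ + x₂A₂ + x₃A₃ = 0` has a solution
of height `l`, equals `(q²-1)²q^{2(m+l)-3}` if `l > 0` and `(q²-1)q^{2m-1}` if `l = 0`. -/
theorem card_N2 {F : Type*} [Field F] [Fintype F] (q m l : ℕ)
    (hq : Fintype.card F = q) (hml : 2 * l < m) :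
    Nat.card {A : Fin 3 → Polynomial F //
      (∀ d : Polynomial F, (∀ i, d ∣ A i) → IsUnit d) ∧
      (A 0).Monic ∧ (A 0).natDegree = m ∧
      (A 1).degree < (m : WithBot ℕ) ∧ (A 2).degree < (m : WithBot ℕ) ∧
      ∃ P : Fin 3 → Polynomial F,
        (∀ d : Polynomial F, (∀ i, d ∣ P i) → IsUnit d) ∧
        (Finset.univ.sup fun i => (P i).degree) = (l : WithBot ℕ) ∧
        ∑ i, P i * A i = 0} =
      if l = 0 then (q ^ 2 - 1) * q ^ (2 * m - 1)
      else (q ^ 2 - 1) ^ 2 * q ^ (2 * (m + l) - 3) := by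
  
  subst hq
  have h1 := N2.main_count (F := F) m l hml
  have h2 : ∀ A : Fin 3 → F[X], ((∀ d : Polynomial F, (∀ i, d ∣ A i) → IsUnit d) ∧
      (A 0).Monic ∧ (A 0).natDegree = m ∧
      (A 1).degree < (m : WithBot ℕ) ∧ (A 2).degree < (m : WithBot ℕ) ∧
      ∃ P : Fin 3 → Polynomial F,
        (∀ d : Polynomial F, (∀ i, d ∣ P i) → IsUnit d) ∧
        (Finset.univ.sup fun i => (P i).degree) = (l : WithBot ℕ) ∧
        ∑ i, P i * A i = 0) ↔ ∃ P, P ∈ N2.C 0 N2.EP l ∧ A ∈ N2.C P N2.EA m := by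
    intro A
    simp only [← N2.coords, exists_and_left, N2.Cop]
  rw [Nat.card_congr (Equiv.subtypeEquivRight h2), h1]
  split_ifs with hl
  · subst hl
    rw [N2.card_C_zero]
    simp
  · obtain ⟨k, rfl⟩ : ∃ k, l = k + 1 := ⟨l - 1, by omega⟩
    rw [N2.card_C_succ, mul_assoc, ← pow_add]
    congr 2
    omega
end
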